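/- arXiv:2106.14044 — 2 statements merged into one kernel-verified Lean document; each statement's English description precedes it below -/
import Mathlib

section
/- Let M = p_i^{n_i} p_j^{n_j} p_k^{n_k} with p_i, p_j, p_k distinct primes and n_j, n_k ≥ 2. Assume A ⊕ B = ℤ_M, |A| = p_i p_j p_k, Φ_M | A, and that A ∩ Λ contains a p_i extended corner for some D(M)-grid Λ. Then Φ_{M/p_j} and Φ_{M/p_k} do not both divide A. -/
open Polynomial

/-- The mask polynomial `A(X) = Σ_{a ∈ A} X^a` of a finite subset of `ZMod M`,
using the representatives in `{0, …, M-1}`. -/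
noncomputable def maskPoly (M : ℕ) (A : Finset (ZMod M)) : Polynomial ℤ :=
  ∑ a ∈ A, X ^ a.val

/-- `Φ_s | A` : the `s`-th cyclotomic polynomial divides the mask polynomial of `A` in `ℤ[X]`. -/
def cycDvd (M s : ℕ) (A : Finset (ZMod M)) : Prop :=
  cyclotomic s ℤ ∣ maskPoly M A

/-- `A ⊕ B = ℤ_M` : every element of `ℤ_M` has a unique representation `a + b`
with `a ∈ A` and `b ∈ B`. -/
def IsTiling (M : ℕ) (A B : Set (ZMod M)) : Prop :=
  ∀ z : ZMod M, ∃! ab : ZMod M × ZMod M, ab.1 ∈ A ∧ ab.2 ∈ B ∧ ab.1 + ab.2 = z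

/-- The Coven–Meyerowitz property (T2): whenever `s_1, …, s_m` are prime powers dividing `M`,
powers of pairwise distinct primes, with `Φ_{s_t} | A` for each `t`, then `Φ_{s_1 ⋯ s_m} | A`. -/
def SatisfiesT2 (M : ℕ) (A : Finset (ZMod M)) : Prop :=
  ∀ (P : Finset ℕ) (e : ℕ → ℕ), P.Nonempty →
    (∀ p ∈ P, p.Prime ∧ 1 ≤ e p ∧ p ^ e p ∣ M ∧ cycDvd M (p ^ e p) A) →
    cycDvd M (∏ p ∈ P, p ^ e p) A

/-- The `D`-grid through `x` in `ZMod M` : `Λ(x, D) = {y : D ∣ y - x}`. -/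
def gridSet (M : ℕ) (x : ZMod M) (D : ℕ) : Set (ZMod M) :=
  {y : ZMod M | (D : ZMod M) ∣ (y - x)}

/-- `S` is fibered in the `p` direction on scale `M`: every element of `S` has its whole
fiber `Λ(s, M/p)` contained in `S`. -/
def Fibered (M p : ℕ) (S : Set (ZMod M)) : Prop :=
  ∀ s ∈ S, gridSet M s (M / p) ⊆ S

/-- `Div_N(S)` : the set of values `(s - s', N) = gcd(s - s', N)` for `s, s' ∈ S`. -/
def DivSet (M N : ℕ) (S : Set (ZMod M)) : Set ℕ :=
  {m : ℕ | ∃ s ∈ S, ∃ s' ∈ S, Nat.gcd (s - s').val N = m}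

/-- `A ∩ Λ` contains a `p` extended corner (other two directions `q`, `r`). -/
def ExtCorner (M p q r : ℕ) (A Lam : Set (ZMod M)) : Prop :=
  ∃ a ∈ A ∩ Lam, ∃ a' ∈ A ∩ Lam,
    Nat.gcd (a - a').val M = M / p ∧
    Fibered M q (A ∩ gridSet M a (M / (q * r))) ∧
    ¬ Fibered M r (A ∩ gridSet M a (M / (q * r))) ∧
    Fibered M r (A ∩ gridSet M a' (M / (q * r))) ∧
    ¬ Fibered M q (A ∩ gridSet M a' (M / (q * r)))

/-!
A tiling with `|A| = p_i p_j p_k` has `Φ_{p_i^m} ∣ A` for some `1 ≤ m ≤ n_i`, since otherwise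
`p_i` would divide `|A||B|` too often. Hence `A` is equidistributed over the classes modulo `p_i^m`
in each class modulo `p_i^{m-1}`, and every class modulo `p_i^{n_i}` contains at most `p_j p_k`
elements of `A`.

Let `a`, `a'` be the points of the extended corner and `Π`, `Π'` their grids at level
`M / (p_j p_k)`. The divisibility `Φ_{M/p_j} ∣ A` says that `x ↦ |A ∩ Λ(x, M/p_j)|` is annihilated
by products of difference operators with steps divisible by `M / p_i`, `M / p_j^2` and `M / p_k`.
As `A` is a union of fibers in the `p_j` direction on `Π` and in the `p_k` direction on `Π'`, this
relation forces the translates of `Π` and `Π'` by multiples of `M / p_j^2` to contain many elements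
of `A`; symmetrically for `Φ_{M/p_k}` and `M / p_k^2`. The translates of `Π` lie in one class modulo
`p_i^{n_i}`, and so do those of `Π'`; if both divisibilities held, the bound `p_j p_k` on these two
classes would give `p_k ≤ p_j` and `p_j ≤ p_k`.
-/

open Finset
open scoped fwdDiff

section Grids

variable {M : ℕ}

lemma natCast_dvd_intCast_iff {N : ℕ} (hN : N ∣ M) (z : ℤ) :
    (N : ZMod M) ∣ (z : ZMod M) ↔ (N : ℤ) ∣ z := by
  refine ⟨fun h ↦ ?_, fun h ↦ by simpa using map_dvd (Int.castRingHom (ZMod M)) h⟩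
  have := map_dvd (ZMod.castHom hN (ZMod N)) h
  rwa [map_natCast, map_intCast, ZMod.natCast_self, zero_dvd_iff,
    ZMod.intCast_zmod_eq_zero_iff_dvd] at this

lemma natCast_dvd_iff_dvd_val [NeZero M] {N : ℕ} (hN : N ∣ M) (x : ZMod M) :
    (N : ZMod M) ∣ x ↔ N ∣ x.val := by
  rw [← Int.natCast_dvd_natCast, ← natCast_dvd_intCast_iff hN, Int.cast_natCast,
    ZMod.natCast_zmod_val]

lemma gridSet_eq_of_mem {N : ℕ} {x y : ZMod M} (h : y ∈ gridSet M x N) :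
    gridSet M y N = gridSet M x N := by
  ext z
  change _ ∣ z - y ↔ _ ∣ z - x
  rw [← sub_add_sub_cancel z y x, dvd_add_left h]

lemma gridSet_anti {N N' : ℕ} (h : N ∣ N') (x : ZMod M) : gridSet M x N' ⊆ gridSet M x N :=
  fun _ hy ↦ (Nat.cast_dvd_cast h).trans hy

lemma add_mul_mem_gridSet {N N' : ℕ} (h : N ∣ N') (x t : ZMod M) :
    x + t * (N' : ZMod M) ∈ gridSet M x N :=
  gridSet_anti h x ⟨t, by ring⟩

open Classical in
/-- The number of elements of `A` on the grid `Λ(x, N)`. -/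
noncomputable def gridCount (A : Finset (ZMod M)) (N : ℕ) (x : ZMod M) : ℕ :=
  #{a ∈ A | a ∈ gridSet M x N}

lemma gridCount_le_card (A : Finset (ZMod M)) (N : ℕ) (x : ZMod M) : gridCount A N x ≤ #A := by
  classical exact card_filter_le _ _

lemma gridCount_pos {A : Finset (ZMod M)} {a : ZMod M} (ha : a ∈ A) (N : ℕ) :
    0 < gridCount A N a := by
  classical exact card_pos.2 ⟨a, mem_filter.2 ⟨ha, by simp [gridSet]⟩⟩

lemma gridCount_anti {N N' : ℕ} (h : N ∣ N') (A : Finset (ZMod M)) (x : ZMod M) :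
    gridCount A N' x ≤ gridCount A N x := by
  classical exact card_le_card <| monotone_filter_right A fun _ _ ha ↦ gridSet_anti h x ha

lemma gridCount_congr {N : ℕ} {x y : ZMod M} (h : y ∈ gridSet M x N) (A : Finset (ZMod M)) :
    gridCount A N y = gridCount A N x := by
  unfold gridCount
  rw [gridSet_eq_of_mem h]

lemma gridCount_self [DecidableEq (ZMod M)] (A : Finset (ZMod M)) (x : ZMod M) :
    gridCount A M x = if x ∈ A then 1 else 0 := by
  simp only [gridCount, gridSet, ZMod.natCast_self, zero_dvd_iff, sub_eq_zero, Set.mem_ofPred_eq,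
    filter_eq']
  split_ifs <;> simp

lemma existsUnique_lt_and_dvd_sub_mul {p q : ℕ} (hp : p ≠ 0) (hq : q.Coprime p) (c : ℤ) :
    ∃! t : ℕ, t < p ∧ (p : ℤ) ∣ c - t * q := by
  have : NeZero p := ⟨hp⟩
  have hdvd (t : ℕ) : (p : ℤ) ∣ c - t * q ↔ (t : ZMod p) = c * (q : ZMod p)⁻¹ := by
    have hunit : (q : ZMod p) * (q : ZMod p)⁻¹ = 1 := ZMod.coe_mul_inv_eq_one q hq
    rw [← ZMod.intCast_zmod_eq_zero_iff_dvd]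
    push_cast
    refine ⟨fun h ↦ ?_, fun h ↦ ?_⟩
    · linear_combination -(q : ZMod p)⁻¹ * h - (t : ZMod p) * hunit
    · linear_combination -(q : ZMod p) * h - (c : ZMod p) * hunit
  refine ⟨((c : ZMod p) * (q : ZMod p)⁻¹).val,
    ⟨ZMod.val_lt _, (hdvd _).2 (ZMod.natCast_zmod_val _)⟩, fun t ⟨ht, htc⟩ ↦ ?_⟩
  rw [← (hdvd t).1 htc, ZMod.val_cast_of_lt ht]

/-- As `q` is a unit modulo `p`, the points `x + tNq` represent the `p` classes modulo `Np` into
which `Λ(x, N)` splits. -/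
lemma existsUnique_lt_and_mem_gridSet {N p q : ℕ} (hNp : N * p ∣ M) (hN : N ≠ 0) (hp : p ≠ 0)
    (hq : q.Coprime p) {a x : ZMod M} (ha : a ∈ gridSet M x N) :
    ∃! t : ℕ, t < p ∧ a ∈ gridSet M (x + (t : ZMod M) * ((N * q : ℕ) : ZMod M)) (N * p) := by
  obtain ⟨y, hy⟩ := ha
  obtain ⟨c, rfl⟩ := ZMod.intCast_surjective y
  convert existsUnique_lt_and_dvd_sub_mul hp hq c using 4 with t
  have hdiff : a - (x + (t : ZMod M) * ((N * q : ℕ) : ZMod M)) =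
      ((N * (c - t * q) : ℤ) : ZMod M) := by
    push_cast
    linear_combination hy
  rw [gridSet, Set.mem_ofPred_eq, hdiff, natCast_dvd_intCast_iff hNp, Nat.cast_mul,
    mul_dvd_mul_iff_left (Int.natCast_ne_zero.2 hN)]

lemma gridCount_eq_sum [NeZero M] {N p q : ℕ} (hNp : N * p ∣ M) (hq : q.Coprime p)
    (A : Finset (ZMod M)) (x : ZMod M) :
    gridCount A N x =
      ∑ t ∈ range p, gridCount A (N * p) (x + (t : ZMod M) * ((N * q : ℕ) : ZMod M)) := by
  classical
  have hNp0 : N * p ≠ 0 := ne_zero_of_dvd_ne_zero (NeZero.ne M) hNp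
  simp only [gridCount, card_filter]
  rw [sum_comm]
  refine sum_congr rfl fun a _ ↦ ?_
  split_ifs with ha
  · obtain ⟨t, ⟨htp, ht⟩, hunique⟩ := existsUnique_lt_and_mem_gridSet hNp
      (left_ne_zero_of_mul hNp0) (right_ne_zero_of_mul hNp0) hq ha
    rw [sum_eq_single_of_mem t (mem_range.2 htp)
      fun s hs hst ↦ if_neg fun h ↦ hst (hunique s ⟨mem_range.1 hs, h⟩), if_pos ht]
  · refine (sum_eq_zero fun t _ ↦ if_neg fun ht ↦ ha ?_).symm
    exact gridSet_eq_of_mem (add_mul_mem_gridSet (dvd_mul_right N q) x _) ▸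
      gridSet_anti (dvd_mul_right N p) _ ht

end Grids

section Cuboids

open fwdDiff_aux

variable {M : ℕ}

lemma isRelPrime_cyclotomic {m n : ℕ} (hm : 0 < m) (hn : 0 < n) (h : m ≠ n) :
    IsRelPrime (cyclotomic m ℤ) (cyclotomic n ℤ) := by
  rw [(cyclotomic.irreducible hm).isRelPrime_iff_not_dvd]
  intro hdvd
  have hassoc := (cyclotomic.irreducible hm).associated_of_dvd (cyclotomic.irreducible hn) hdvd
  exact h (cyclotomic_injective
    (eq_of_monic_of_associated (cyclotomic.monic m ℤ) (cyclotomic.monic n ℤ) hassoc))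

lemma X_pow_sub_one_dvd_of_forall_cyclotomic_dvd {n : ℕ} (hn : 0 < n) {f : ℤ[X]}
    (h : ∀ s ∈ n.divisors, cyclotomic s ℤ ∣ f) : X ^ n - 1 ∣ f := by
  rw [← prod_cyclotomic_eq_X_pow_sub_one hn]
  exact prod_dvd_of_isRelPrime (fun s hs t ht hst ↦
    isRelPrime_cyclotomic (Nat.pos_of_mem_divisors hs) (Nat.pos_of_mem_divisors ht) hst) h

lemma cyclotomic_dvd_X_pow_sub_one {s m : ℕ} (h : s ∣ m) : cyclotomic s ℤ ∣ X ^ m - 1 := by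
  obtain ⟨t, rfl⟩ := h
  rw [pow_mul]
  exact (cyclotomic.dvd_X_pow_sub_one s ℤ).trans (sub_one_dvd_pow_sub_one _ t)

/-- The polynomial `X` acts on functions by the unit shift; under this action `A(X)` sends the
indicator of the subgroup `Nℤ_M` to the counting function of the grids `Λ(x, N)`. -/
lemma aeval_shift_maskPoly [NeZero M] (A : Finset (ZMod M)) (N : ℕ) :
    aeval (shiftₗ (ZMod M) ℤ (-1)) (maskPoly M A)
      ((gridSet M 0 N).indicator 1) = fun x ↦ (gridCount A N x : ℤ) := by
  ext x
  simp [maskPoly, Set.indicator_apply, shiftₗ_pow_apply, gridCount, gridSet, ← sub_eq_add_neg,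
    dvd_sub_comm]

lemma aeval_shift_X_pow_sub_one (N : ℕ) :
    aeval (shiftₗ (ZMod M) ℤ (-1)) (X ^ N - 1 : ℤ[X])
      ((gridSet M 0 N).indicator 1) = 0 := by
  classical
  ext x
  simp [gridSet, Set.indicator_apply, shiftₗ_pow_apply, ← sub_eq_add_neg]

lemma fwdDiff_eq_aeval_shift [NeZero M] (d : ZMod M) (f : ZMod M → ℤ) :
    Δ_[d] f = aeval (shiftₗ (ZMod M) ℤ (-1)) (X ^ (-d).val - 1 : ℤ[X]) f := by
  ext x
  simp [fwdDiff, shiftₗ_pow_apply]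

lemma foldr_fwdDiff_eq_aeval_shift [NeZero M] (ds : List (ZMod M)) (f : ZMod M → ℤ) :
    ds.foldr (fun d g ↦ Δ_[d] g) f = aeval (shiftₗ (ZMod M) ℤ (-1))
      (ds.map fun d ↦ (X ^ (-d).val - 1 : ℤ[X])).prod f := by
  induction ds with
  | nil => simp
  | cons d ds ih =>
    rw [List.foldr_cons, ih, fwdDiff_eq_aeval_shift, List.map_cons, List.prod_cons, map_mul,
      Module.End.mul_apply]

lemma exists_prime_dvd_and_dvd_div {s N : ℕ} (hN : N ≠ 0) (h : s ∣ N) (hne : s ≠ N) :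
    ∃ q : ℕ, q.Prime ∧ q ∣ N ∧ s ∣ N / q := by
  obtain ⟨t, rfl⟩ := h
  obtain ⟨q, hq, k, rfl⟩ := Nat.exists_prime_and_dvd (n := t) (by rintro rfl; simp at hne)
  refine ⟨q, hq, ⟨s * k, by ring⟩, k, ?_⟩
  rw [mul_left_comm, Nat.mul_div_cancel_left _ hq.pos]

theorem cycDvd.foldr_fwdDiff_gridCount_eq_zero [NeZero M] {N : ℕ} {A : Finset (ZMod M)}
    (hA : cycDvd M N A) (hN : N ∣ M) {ds : List (ZMod M)}
    (hds : ∀ q : ℕ, q.Prime → q ∣ N → ∃ d ∈ ds, ((N / q : ℕ) : ZMod M) ∣ d) :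
    ds.foldr (fun d g ↦ Δ_[d] g) (fun x ↦ (gridCount A N x : ℤ)) = 0 := by
  have hN0 : N ≠ 0 := ne_zero_of_dvd_ne_zero (NeZero.ne M) hN
  set P : ℤ[X] := (ds.map fun d ↦ (X ^ (-d).val - 1 : ℤ[X])).prod
  have hdvd : X ^ N - 1 ∣ P * maskPoly M A := by
    refine X_pow_sub_one_dvd_of_forall_cyclotomic_dvd hN0.pos fun s hs ↦ ?_
    obtain rfl | hsN := eq_or_ne s N
    · exact hA.mul_left P
    obtain ⟨q, hq, hqN, hsq⟩ := exists_prime_dvd_and_dvd_div hN0 (Nat.dvd_of_mem_divisors hs) hsN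
    obtain ⟨d, hd, hqd⟩ := hds q hq hqN
    have hsd : s ∣ (-d).val := hsq.trans <|
      (natCast_dvd_iff_dvd_val ((Nat.div_dvd_of_dvd hqN).trans hN) _).1 hqd.neg_right
    have hdP : X ^ (-d).val - 1 ∣ P := List.dvd_prod (List.mem_map.2 ⟨d, hd, rfl⟩)
    exact ((cyclotomic_dvd_X_pow_sub_one hsd).trans hdP).mul_right _
  obtain ⟨Q, hQ⟩ := hdvd
  rw [foldr_fwdDiff_eq_aeval_shift, ← aeval_shift_maskPoly, ← Module.End.mul_apply, ← map_mul, hQ,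
    mul_comm, map_mul, Module.End.mul_apply, aeval_shift_X_pow_sub_one, map_zero]

lemma cycDvd.mul_gridCount_prime_pow_le_card [NeZero M] {p k : ℕ} {A : Finset (ZMod M)}
    (hA : cycDvd M (p ^ (k + 1)) A) (hp : p.Prime) (hM : p ^ (k + 1) ∣ M) (x : ZMod M) :
    p * gridCount A (p ^ (k + 1)) x ≤ #A := by
  have hconst (t : ℕ) : gridCount A (p ^ (k + 1)) (x + (t : ZMod M) * ((p ^ k * 1 : ℕ) : ZMod M)) =
      gridCount A (p ^ (k + 1)) x := by
    have h := congrFun (hA.foldr_fwdDiff_gridCount_eq_zero hM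
      (ds := [(t : ZMod M) * ((p ^ k * 1 : ℕ) : ZMod M)])
      fun q hq hqN ↦ ⟨_, List.mem_singleton_self _, ?_⟩) x
    · simpa [fwdDiff, sub_eq_zero] using h
    · obtain rfl := (Nat.prime_dvd_prime_iff_eq hq hp).1 (hq.dvd_of_dvd_pow hqN)
      rw [pow_succ, Nat.mul_div_cancel _ hp.pos, mul_one]
      exact dvd_mul_left _ _
  calc p * gridCount A (p ^ (k + 1)) x
      = ∑ t ∈ range p,
          gridCount A (p ^ (k + 1)) (x + (t : ZMod M) * ((p ^ k * 1 : ℕ) : ZMod M)) := by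
        rw [sum_congr rfl fun t _ ↦ hconst t, sum_const, card_range, smul_eq_mul]
    _ = gridCount A (p ^ k) x :=
        (gridCount_eq_sum (pow_succ p k ▸ hM) (Nat.coprime_one_left p) A x).symm
    _ ≤ #A := gridCount_le_card A _ x

end Cuboids

section Tilings

variable {M : ℕ} {A B : Finset (ZMod M)}

lemma cycDvd_of_aeval_eq_zero {s : ℕ} (hs : 0 < s) {ζ : ℂ} (hζ : IsPrimitiveRoot ζ s)
    (h : aeval ζ (maskPoly M A) = 0) : cycDvd M s A := by
  rw [cycDvd, cyclotomic_eq_minpoly hζ hs]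
  exact minpoly.isIntegrallyClosed_dvd (hζ.isIntegral hs) h

lemma prime_pow_dvd_card_of_forall_cycDvd {p n : ℕ} (hp : p.Prime)
    (h : ∀ k < n, cycDvd M (p ^ (k + 1)) A) : p ^ n ∣ #A := by
  have : Fact p.Prime := ⟨hp⟩
  have hdvd : ∏ k ∈ range n, cyclotomic (p ^ (k + 1)) ℤ ∣ maskPoly M A := by
    refine prod_dvd_of_isRelPrime (fun k _ l _ hkl ↦ ?_) fun k hk ↦ h k (mem_range.1 hk)
    refine isRelPrime_cyclotomic (pow_pos hp.pos _) (pow_pos hp.pos _) fun heq ↦ hkl ?_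
    exact Nat.succ_injective (Nat.pow_right_injective hp.two_le heq)
  have heval := eval_dvd (x := 1) hdvd
  simp only [eval_prod, eval_one_cyclotomic_prime_pow, prod_const, card_range, maskPoly,
    eval_finsetSum, eval_pow, eval_X, one_pow, sum_const, nsmul_eq_mul, mul_one] at heval
  exact_mod_cast heval

variable [NeZero M]

lemma IsTiling.sum_sum_eq {R : Type*} [AddCommMonoid R] (h : IsTiling M A B) (f : ZMod M → R) :
    ∑ a ∈ A, ∑ b ∈ B, f (a + b) = ∑ z, f z := by
  rw [← sum_product']
  refine sum_bij (fun ab _ ↦ ab.1 + ab.2) (fun _ _ ↦ mem_univ _) (fun ab hab cd hcd heq ↦ ?_)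
    (fun z _ ↦ ?_) fun _ _ ↦ rfl
  · rw [mem_product] at hab hcd
    exact (h _).unique ⟨hab.1, hab.2, rfl⟩ ⟨hcd.1, hcd.2, heq.symm⟩
  · obtain ⟨ab, ⟨ha, hb, hz⟩, -⟩ := h z
    exact ⟨ab, mem_product.2 ⟨ha, hb⟩, hz⟩

lemma IsTiling.card_mul_card (h : IsTiling M A B) : #A * #B = M := by
  simpa using h.sum_sum_eq fun _ ↦ (1 : ℕ)

/-- At a primitive `s`-th root of unity `ζ ≠ 1`, `A(ζ)B(ζ)` is the sum over `ℤ_M` of a nontrivial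
character. -/
lemma IsTiling.cycDvd_or_cycDvd (h : IsTiling M A B) {s : ℕ} (hs : 1 < s) (hsM : s ∣ M) :
    cycDvd M s A ∨ cycDvd M s B := by
  have hζ := Complex.isPrimitiveRoot_exp s (by positivity)
  set ζ := Complex.exp (2 * Real.pi * Complex.I / s)
  have hζM : ζ ^ M = 1 := (hζ.pow_eq_one_iff_dvd M).2 hsM
  set ψ : AddChar (ZMod M) ℂ := AddChar.zmodChar M hζM
  have hψ : ψ ≠ 1 := fun hψ ↦ hζ.ne_one hs <| by
    simpa only [ψ, AddChar.zmodChar_apply', pow_one, AddChar.one_apply] using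
      DFunLike.congr_fun hψ ((1 : ℕ) : ZMod M)
  have haeval (C : Finset (ZMod M)) : aeval ζ (maskPoly M C) = ∑ c ∈ C, ψ c := by
    simp [maskPoly, ψ, AddChar.zmodChar_apply]
  have hprod : aeval ζ (maskPoly M A) * aeval ζ (maskPoly M B) = 0 := by
    simp_rw [haeval, sum_mul_sum, ← AddChar.map_add_eq_mul]
    rw [h.sum_sum_eq, AddChar.sum_eq_zero_of_ne_one hψ]
  exact (mul_eq_zero.1 hprod).imp (cycDvd_of_aeval_eq_zero (by positivity) hζ)
    (cycDvd_of_aeval_eq_zero (by positivity) hζ)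

/-- If no `Φ_{p^{k+1}}` with `k < n` divided `A`, they would all divide `B`, forcing `p ^ n ∣ |B|`
and hence `p ^ (n + 1) ∣ |A||B| = M`. -/
lemma IsTiling.gridCount_prime_pow_le (h : IsTiling M A B) {p n w : ℕ} (hp : p.Prime)
    (hn : p ^ n ∣ M) (hn' : ¬ p ^ (n + 1) ∣ M) (hA : #A = p * w) (x : ZMod M) :
    gridCount A (p ^ n) x ≤ w := by
  obtain ⟨k, hk, hkA⟩ : ∃ k < n, cycDvd M (p ^ (k + 1)) A := by
    by_contra! hnA
    refine hn' ?_
    rw [← h.card_mul_card, pow_succ', hA]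
    refine mul_dvd_mul (dvd_mul_right p w) (prime_pow_dvd_card_of_forall_cycDvd hp fun k hk ↦ ?_)
    exact (h.cycDvd_or_cycDvd (Nat.one_lt_pow k.succ_ne_zero hp.one_lt)
      ((pow_dvd_pow p hk).trans hn)).resolve_left (hnA k hk)
  refine Nat.le_of_mul_le_mul_left ?_ hp.pos
  calc p * gridCount A (p ^ n) x ≤ p * gridCount A (p ^ (k + 1)) x :=
        Nat.mul_le_mul_left p (gridCount_anti (pow_dvd_pow p hk) A x)
    _ ≤ #A := hkA.mul_gridCount_prime_pow_le_card hp ((pow_dvd_pow p hk).trans hn) x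
    _ = p * w := hA

end Tilings

section Planes

variable {M p q : ℕ} {A : Finset (ZMod M)} {a x y : ZMod M}

lemma Fibered.mem_iff_mem {S : Set (ZMod M)} (h : Fibered M p S) (hy : y ∈ gridSet M x (M / p)) :
    y ∈ S ↔ x ∈ S :=
  ⟨fun hyS ↦ h y hyS (dvd_sub_comm.1 hy), fun hxS ↦ h x hxS hy⟩

lemma Fibered.mem_iff_mem_of_mem_gridSet {G : ℕ} (h : Fibered M p (A ∩ gridSet M a G))
    (hG : G ∣ M / p) (hx : x ∈ gridSet M a G) (hy : y ∈ gridSet M x (M / p)) : y ∈ A ↔ x ∈ A := by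
  have hya : y ∈ gridSet M a G := gridSet_eq_of_mem hx ▸ gridSet_anti hG x hy
  simpa [hx, hya] using h.mem_iff_mem hy

lemma div_mul_mul_cancel_of_dvd {M p q : ℕ} (h : p * q ∣ M) : M / (p * q) * q = M / p := by
  rw [← Nat.div_div_eq_div_mul, Nat.div_mul_cancel (Nat.dvd_div_of_mul_dvd h)]

variable [NeZero M]

lemma gridCount_div_eq_sum [DecidableEq (ZMod M)] (hp : p ∣ M) (A : Finset (ZMod M)) (x : ZMod M) :
    gridCount A (M / p) x =
      ∑ t ∈ range p, if x + (t : ZMod M) * ((M / p : ℕ) : ZMod M) ∈ A then 1 else 0 := by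
  have hpM := Nat.div_mul_cancel hp
  rw [gridCount_eq_sum hpM.dvd (Nat.coprime_one_left p), hpM]
  simp only [gridCount_self, mul_one]

lemma gridCount_div_mul_eq_sum (hpq : p * q ∣ M) (hcop : p.Coprime q) (A : Finset (ZMod M))
    (x : ZMod M) : gridCount A (M / (p * q)) x =
      ∑ t ∈ range q, gridCount A (M / p) (x + (t : ZMod M) * ((M / q : ℕ) : ZMod M)) := by
  have hp := div_mul_mul_cancel_of_dvd hpq
  have hq := div_mul_mul_cancel_of_dvd (mul_comm p q ▸ hpq)
  rw [mul_comm q p] at hq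
  rw [gridCount_eq_sum (hp ▸ Nat.div_dvd_of_dvd (dvd_of_mul_right_dvd hpq)) hcop, hp, hq]

lemma gridCount_div_lt (hp : p ∣ M) (hy : y ∈ gridSet M x (M / p)) (hyA : y ∉ A) :
    gridCount A (M / p) x < p := by
  classical
  have hp0 : 0 < p := Nat.pos_of_ne_zero (ne_zero_of_dvd_ne_zero (NeZero.ne M) hp)
  rw [← gridCount_congr hy, gridCount_div_eq_sum hp]
  calc _ < ∑ _t ∈ range p, 1 := sum_lt_sum (fun t _ ↦ by split_ifs <;> simp)
        ⟨0, mem_range.2 hp0, by simp [hyA]⟩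
    _ = p := by simp

lemma Fibered.gridCount_div_eq_ite [DecidableEq (ZMod M)] {G : ℕ}
    (h : Fibered M p (A ∩ gridSet M a G)) (hp : p ∣ M) (hG : G ∣ M / p) (hx : x ∈ gridSet M a G) :
    gridCount A (M / p) x = if x ∈ A then p else 0 := by
  have hmem (t : ℕ) : x + (t : ZMod M) * ((M / p : ℕ) : ZMod M) ∈ A ↔ x ∈ A :=
    h.mem_iff_mem_of_mem_gridSet hG hx (add_mul_mem_gridSet dvd_rfl x t)
  rw [gridCount_div_eq_sum hp]
  simp only [hmem]
  split_ifs <;> simp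

lemma Fibered.gridCount_div_eq (h : Fibered M p (A ∩ gridSet M a (M / (p * q)))) (hpq : p * q ∣ M)
    (hcop : p.Coprime q) (hx : x ∈ gridSet M a (M / (p * q))) :
    gridCount A (M / q) x = gridCount A (M / q) a := by
  have hp := div_mul_mul_cancel_of_dvd hpq
  have hq : M / (p * q) * p = M / q := by
    rw [mul_comm p q, div_mul_mul_cancel_of_dvd (mul_comm p q ▸ hpq)]
  have hG0 : M / (p * q) ≠ 0 := ne_zero_of_dvd_ne_zero (NeZero.ne M) (Nat.div_dvd_of_dvd hpq)
  have hp0 : p ≠ 0 := ne_zero_of_dvd_ne_zero (NeZero.ne M) (dvd_of_mul_right_dvd hpq)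
  obtain ⟨t, ⟨-, ht⟩, -⟩ := existsUnique_lt_and_mem_gridSet
    (hq ▸ Nat.div_dvd_of_dvd (dvd_of_mul_left_dvd hpq)) hG0 hp0 hcop.symm hx
  rw [hp, hq] at ht
  rw [gridCount_congr ht, gridCount_div_eq_sum (dvd_of_mul_left_dvd hpq),
    gridCount_div_eq_sum (dvd_of_mul_left_dvd hpq)]
  refine sum_congr rfl fun s _ ↦ ?_
  have hs := add_mul_mem_gridSet (Nat.div_dvd_div_left hpq (dvd_mul_left q p)) a (s : ZMod M)
  rw [add_right_comm]
  simp only [h.mem_iff_mem_of_mem_gridSet (Nat.div_dvd_div_left hpq (dvd_mul_right p q)) hs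
    (add_mul_mem_gridSet dvd_rfl _ _)]

lemma Fibered.gridCount_div_mul (h : Fibered M p (A ∩ gridSet M a (M / (p * q))))
    (hpq : p * q ∣ M) (hcop : p.Coprime q) :
    gridCount A (M / (p * q)) a = p * gridCount A (M / q) a := by
  have hconst (t : ZMod M) :
      gridCount A (M / q) (a + t * ((M / p : ℕ) : ZMod M)) = gridCount A (M / q) a :=
    h.gridCount_div_eq hpq hcop
      (add_mul_mem_gridSet (Nat.div_dvd_div_left hpq (dvd_mul_right p q)) a t)
  rw [mul_comm p q, gridCount_div_mul_eq_sum (mul_comm p q ▸ hpq) hcop.symm]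
  simp [hconst]

lemma Fibered.gridCount_div_lt (h : Fibered M p (A ∩ gridSet M a (M / (p * q))))
    (hpq : p * q ∣ M) (hcop : p.Coprime q)
    (hnot : ¬ Fibered M q (A ∩ gridSet M a (M / (p * q)))) : gridCount A (M / q) a < q := by
  simp only [Fibered, Set.not_subset, not_forall] at hnot
  obtain ⟨x, ⟨-, hxG⟩, y, hyx, hy⟩ := hnot
  have hyG : y ∈ gridSet M a (M / (p * q)) := by
    rw [← gridSet_eq_of_mem hxG]
    exact gridSet_anti (Nat.div_dvd_div_left hpq (dvd_mul_left q p)) x hyx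
  rw [← h.gridCount_div_eq hpq hcop hxG]
  exact _root_.gridCount_div_lt (dvd_of_mul_left_dvd hpq) hyx fun hyA ↦ hy ⟨hyA, hyG⟩

end Planes

section Corners

lemma card_mul_card_mul_le_of_forall_le_add {ι κ R : Type*} [CommSemiring R] [PartialOrder R]
    [IsOrderedRing R] {s : Finset ι} {t : Finset κ} {f : ι → R} {g : κ → R} {m : R}
    (h : ∀ x ∈ s, ∀ y ∈ t, m ≤ f x + g y) :
    #s * #t * m ≤ #t * ∑ x ∈ s, f x + #s * ∑ y ∈ t, g y :=
  calc (#s * #t * m : R) = ∑ _x ∈ s, ∑ _y ∈ t, m := by simp [mul_assoc]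
    _ ≤ ∑ x ∈ s, ∑ y ∈ t, (f x + g y) := sum_le_sum fun x hx ↦ sum_le_sum (h x hx)
    _ = #t * ∑ x ∈ s, f x + #s * ∑ y ∈ t, g y := by simp [sum_add_distrib, mul_sum]

variable {M p u v : ℕ} {A : Finset (ZMod M)} {a a' d : ZMod M}

lemma exists_div_dvd_of_forall_prime_dvd {N : ℕ} (hN : N ∣ M)
    (hprimes : ∀ q : ℕ, q.Prime → q ∣ M → q = p ∨ q = u ∨ q = v) {dp du dv : ZMod M}
    (hp : ((M / p : ℕ) : ZMod M) ∣ dp) (hu : ((N / u : ℕ) : ZMod M) ∣ du)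
    (hv : ((M / v : ℕ) : ZMod M) ∣ dv) (q : ℕ) (hq : q.Prime) (hqN : q ∣ N) :
    ∃ d ∈ [dp, du, dv], ((N / q : ℕ) : ZMod M) ∣ d := by
  have hNM : N / q ∣ M / q := Nat.div_dvd_div hqN hN
  obtain rfl | rfl | rfl := hprimes q hq (hqN.trans hN)
  · exact ⟨dp, by simp, (Nat.cast_dvd_cast hNM).trans hp⟩
  · exact ⟨du, by simp, hu⟩
  · exact ⟨dv, by simp, (Nat.cast_dvd_cast hNM).trans hv⟩

variable [NeZero M]

/-- The cuboid with vertices on the base layers of `a` and `a'` and on their translates by `d`: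
on the base layers the counts are known, which leaves only the vertices of the translates. -/
lemma le_gridCount_add_gridCount_of_corner (hcop : u.Coprime v) (huv : u * v ∣ M)
    (hprimes : ∀ q : ℕ, q.Prime → q ∣ M → q = p ∨ q = u ∨ q = v)
    (hA : cycDvd M (M / u) A) (ha : Fibered M u (A ∩ gridSet M a (M / (u * v))))
    (ha' : Fibered M v (A ∩ gridSet M a' (M / (u * v))))
    (haa' : ((M / p : ℕ) : ZMod M) ∣ a' - a) (hd : ((M / u / u : ℕ) : ZMod M) ∣ d) {y y' : ZMod M}
    (hy : a + y * ((M / v : ℕ) : ZMod M) ∈ A) (hy' : a + y' * ((M / v : ℕ) : ZMod M) ∉ A) :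
    u ≤ gridCount A (M / u) (a + d + y * ((M / v : ℕ) : ZMod M)) +
      gridCount A (M / u) (a' + d + y' * ((M / v : ℕ) : ZMod M)) := by
  set γ : ZMod M := ((M / v : ℕ) : ZMod M)
  have huM : u ∣ M := dvd_of_mul_right_dvd huv
  have hGu : M / (u * v) ∣ M / u := Nat.div_dvd_div_left huv (dvd_mul_right u v)
  have hGv : M / (u * v) ∣ M / v := Nat.div_dvd_div_left huv (dvd_mul_left v u)
  have hlayer (t : ZMod M) :
      gridCount A (M / u) (a + t * γ) = if a + t * γ ∈ A then u else 0 :=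
    ha.gridCount_div_eq_ite huM hGu (add_mul_mem_gridSet hGv a t)
  have hlayer' (t : ZMod M) : gridCount A (M / u) (a' + t * γ) = gridCount A (M / u) a' := by
    rw [mul_comm u v] at ha' huv hGv
    exact ha'.gridCount_div_eq huv hcop.symm (add_mul_mem_gridSet hGv a' t)
  have hcuboid :
      ((gridCount A (M / u) (a' + d + y * γ) - gridCount A (M / u) (a' + d + y' * γ))
        - (gridCount A (M / u) (a' + y * γ) - gridCount A (M / u) (a' + y' * γ))
        - ((gridCount A (M / u) (a + d + y * γ) - gridCount A (M / u) (a + d + y' * γ))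
          - (gridCount A (M / u) (a + y * γ) - gridCount A (M / u) (a + y' * γ))) : ℤ) = 0 := by
    have h := congrFun (hA.foldr_fwdDiff_gridCount_eq_zero (Nat.div_dvd_of_dvd huM)
      (exists_div_dvd_of_forall_prime_dvd (Nat.div_dvd_of_dvd huM) hprimes haa' hd
        (dvd_mul_left γ (y - y')))) (a + y' * γ)
    simp only [List.foldr_cons, List.foldr_nil, fwdDiff, Pi.zero_apply] at h
    convert h using 6 <;> ring
  simp only [hlayer, hlayer', if_pos hy, if_neg hy'] at hcuboid
  lia

lemma card_mul_sub_mul_le_of_corner (hcop : u.Coprime v) (huv : u * v ∣ M)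
    (hprimes : ∀ q : ℕ, q.Prime → q ∣ M → q = p ∨ q = u ∨ q = v)
    (hA : cycDvd M (M / u) A) (ha : Fibered M u (A ∩ gridSet M a (M / (u * v))))
    (ha' : Fibered M v (A ∩ gridSet M a' (M / (u * v))))
    (haa' : ((M / p : ℕ) : ZMod M) ∣ a' - a) (hd : ((M / u / u : ℕ) : ZMod M) ∣ d) :
    (gridCount A (M / v) a * (v - gridCount A (M / v) a) * u : ℤ) ≤
      (v - gridCount A (M / v) a) * gridCount A (M / (u * v)) (a + d) +
        gridCount A (M / v) a * gridCount A (M / (u * v)) (a' + d) := by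
  classical
  set onA : ℕ → Prop := fun t ↦ a + (t : ZMod M) * ((M / v : ℕ) : ZMod M) ∈ A
  have hs : #{t ∈ range v | onA t} = gridCount A (M / v) a := by
    rw [gridCount_div_eq_sum (dvd_of_mul_left_dvd huv), card_filter]
  have hs' : (#{t ∈ range v | ¬ onA t} : ℤ) = v - gridCount A (M / v) a := by
    rw [← hs, eq_sub_iff_add_eq', ← Nat.cast_add, card_filter_add_card_filter_not, card_range]
  have hsum (P : ℕ → Prop) [DecidablePred P] (z : ZMod M) :
      (∑ t ∈ range v with P t, gridCount A (M / u) (z + (t : ZMod M) * ((M / v : ℕ) : ZMod M)) : ℤ)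
        ≤ gridCount A (M / (u * v)) z := by
    rw [gridCount_div_mul_eq_sum huv hcop, Nat.cast_sum]
    exact sum_le_sum_of_subset_of_nonneg (filter_subset _ _) fun _ _ _ ↦ by positivity
  rw [← hs', ← hs]
  refine (card_mul_card_mul_le_of_forall_le_add fun t ht t' ht' ↦ ?_).trans
    (add_le_add (mul_le_mul_of_nonneg_left (hsum onA (a + d)) (by positivity))
      (mul_le_mul_of_nonneg_left (hsum (¬ onA ·) (a' + d)) (by positivity)))
  exact_mod_cast le_gridCount_add_gridCount_of_corner hcop huv hprimes hA ha ha' haa' hd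
    (mem_filter.1 ht).2 (mem_filter.1 ht').2

lemma sum_Ico_le_of_corner (hcop : u.Coprime v) (huv : u * v ∣ M)
    (hprimes : ∀ q : ℕ, q.Prime → q ∣ M → q = p ∨ q = u ∨ q = v)
    (hA : cycDvd M (M / u) A) (ha : Fibered M u (A ∩ gridSet M a (M / (u * v))))
    (ha' : Fibered M v (A ∩ gridSet M a' (M / (u * v))))
    (haa' : ((M / p : ℕ) : ZMod M) ∣ a' - a) :
    (gridCount A (M / v) a * (v - gridCount A (M / v) a) * (u * (u - 1)) : ℤ) ≤
      (v - gridCount A (M / v) a) * (∑ z ∈ Ico 1 u,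
        gridCount A (M / (u * v)) (a + (z : ZMod M) * ((M / u ^ 2 : ℕ) : ZMod M)) : ℕ) +
      gridCount A (M / v) a * (∑ z ∈ Ico 1 u,
        gridCount A (M / (u * v)) (a' + (z : ZMod M) * ((M / u ^ 2 : ℕ) : ZMod M)) : ℕ) := by
  have hu : 1 ≤ u := Nat.pos_of_ne_zero
    (ne_zero_of_dvd_ne_zero (NeZero.ne M) (dvd_of_mul_right_dvd huv))
  have hd (z : ℕ) : ((M / u / u : ℕ) : ZMod M) ∣ (z : ZMod M) * ((M / u ^ 2 : ℕ) : ZMod M) := by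
    rw [Nat.div_div_eq_div_mul, ← sq]
    exact dvd_mul_left _ _
  have hsum := sum_le_sum fun z (_ : z ∈ Ico 1 u) ↦
    card_mul_sub_mul_le_of_corner hcop huv hprimes hA ha ha' haa' (hd z)
  rw [sum_const, Nat.card_Ico, sum_add_distrib, ← mul_sum, ← mul_sum, nsmul_eq_mul,
    Nat.cast_sub hu] at hsum
  push_cast at hsum ⊢
  linarith

lemma add_sum_Ico_add_sum_Ico_le_sum_sum {m n : ℕ} (hm : 0 < m) (hn : 0 < n) (f : ℕ → ℕ → ℕ) :
    f 0 0 + ∑ i ∈ Ico 1 m, f i 0 + ∑ j ∈ Ico 1 n, f 0 j ≤ ∑ i ∈ range m, ∑ j ∈ range n, f i j := by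
  rw [sum_range_eq_add_Ico _ hm, sum_range_eq_add_Ico _ hn, add_right_comm]
  gcongr with i
  exact single_le_sum (f := f i) (fun _ _ ↦ Nat.zero_le _) (mem_range.2 hn)

lemma gridCount_cross_le {N : ℕ} (hcop : u.Coprime v) (hN : N * u * v ∣ M) (hu : 0 < u)
    (hv : 0 < v) (A : Finset (ZMod M)) (x : ZMod M) :
    gridCount A (N * u * v) x +
      ∑ z ∈ Ico 1 u, gridCount A (N * u * v) (x + (z : ZMod M) * ((N * v ^ 2 : ℕ) : ZMod M)) +
      ∑ w ∈ Ico 1 v, gridCount A (N * u * v) (x + (w : ZMod M) * ((N * u * u : ℕ) : ZMod M)) ≤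
    gridCount A N x := by
  rw [gridCount_eq_sum (dvd_of_mul_right_dvd hN) (hcop.symm.pow_left 2) A x]
  simp only [gridCount_eq_sum hN hcop]
  have hcross := add_sum_Ico_add_sum_Ico_le_sum_sum hu hv fun z w ↦ gridCount A (N * u * v)
    (x + (z : ZMod M) * ((N * v ^ 2 : ℕ) : ZMod M) + (w : ZMod M) * ((N * u * u : ℕ) : ZMod M))
  simp only [Nat.cast_zero, zero_mul, add_zero] at hcross
  exact hcross

lemma gridCount_div_cross_le (hcop : u.Coprime v) (huv : (u * v) ^ 2 ∣ M) (A : Finset (ZMod M))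
    (x : ZMod M) :
    gridCount A (M / (u * v)) x +
      ∑ z ∈ Ico 1 u, gridCount A (M / (u * v)) (x + (z : ZMod M) * ((M / u ^ 2 : ℕ) : ZMod M)) +
      ∑ w ∈ Ico 1 v, gridCount A (M / (u * v)) (x + (w : ZMod M) * ((M / v ^ 2 : ℕ) : ZMod M)) ≤
    gridCount A (M / (u * v) ^ 2) x := by
  have huv0 : u * v ≠ 0 := fun h ↦ NeZero.ne M (by simpa [h] using huv)
  have hG : M / (u * v) ^ 2 * u * v = M / (u * v) := by
    rw [mul_assoc, sq, div_mul_mul_cancel_of_dvd (sq (u * v) ▸ huv)]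
  have hU : M / (u * v) ^ 2 * v ^ 2 = M / u ^ 2 := by
    rw [mul_pow, div_mul_mul_cancel_of_dvd (mul_pow u v 2 ▸ huv)]
  have hV : M / (u * v) ^ 2 * u * u = M / v ^ 2 := by
    rw [mul_assoc, ← sq, mul_comm u v, mul_pow,
      div_mul_mul_cancel_of_dvd (mul_pow v u 2 ▸ mul_comm u v ▸ huv)]
  have hcross := gridCount_cross_le (N := M / (u * v) ^ 2) hcop
    (hG ▸ Nat.div_dvd_of_dvd ((dvd_pow_self _ two_ne_zero).trans huv))
    (Nat.pos_of_ne_zero (left_ne_zero_of_mul huv0)) (Nat.pos_of_ne_zero (right_ne_zero_of_mul huv0))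
    A x
  rwa [hG, hU, hV] at hcross

lemma le_add_of_mul_mul_le {R : Type*} [CommRing R] [LinearOrder R] [IsStrictOrderedRing R]
    {s t x y m : R} (hs : 1 ≤ s) (ht : 1 ≤ t) (hx : 0 ≤ x) (hy : 0 ≤ y)
    (h : s * t * m ≤ t * x + s * y) : m ≤ x + y := by
  have hs0 : 0 < s := zero_lt_one.trans_le hs
  have ht0 : 0 < t := zero_lt_one.trans_le ht
  refine le_of_mul_le_mul_left (h.trans ?_) (mul_pos hs0 ht0)
  calc t * x + s * y ≤ s * (t * x) + t * (s * y) :=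
        add_le_add (le_mul_of_one_le_left (mul_nonneg ht0.le hx) hs)
          (le_mul_of_one_le_left (mul_nonneg hs0.le hy) ht)
    _ = s * t * (x + y) := by ring

/-- The combination of `ha` and `ha'` with weights `c` and `u - c` eliminates `X'` and `Y'` by `hv`;
if `u < v`, the lower bound on `X + Y` given by `hu` contradicts the resulting inequality. -/
lemma le_of_corner_inequalities {u v s c X X' Y Y' : ℤ} (hs : 1 ≤ s) (hsv : s < v) (hc : 1 ≤ c)
    (hcu : c < u) (hX : 0 ≤ X) (hY : 0 ≤ Y)
    (ha : u * s + X + X' ≤ u * v) (ha' : v * c + Y + Y' ≤ u * v)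
    (hu : s * (v - s) * (u * (u - 1)) ≤ (v - s) * X + s * Y)
    (hv : c * (u - c) * (v * (v - 1)) ≤ (u - c) * Y' + c * X') : v ≤ u := by
  by_contra! huv
  have hcombined : c * (u - c) * v ^ 2 + c * (u * s) + c * X + (u - c) * Y ≤ u ^ 2 * v := by
    linear_combination c * ha + (u - c) * ha' + hv
  have hXY : u * (u - 1) ≤ X + Y := le_add_of_mul_mul_le hs (by linarith) hX hY hu
  have hcX : X ≤ c * X := le_mul_of_one_le_left hX hc
  have hcY : Y ≤ (u - c) * Y := le_mul_of_one_le_left hY (by linarith)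
  have hcus : u ≤ c * (u * s) := by nlinarith [mul_nonneg (sub_nonneg.2 hs) (sub_nonneg.2 hc)]
  have hcc : u - 1 ≤ c * (u - c) := by
    linear_combination mul_nonneg (sub_nonneg.2 hc) (by linarith : 0 ≤ u - c - 1)
  have hcv : (u - 1) * v ^ 2 ≤ c * (u - c) * v ^ 2 := mul_le_mul_of_nonneg_right hcc (sq_nonneg v)
  have hprod : 0 < ((u - 1) * v - u) * (v - u) := mul_pos (by nlinarith) (by linarith)
  linarith

lemma le_of_corner (hcop : u.Coprime v) (huv : (u * v) ^ 2 ∣ M)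
    (hprimes : ∀ q : ℕ, q.Prime → q ∣ M → q = p ∨ q = u ∨ q = v)
    (hu : cycDvd M (M / u) A) (hv : cycDvd M (M / v) A)
    (hcount : ∀ x, gridCount A (M / (u * v) ^ 2) x ≤ u * v) (haA : a ∈ A) (haA' : a' ∈ A)
    (ha : Fibered M u (A ∩ gridSet M a (M / (u * v))))
    (hna : ¬ Fibered M v (A ∩ gridSet M a (M / (u * v))))
    (ha' : Fibered M v (A ∩ gridSet M a' (M / (u * v))))
    (hna' : ¬ Fibered M u (A ∩ gridSet M a' (M / (u * v))))
    (haa' : ((M / p : ℕ) : ZMod M) ∣ a' - a) : v ≤ u := by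
  have huvM : u * v ∣ M := (dvd_pow_self _ two_ne_zero).trans huv
  have hcross (x : ZMod M) := (gridCount_div_cross_le hcop huv A x).trans (hcount x)
  have hcross_a := hcross a
  have hcross_a' := hcross a'
  have hcuboid := sum_Ico_le_of_corner hcop huvM hprimes hu ha ha' haa'
  rw [ha.gridCount_div_mul huvM hcop] at hcross_a
  have hlt := ha.gridCount_div_lt huvM hcop hna
  simp only [mul_comm u v] at huvM ha ha' hna' hcross_a'
  rw [ha'.gridCount_div_mul huvM hcop.symm] at hcross_a'
  have hlt' := ha'.gridCount_div_lt huvM hcop.symm hna'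
  have hcuboid' := sum_Ico_le_of_corner hcop.symm huvM
    (fun q hq hqM ↦ (hprimes q hq hqM).imp_right Or.symm) hv ha' ha (dvd_sub_comm.1 haa')
  simp only [mul_comm v u] at hcross_a' hcuboid'
  zify at hcross_a hcross_a' hlt hlt' hcuboid hcuboid' ⊢
  exact le_of_corner_inequalities (mod_cast gridCount_pos haA _) hlt
    (mod_cast gridCount_pos haA' _) hlt' (by positivity) (by positivity)
    hcross_a hcross_a' hcuboid hcuboid'

end Corners

section Primes

lemma eq_or_eq_or_eq_of_dvd_pow_mul_pow_mul_pow {q r s t l m n : ℕ} (hq : q.Prime) (hr : r.Prime)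
    (hs : s.Prime) (ht : t.Prime) (h : q ∣ r ^ l * s ^ m * t ^ n) : q = r ∨ q = s ∨ q = t := by
  have heq {r l : ℕ} (hr : r.Prime) (h : q ∣ r ^ l) : q = r :=
    (Nat.prime_dvd_prime_iff_eq hq hr).1 (hq.dvd_of_dvd_pow h)
  obtain (h | h) | h := (hq.dvd_mul.1 h).imp_left hq.dvd_mul.1
  exacts [.inl (heq hr h), .inr (.inl (heq hs h)), .inr (.inr (heq ht h))]

lemma not_pow_succ_dvd_pow_mul_pow_mul_pow {r s t l m n : ℕ} (hr : r.Prime) (hs : s.Prime)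
    (ht : t.Prime) (hrs : r ≠ s) (hrt : r ≠ t) : ¬ r ^ (l + 1) ∣ r ^ l * s ^ m * t ^ n := by
  rw [pow_succ, mul_assoc, Nat.mul_dvd_mul_iff_left (pow_pos hr.pos l), hr.dvd_mul, not_or]
  exact ⟨fun h ↦ hrs ((Nat.prime_dvd_prime_iff_eq hr hs).1 (hr.dvd_of_dvd_pow h)),
    fun h ↦ hrt ((Nat.prime_dvd_prime_iff_eq hr ht).1 (hr.dvd_of_dvd_pow h))⟩

end Primes

theorem statement17_general {pi pj pk ni nj nk M : ℕ} (hpi : pi.Prime) (hpj : pj.Prime)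
    (hpk : pk.Prime) (hjk : pj ≠ pk) (hnj : 2 ≤ nj) (hnk : 2 ≤ nk)
    (hM : M = pi ^ ni * pj ^ nj * pk ^ nk) {A : Finset (ZMod M)} {Λ : Set (ZMod M)}
    (hcount : ∀ x, gridCount A (pi ^ ni) x ≤ pj * pk) (hcorner : ExtCorner M pi pj pk A Λ) :
    ¬ (cycDvd M (M / pj) A ∧ cycDvd M (M / pk) A) := by
  rintro ⟨hj, hk⟩
  obtain ⟨a, ⟨haA, -⟩, a', ⟨haA', -⟩, hgcd, ha, hna, ha', hna'⟩ := hcorner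
  have : NeZero M := ⟨by simp [hM, hpi.ne_zero, hpj.ne_zero, hpk.ne_zero]⟩
  have hcop : pj.Coprime pk := (Nat.coprime_primes hpj hpk).2 hjk
  have hpiM : pi ^ ni * (pj * pk) ^ 2 ∣ M := by
    rw [hM, mul_pow, ← mul_assoc]
    gcongr
  have hsq : (pj * pk) ^ 2 ∣ M := dvd_of_mul_left_dvd hpiM
  have hprimes (q : ℕ) (hq : q.Prime) (hqM : q ∣ M) : q = pi ∨ q = pj ∨ q = pk :=
    eq_or_eq_or_eq_of_dvd_pow_mul_pow_mul_pow hq hpi hpj hpk (hM ▸ hqM)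
  have hcount' (x : ZMod M) : gridCount A (M / (pj * pk) ^ 2) x ≤ pj * pk :=
    (gridCount_anti (Nat.dvd_div_of_mul_dvd (mul_comm _ (pi ^ ni) ▸ hpiM)) A x).trans (hcount x)
  have haa' : ((M / pi : ℕ) : ZMod M) ∣ a - a' := by
    rw [← hgcd, natCast_dvd_iff_dvd_val (Nat.gcd_dvd_right _ _)]
    exact Nat.gcd_dvd_left _ _
  have hkj : pk ≤ pj := le_of_corner hcop hsq hprimes hj hk hcount' haA haA' ha hna ha' hna'
    (dvd_sub_comm.1 haa')
  rw [mul_comm pj pk] at hsq hcount' ha hna ha' hna'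
  exact hjk <| hkj.antisymm' <| le_of_corner hcop.symm hsq
    (fun q hq hqM ↦ (hprimes q hq hqM).imp_right Or.symm) hk hj hcount' haA' haA ha' hna' ha hna
    haa'

/-- Under the extended corner assumption, `Φ_{M/p_j}` and `Φ_{M/p_k}`
cannot both divide `A`. -/
theorem statement17
    (pi pj pk : ℕ) (hpi : pi.Prime) (hpj : pj.Prime) (hpk : pk.Prime)
    (hij : pi ≠ pj) (hik : pi ≠ pk) (hjk : pj ≠ pk)
    (ni nj nk : ℕ) (hni : 1 ≤ ni) (hnj : 2 ≤ nj) (hnk : 2 ≤ nk)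
    (M : ℕ) (hM : M = pi ^ ni * pj ^ nj * pk ^ nk)
    (A B : Finset (ZMod M))
    (htile : IsTiling M (A : Set (ZMod M)) (B : Set (ZMod M)))
    (hcardA : A.card = pi * pj * pk)
    (hPhiM : cycDvd M M A)
    (x0 : ZMod M) (D : ℕ) (hD : D = pi ^ (ni - 1) * pj ^ (nj - 1) * pk ^ (nk - 1))
    (hcorner : ExtCorner M pi pj pk (A : Set (ZMod M)) (gridSet M x0 D)) :
    ¬ (cycDvd M (M / pj) A ∧ cycDvd M (M / pk) A) := by
  have : NeZero M := ⟨by simp [hM, hpi.ne_zero, hpj.ne_zero, hpk.ne_zero]⟩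
  have hcount (x : ZMod M) : gridCount A (pi ^ ni) x ≤ pj * pk :=
    htile.gridCount_prime_pow_le hpi (hM ▸ Dvd.intro _ (mul_assoc _ _ _).symm)
      (hM ▸ not_pow_succ_dvd_pow_mul_pow_mul_pow hpi hpj hpk hij hik)
      (hcardA.trans (mul_assoc _ _ _)) x
  exact statement17_general hpi hpj hpk hjk hnj hnk hM hcount hcorner
end

section
/- Let M = p_i^{n_i} p_j^2 p_k^2 with p_i, p_j, p_k distinct primes, n_i ≥ 2, and p_k < p_j. Assume A ⊕ B = ℤ_M, |A| = p_i p_j p_k, Φ_M | A, and that there exist a D(M)-grid Λ and a, a_i ∈ A ∩ Λ with (a − a_i, M) = M/p_i witnessing a p_i extended corner (i.e., A ∩ Λ(a, M/(p_j p_k)) is M-fibered in the p_j direction but not in the p_k direction, and A ∩ Λ(a_i, M/(p_j p_k)) is M-fibered in the p_k direction but not in the p_j direction). Assume moreover that Φ_{M/p_j} | B and that no element a′ ∈ A satisfies (a′ − a, M) = M/(p_j p_k) or (a′ − a_i, M) = M/(p_j p_k). Then Φ_{M/p_k} | B. -/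
open Polynomial

/-!
By the Chinese remainder theorem `ℤ_M` is a product of three rings, one for each prime, and
`Φ_N ∣ A` says that the counts of `A` in the cosets generated by `N` have vanishing alternating sums
over all `N`-cuboids. By Sands' principle `rA ⊕ B` is again a tiling for every unit `r`, so no
nonzero difference of `A` is associated to a difference of `B`. In particular, two representations
`a + b` and `a' + b'` of points that differ in a single direction cannot be arbitrary.

Suppose `Φ_{M/p_k} ∤ B`, so that `Φ_{M/p_k} ∣ A`. The differences which the corner forces into `A`
are missing from `B`, and together with the cuboid sums for `Φ_{M/p_k} ∣ A` and `Φ_{M/p_j} ∣ B` this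
produces a point of `B` which is isolated in its `D(M)`-grid. The column in the `p_j` direction
through that point meets `B` in every coset of the fiber, and `B` has no point on the other columns
that differ from it by fibers in the `p_i` and `p_k` directions. For `γ ≤ 2` the polynomial
`Φ_{p_i^{n_i} p_k^γ}` divides `A` or `B`. For `γ = 2` it has to divide `A`, and then `A` has `p_j`
points on each column through the `p_k` fiber of `a`, against one on each column through that of
`a_i`. For `γ = 1` and `γ = 0` the resulting counts of `A`, or of `B`, on whole planes contradict
`|A| = p_i p_j p_k`, the tiling, or `p_k < p_j`.
-/

namespace CyclotomicTiling

open Finset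

section CosetCount

variable {R : Type*} [CommRing R]

open Classical in
/-- The number of elements of `S` in the coset `x + N`; for `N` the ideal generated by `D`, this is
the number of points of `S` in the `D`-grid through `x`. -/
noncomputable def cosetCount (S : Finset R) (N : Ideal R) (x : R) : ℕ :=
  #{a ∈ S | a - x ∈ N}

variable {S : Finset R} {N : Ideal R} {x : R}

lemma cosetCount_pos : 0 < cosetCount S N x ↔ ∃ a ∈ S, a - x ∈ N := by
  classical
  rw [cosetCount, Finset.card_pos, Finset.filter_nonempty_iff]

lemma cosetCount_eq_zero : cosetCount S N x = 0 ↔ ∀ a ∈ S, a - x ∉ N := by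
  classical
  rw [cosetCount, Finset.card_eq_zero, Finset.filter_eq_empty_iff]

lemma cosetCount_le_one :
    cosetCount S N x ≤ 1 ↔ ∀ a ∈ S, ∀ a' ∈ S, a - x ∈ N → a' - x ∈ N → a = a' := by
  simp only [cosetCount, Finset.card_le_one, Finset.mem_filter]
  grind

lemma ncard_setOf_sub_mem (N : Ideal R) (x : R) : {a | a - x ∈ N}.ncard = Nat.card N :=
  Nat.card_congr ((Equiv.subRight x).subtypeEquiv fun _ => Iff.rfl)

lemma cosetCount_eq_ncard (S : Finset R) (N : Ideal R) (x : R) :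
    cosetCount S N x = {a | a ∈ S ∧ a - x ∈ N}.ncard := by
  classical
  rw [cosetCount, ← Set.ncard_coe_finset, Finset.coe_filter]

lemma card_le_cosetCount [Finite R] :
    Nat.card N ≤ cosetCount S N x ↔ ∀ a, a - x ∈ N → a ∈ S := by
  have hsub : {a | a ∈ S ∧ a - x ∈ N} ⊆ {a | a - x ∈ N} := fun a ha => ha.2
  rw [cosetCount_eq_ncard, ← ncard_setOf_sub_mem N x]
  refine ⟨fun h a ha => ?_, fun h => Set.ncard_le_ncard fun a ha => ⟨h a ha, ha⟩⟩
  exact ((Set.eq_of_subset_of_ncard_le hsub h).ge ha).1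

lemma cosetCount_le_card_ideal [Finite R] : cosetCount S N x ≤ Nat.card N := by
  rw [cosetCount_eq_ncard, ← ncard_setOf_sub_mem N x]
  exact Set.ncard_le_ncard fun a ha => ha.2

lemma cosetCount_le_card : cosetCount S N x ≤ #S := by
  classical
  exact Finset.card_filter_le _ _

lemma cosetCount_le_cosetCount {N' : Ideal R} {y : R}
    (h : ∀ a ∈ S, a - x ∈ N → a - y ∈ N') : cosetCount S N x ≤ cosetCount S N' y := by
  classical
  exact Finset.card_le_card fun a ha => by
    rw [Finset.mem_filter] at ha ⊢
    exact ⟨ha.1, h a ha.1 ha.2⟩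

lemma cosetCount_add_of_mem {n : R} (hn : n ∈ N) :
    cosetCount S N (x + n) = cosetCount S N x := by
  classical
  refine congrArg card (Finset.filter_congr fun a _ => ?_)
  rw [← sub_sub, N.sub_mem_iff_left hn]

lemma cosetCount_lt_cosetCount_of_mem {N' : Ideal R} {a : R} (hN : N ≤ N') (ha : a ∈ S)
    (haN' : a - x ∈ N') (haN : a - x ∉ N) : cosetCount S N x < cosetCount S N' x := by
  classical
  refine Finset.card_lt_card (Finset.ssubset_iff_of_subset ?_ |>.2 ⟨a, ?_, ?_⟩)
  · exact Finset.monotone_filter_right _ fun a _ ha => hN ha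
  · exact Finset.mem_filter.2 ⟨ha, haN'⟩
  · exact fun ha' => haN (Finset.mem_filter.1 ha').2

lemma sum_cosetCount_add {N' : Ideal R} [Fintype N'] (hN : N ≤ N') :
    ∑ t : N', cosetCount S N (x + t) = Nat.card N * cosetCount S N' x := by
  classical
  have hcoset : ∀ a ∈ S, #{t : N' | a - (x + t) ∈ N} = if a - x ∈ N' then Nat.card N else 0 := by
    intro a _
    split_ifs with ha
    · rw [← Fintype.card_subtype, ← Nat.card_eq_fintype_card]
      exact Nat.card_congr
        ⟨fun t => ⟨a - (x + t.1), t.2⟩,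
          fun n => ⟨⟨a - x - n, N'.sub_mem ha (hN n.2)⟩, by simp [← sub_sub]⟩,
          fun t => by ext; simp [← sub_sub], fun n => by ext; simp [← sub_sub]⟩
    · rw [Finset.card_eq_zero, Finset.filter_eq_empty_iff]
      intro t _ ht
      refine ha ?_
      simpa [← sub_sub] using N'.add_mem (hN ht) t.2
  calc ∑ t : N', cosetCount S N (x + t) = ∑ a ∈ S, #{t : N' | a - (x + t) ∈ N} := by
        simp only [cosetCount, Finset.card_filter]
        exact Finset.sum_comm
    _ = Nat.card N * cosetCount S N' x := by
        rw [Finset.sum_congr rfl hcoset, ← Finset.sum_filter, Finset.sum_const, smul_eq_mul,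
          mul_comm, cosetCount]

lemma card_mul_le_card_mul_cosetCount [Finite R] {N' : Ideal R} (hN : N ≤ N') {n : ℕ}
    (h : ∀ t ∈ N', n ≤ cosetCount S N (x + t)) :
    Nat.card N' * n ≤ Nat.card N * cosetCount S N' x := by
  have := Fintype.ofFinite N'
  rw [← sum_cosetCount_add hN, Nat.card_eq_fintype_card, ← smul_eq_mul]
  exact Finset.card_nsmul_le_sum _ _ _ fun t _ => h t t.2

lemma cosetCount_lt_cosetCount [Finite R] {N' : Ideal R} (hN : N ≤ N') {y : R}
    (h : ∀ t ∈ N', cosetCount S N (x + t) < cosetCount S N (y + t)) :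
    cosetCount S N' x < cosetCount S N' y := by
  have := Fintype.ofFinite N'
  refine lt_of_mul_lt_mul_left' (a := Nat.card N) ?_
  rw [← sum_cosetCount_add hN, ← sum_cosetCount_add hN]
  exact Finset.sum_lt_sum_of_nonempty ⟨0, Finset.mem_univ _⟩ fun t _ => h t t.2

lemma cosetCount_mul_cosetCount_le_card [Finite R] {A B : Finset R} {N : Ideal R} {x y : R}
    (hinj : ∀ a ∈ A, ∀ a' ∈ A, ∀ b ∈ B, ∀ b' ∈ B, a + b = a' + b' → a = a' ∧ b = b') :
    cosetCount A N x * cosetCount B N y ≤ Nat.card N := by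
  classical
  rw [← ncard_setOf_sub_mem N (x + y), cosetCount, cosetCount, ← Finset.card_product,
    ← Set.ncard_coe_finset]
  refine Set.ncard_le_ncard_of_injOn (fun p => p.1 + p.2) ?_ ?_
  · rintro ⟨a, b⟩ hp
    simp only [coe_product, coe_filter, Set.mem_prod, Set.mem_ofPred_eq] at hp ⊢
    rw [add_sub_add_comm]
    exact N.add_mem hp.1.2 hp.2.2
  · rintro ⟨a, b⟩ hp ⟨a', b'⟩ hp' e
    simp only [coe_product, coe_filter, Set.mem_prod, Set.mem_ofPred_eq] at hp hp'
    exact Prod.ext_iff.2 (hinj a hp.1.1 a' hp'.1.1 b hp.2.1 b' hp'.2.1 e)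

end CosetCount

section Associated

variable {R : Type*} [CommRing R]

lemma associated_sub_of_eq {x x' y y' : R} (hx : x = x') (hy : y = y') :
    Associated (x - x') (y - y') := by
  rw [sub_eq_zero.2 hx, sub_eq_zero.2 hy]

lemma associated_sub_of_add_eq {x x' y y' : R} (h : x + y = x' + y') :
    Associated (x - x') (y - y') := by
  rw [show y - y' = -(x - x') by linear_combination h]
  exact (Associated.refl _).neg_right

/-- `F` behaves like the ideal generated by `p ^ (n - 1)` in `ZMod (p ^ n)`: its cosets are the
fibers in the `p` direction. -/
structure IsFiberIdeal (F : Ideal R) (p : ℕ) : Prop where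
  card_eq : Nat.card F = p
  associated_of_mem : ∀ {x y : R}, x ∈ F → y ∈ F → x ≠ 0 → y ≠ 0 → Associated x y
  associated_of_add_mem : ∀ {x y : R}, x ∉ F → x + y ∈ F → Associated x y

lemma IsFiberIdeal.exists_mem_ne_zero {F : Ideal R} {p : ℕ} (hF : IsFiberIdeal F p) (hp : p ≠ 1) :
    ∃ x ∈ F, x ≠ 0 := by
  refine Submodule.exists_mem_ne_zero_of_ne_bot fun h => hp ?_
  rw [← hF.card_eq, h, Nat.card_unique]

/-- `F` behaves like the ideal generated by `p` in `ZMod (p ^ 2)`: it is a fiber ideal with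
quotient of order `p`, and the elements outside it are units. -/
structure IsSquareFiberIdeal (F : Ideal R) (p : ℕ) : Prop extends IsFiberIdeal F p where
  associated_of_notMem : ∀ {x y : R}, x ∉ F → y ∉ F → Associated x y
  card_quotient : Nat.card (R ⧸ F) = p

lemma IsFiberIdeal.associated_or_split {F : Ideal R} {p : ℕ} (hF : IsFiberIdeal F p)
    {x x' y y' : R} (h : x + y - (x' + y') ∈ F) :
    Associated (x - x') (y - y') ∨
      (x - x' ∈ F ∧ y - y' ∈ F ∧ (x = x' ∨ y = y')) := by
  rw [add_sub_add_comm] at h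
  by_cases hx : x - x' ∈ F
  · have hy : y - y' ∈ F := (F.add_mem_iff_right hx).1 h
    by_cases hx0 : x = x'
    · exact Or.inr ⟨hx, hy, Or.inl hx0⟩
    by_cases hy0 : y = y'
    · exact Or.inr ⟨hx, hy, Or.inr hy0⟩
    exact Or.inl (hF.associated_of_mem hx hy (sub_ne_zero.2 hx0) (sub_ne_zero.2 hy0))
  · exact Or.inl (hF.associated_of_add_mem hx h)

end Associated

section Fourier

open ZMod

open scoped fwdDiff

lemma addOrderOf_unit_mul {R : Type*} [Ring R] (r : Rˣ) (k : R) :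
    addOrderOf ((r : R) * k) = addOrderOf k :=
  addOrderOf_injective (AddMonoidHom.mulLeft (r : R)) r.isUnit.mul_right_injective k

lemma isTiling_iff_card_filter {M : ℕ} {A B : Finset (ZMod M)} :
    IsTiling M (A : Set (ZMod M)) (B : Set (ZMod M)) ↔
      ∀ z, #{p ∈ A ×ˢ B | p.1 + p.2 = z} = 1 := by
  refine forall_congr' fun z => ?_
  rw [Finset.card_eq_one, Finset.singleton_iff_unique_mem]
  simp only [Finset.mem_filter, Finset.mem_product, Finset.mem_coe, and_assoc]

variable {M : ℕ} [NeZero M] {A B : Finset (ZMod M)}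

/-- The value of the mask polynomial of `A` at the root of unity `exp (2πik/M)`. -/
noncomputable def charSum (A : Finset (ZMod M)) (k : ZMod M) : ℂ :=
  ∑ a ∈ A, stdAddChar (a * k)

lemma aeval_maskPoly (A : Finset (ZMod M)) (k : ZMod M) :
    aeval (stdAddChar k : ℂ) (maskPoly M A) = charSum A k := by
  rw [maskPoly, charSum, map_sum]
  refine Finset.sum_congr rfl fun a _ => ?_
  rw [map_pow, aeval_X, ← AddChar.map_nsmul_eq_pow, nsmul_eq_mul, natCast_zmod_val]

lemma isPrimitiveRoot_stdAddChar (k : ZMod M) :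
    IsPrimitiveRoot (stdAddChar k : ℂ) (addOrderOf k) where
  pow_eq_one := by
    rw [← AddChar.map_nsmul_eq_pow, addOrderOf_nsmul_eq_zero, AddChar.map_zero_eq_one]
  dvd_of_pow_eq_one l hl := by
    rw [← AddChar.map_nsmul_eq_pow, ← AddChar.map_zero_eq_one (stdAddChar (N := M))] at hl
    exact addOrderOf_dvd_of_nsmul_eq_zero (injective_stdAddChar hl)

lemma cycDvd_addOrderOf_iff {k : ZMod M} : cycDvd M (addOrderOf k) A ↔ charSum A k = 0 := by
  have hpos : 0 < addOrderOf k := addOrderOf_pos k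
  have hroot := isPrimitiveRoot_stdAddChar k
  rw [cycDvd, cyclotomic_eq_minpoly hroot hpos, ← aeval_maskPoly,
    minpoly.isIntegrallyClosed_dvd_iff (hroot.isIntegral hpos)]

lemma exists_addOrderOf_eq {N : ℕ} (hN : N ∣ M) : ∃ k : ZMod M, addOrderOf k = N := by
  obtain ⟨d, hd⟩ := hN
  refine ⟨(d : ℕ), ?_⟩
  rw [addOrderOf_coe d (NeZero.ne M), Nat.gcd_eq_right (hd ▸ dvd_mul_left d N)]
  exact Nat.div_eq_of_eq_mul_left (Nat.pos_of_ne_zero fun h => NeZero.ne M (by simp [hd, h])) hd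

lemma charSum_unit_mul_eq_zero (r : (ZMod M)ˣ) {k : ZMod M} :
    charSum A (r * k) = 0 ↔ charSum A k = 0 := by
  rw [← cycDvd_addOrderOf_iff, addOrderOf_unit_mul, cycDvd_addOrderOf_iff]

lemma dft_card_filter_add_eq (A B : Finset (ZMod M)) (k : ZMod M) :
    𝓕 (fun z => (#{p ∈ A ×ˢ B | p.1 + p.2 = z} : ℂ)) k = charSum A (-k) * charSum B (-k) := by
  rw [charSum, charSum, Finset.sum_mul_sum, ← Finset.sum_product', dft_apply]
  simp only [Finset.card_filter, Nat.cast_sum, smul_eq_mul, Finset.mul_sum]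
  rw [Finset.sum_comm]
  refine Finset.sum_congr rfl fun p _ => ?_
  simp only [Nat.cast_ite, Nat.cast_one, Nat.cast_zero, mul_ite, mul_one, mul_zero,
    Finset.sum_ite_eq, Finset.mem_univ, if_true]
  rw [← AddChar.map_add_eq_mul, ← add_mul, mul_neg]

lemma dft_one (k : ZMod M) : 𝓕 (fun _ : ZMod M => (1 : ℂ)) k = if k = 0 then (M : ℂ) else 0 := by
  have hsum := AddChar.sum_mulShift (R' := ℂ) (-k) (isPrimitive_stdAddChar M)
  simpa only [dft_apply, smul_eq_mul, mul_one, mul_neg, neg_eq_zero, Nat.cast_ite, Nat.cast_zero,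
    ZMod.card] using hsum

lemma isTiling_iff_charSum_mul_charSum :
    IsTiling M (A : Set (ZMod M)) (B : Set (ZMod M)) ↔
      ∀ k, charSum A k * charSum B k = if k = 0 then (M : ℂ) else 0 := by
  calc IsTiling M (A : Set (ZMod M)) (B : Set (ZMod M))
      ↔ (fun z => (#{p ∈ A ×ˢ B | p.1 + p.2 = z} : ℂ)) = fun _ => 1 := by
        rw [isTiling_iff_card_filter, funext_iff]
        simp only [Nat.cast_eq_one]
    _ ↔ ∀ k, charSum A (-k) * charSum B (-k) = if k = 0 then (M : ℂ) else 0 := by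
        rw [← dft.injective.eq_iff, funext_iff]
        simp only [dft_card_filter_add_eq, dft_one]
    _ ↔ _ := by
        rw [(Equiv.neg (ZMod M)).forall_congr_left]
        simp only [Equiv.neg_symm, Equiv.neg_apply, neg_neg, neg_eq_zero]

lemma charSum_eq_zero_or (htile : IsTiling M (A : Set (ZMod M)) (B : Set (ZMod M)))
    {k : ZMod M} (hk : k ≠ 0) : charSum A k = 0 ∨ charSum B k = 0 := by
  rw [← mul_eq_zero, isTiling_iff_charSum_mul_charSum.1 htile, if_neg hk]

lemma cycDvd_or_cycDvd (htile : IsTiling M (A : Set (ZMod M)) (B : Set (ZMod M))) {N : ℕ}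
    (hN : N ∣ M) (hN1 : N ≠ 1) : cycDvd M N A ∨ cycDvd M N B := by
  obtain ⟨k, rfl⟩ := exists_addOrderOf_eq hN
  rw [cycDvd_addOrderOf_iff, cycDvd_addOrderOf_iff]
  exact charSum_eq_zero_or htile fun hk => hN1 (AddMonoid.addOrderOf_eq_one_iff.2 hk)

lemma charSum_image_unit_mul (r : (ZMod M)ˣ) (k : ZMod M) :
    charSum (A.image ((r : ZMod M) * ·)) k = charSum A (r * k) := by
  rw [charSum, charSum, Finset.sum_image r.isUnit.mul_right_injective.injOn]
  exact Finset.sum_congr rfl fun a _ => congrArg _ (by ring)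

/-- Sands' replacement principle: whether `A ⊕ B` is a tiling depends only on the zeros of the two
character sums, and those are invariant under multiplication by units. -/
lemma isTiling_image_unit_mul (htile : IsTiling M (A : Set (ZMod M)) (B : Set (ZMod M)))
    (r : (ZMod M)ˣ) :
    IsTiling M (A.image ((r : ZMod M) * ·) : Set (ZMod M)) (B : Set (ZMod M)) := by
  rw [isTiling_iff_charSum_mul_charSum]
  intro k
  rw [charSum_image_unit_mul]
  by_cases hk : k = 0
  · rw [← isTiling_iff_charSum_mul_charSum.1 htile, hk, mul_zero]
  · rw [if_neg hk, mul_eq_zero, charSum_unit_mul_eq_zero]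
    exact charSum_eq_zero_or htile hk

lemma eq_of_associated_sub (htile : IsTiling M (A : Set (ZMod M)) (B : Set (ZMod M)))
    {a a' b b' : ZMod M} (ha : a ∈ A) (ha' : a' ∈ A) (hb : b ∈ B) (hb' : b' ∈ B)
    (hassoc : Associated (a - a') (b - b')) : b = b' := by
  obtain ⟨r, hr⟩ := hassoc
  have hmem : ∀ c ∈ A, (r : ZMod M) * c ∈ A.image ((r : ZMod M) * ·) :=
    fun c hc => Finset.mem_image_of_mem _ hc
  have huniq := (isTiling_image_unit_mul htile r (r * a + b')).unique
    (y₁ := (r * a', b)) (y₂ := (r * a, b')) ⟨hmem _ ha', hb, by linear_combination -hr⟩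
    ⟨hmem _ ha, hb', rfl⟩
  exact congrArg Prod.snd huniq

lemma dft_fwdDiff (d : ZMod M) (f : ZMod M → ℂ) (k : ZMod M) :
    𝓕 (Δ_[d] f) k = (stdAddChar (d * k) - 1) * 𝓕 f k := by
  have hshift : ∑ x : ZMod M, (stdAddChar (-(x * k)) : ℂ) • f (x + d) =
      stdAddChar (d * k) * ∑ x : ZMod M, (stdAddChar (-(x * k)) : ℂ) • f x := by
    rw [Finset.mul_sum]
    refine Fintype.sum_equiv (Equiv.addRight d) _ _ fun x => ?_
    rw [Equiv.coe_addRight, smul_eq_mul, smul_eq_mul, ← mul_assoc, ← AddChar.map_add_eq_mul]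
    congr 2
    ring
  simp only [dft_apply, fwdDiff, smul_sub, Finset.sum_sub_distrib]
  rw [hshift]
  ring

lemma dft_foldr_fwdDiff (l : List (ZMod M)) (f : ZMod M → ℂ) (k : ZMod M) :
    𝓕 (l.foldr fwdDiff f) k = (l.map fun d => (stdAddChar (d * k) - 1 : ℂ)).prod * 𝓕 f k := by
  induction l with
  | nil => rw [List.foldr_nil, List.map_nil, List.prod_nil, one_mul]
  | cons d l ih => rw [List.foldr_cons, dft_fwdDiff, ih, List.map_cons, List.prod_cons, mul_assoc]

lemma dft_cosetCount_eq_zero {k : ZMod M} (hA : charSum A (-k) = 0) (N : Ideal (ZMod M)) :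
    𝓕 (fun x => (cosetCount A N x : ℂ)) k = 0 := by
  classical
  have hdft : 𝓕 (fun x => (cosetCount A N x : ℂ)) k =
      charSum A (-k) * ∑ y, if y ∈ N then (stdAddChar (y * k) : ℂ) else 0 := by
    rw [charSum, Finset.sum_mul, dft_apply]
    simp only [cosetCount, Finset.card_filter, smul_eq_mul, Nat.cast_sum]
    simp only [Finset.mul_sum (s := A)]
    rw [Finset.sum_comm]
    refine Finset.sum_congr rfl fun a _ => ?_
    rw [Finset.mul_sum]
    refine Fintype.sum_equiv (Equiv.subLeft a) _ _ fun x => ?_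
    simp only [Equiv.subLeft_apply, Nat.cast_ite, Nat.cast_one, Nat.cast_zero, mul_ite, mul_one,
      mul_zero]
    rw [← AddChar.map_add_eq_mul]
    congr 2
    ring
  rw [hdft, hA, zero_mul]

lemma dft_cosetCount_eq_zero_of_mul_ne_zero {k n : ZMod M} {N : Ideal (ZMod M)} (hn : n ∈ N)
    (hnk : n * k ≠ 0) : 𝓕 (fun x => (cosetCount A N x : ℂ)) k = 0 := by
  have hdiff : Δ_[n] (fun x => (cosetCount A N x : ℂ)) = 0 := by
    funext x
    rw [fwdDiff, cosetCount_add_of_mem hn, sub_self, Pi.zero_apply]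
  have hdft := dft_fwdDiff n (fun x => (cosetCount A N x : ℂ)) k
  rw [hdiff, map_zero, Pi.zero_apply, eq_comm, mul_eq_zero, sub_eq_zero,
    ← AddChar.map_zero_eq_one (stdAddChar (N := M))] at hdft
  exact hdft.resolve_left fun e => hnk (injective_stdAddChar e)

lemma intCast_foldr_fwdDiff {G : Type*} [AddCommGroup G] (l : List G) (f : G → ℤ) (x : G) :
    ((l.foldr fwdDiff f x : ℤ) : ℂ) = l.foldr fwdDiff (fun v => (f v : ℂ)) x := by
  induction l generalizing x with
  | nil => rfl
  | cons d l ih =>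
    simp only [List.foldr_cons, fwdDiff, Int.cast_sub, ih]

/-- The vanishing of the evaluations of `A` on `N`-cuboids. The Fourier transform of the counting
function is supported on the `k` with `N * k = 0`; there either `k` has order exactly `N`, where
`Φ_N ∣ A` applies, or `N / p * k = 0` for some prime `p ∣ N`, and a difference kills the term. -/
theorem foldr_fwdDiff_cosetCount_eq_zero {N : ℕ} (hN : 0 < N) (hA : cycDvd M N A)
    {l : List (ZMod M)}
    (hl : ∀ p, p.Prime → p ∣ N → ∃ d ∈ l, d ∈ Ideal.span {((N / p : ℕ) : ZMod M)}) :
    l.foldr fwdDiff (fun v => (cosetCount A (Ideal.span {(N : ZMod M)}) v : ℤ)) = 0 := by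
  suffices hC : l.foldr fwdDiff (fun v => (cosetCount A (Ideal.span {(N : ZMod M)}) v : ℂ)) = 0 by
    funext x
    have hx := intCast_foldr_fwdDiff l (fun v => (cosetCount A (Ideal.span {(N : ZMod M)}) v : ℤ)) x
    simp only [Int.cast_natCast] at hx
    rw [hC, Pi.zero_apply, Int.cast_eq_zero] at hx
    exact hx
  refine dft.injective ((map_zero (dft (N := M) (E := ℂ))).symm ▸ funext fun k => ?_)
  rw [dft_foldr_fwdDiff, Pi.zero_apply, mul_eq_zero]
  by_cases hNk : (N : ZMod M) * k = 0
  swap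
  · exact Or.inr (dft_cosetCount_eq_zero_of_mul_ne_zero (Ideal.mem_span_singleton_self _) hNk)
  rw [← nsmul_eq_mul] at hNk
  by_cases hord : ∀ p, p.Prime → p ∣ N → (N / p) • k ≠ 0
  · refine Or.inr (dft_cosetCount_eq_zero (cycDvd_addOrderOf_iff.1 ?_) _)
    rwa [addOrderOf_neg, addOrderOf_eq_of_nsmul_and_div_prime_nsmul hN hNk hord]
  · push Not at hord
    obtain ⟨p, hp, hpN, hpk⟩ := hord
    obtain ⟨d, hdl, hd⟩ := hl p hp hpN
    obtain ⟨c, rfl⟩ := Ideal.mem_span_singleton.1 hd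
    refine Or.inl (List.prod_eq_zero_iff.2 (List.mem_map.2 ⟨_, hdl, ?_⟩))
    rw [mul_right_comm, ← nsmul_eq_mul, hpk, zero_mul, AddChar.map_zero_eq_one, sub_self]

end Fourier

section PrimePower

variable {p n m v : ℕ}

/-- The ideal of the multiples of `p ^ m` in `ZMod (p ^ n)`. -/
abbrev powIdeal (p n m : ℕ) : Ideal (ZMod (p ^ n)) := Ideal.span {(p : ZMod (p ^ n)) ^ m}

lemma natCast_pow_self (p n : ℕ) : (p : ZMod (p ^ n)) ^ n = 0 := by
  rw [← Nat.cast_pow, ZMod.natCast_self]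

lemma powIdeal_self (p n : ℕ) : powIdeal p n n = ⊥ := by
  rw [Ideal.span_singleton_eq_bot, natCast_pow_self]

lemma powIdeal_zero (p n : ℕ) : powIdeal p n 0 = ⊤ := by
  rw [powIdeal, pow_zero, Ideal.span_singleton_one]

lemma pow_dvd_pow_iff_of_le (hp : p.Prime) (hm : m ≤ n) :
    (p : ZMod (p ^ n)) ^ m ∣ (p : ZMod (p ^ n)) ^ v ↔ m ≤ v := by
  refine ⟨fun h => ?_, pow_dvd_pow _⟩
  have h0 : (p : ZMod (p ^ n)) ^ (v + (n - m)) = 0 := by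
    have hdvd := mul_dvd_mul_right h ((p : ZMod (p ^ n)) ^ (n - m))
    rwa [← pow_add, ← pow_add, Nat.add_sub_cancel' hm, natCast_pow_self, zero_dvd_iff] at hdvd
  rw [← Nat.cast_pow, ZMod.natCast_eq_zero_iff, Nat.pow_dvd_pow_iff_le_right hp.one_lt] at h0
  omega

lemma exists_associated_pow (hp : p.Prime) (x : ZMod (p ^ n)) :
    ∃ v ≤ n, Associated ((p : ZMod (p ^ n)) ^ v) x := by
  obtain ⟨d, hd, u, hu, rfl⟩ := ZMod.eq_unit_mul_divisor x
  obtain ⟨v, hv, rfl⟩ := (Nat.dvd_prime_pow hp).1 hd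
  rw [Nat.cast_pow]
  exact ⟨v, hv, (associated_isUnit_mul_left_iff hu).2 (Associated.refl _) |>.symm⟩

lemma associated_of_pow_dvd_iff (hp : p.Prime) {x y : ZMod (p ^ n)}
    (h : ∀ m ≤ n, (p : ZMod (p ^ n)) ^ m ∣ x ↔ (p : ZMod (p ^ n)) ^ m ∣ y) : Associated x y := by
  obtain ⟨v, hv, hvx⟩ := exists_associated_pow hp x
  obtain ⟨w, hw, hwy⟩ := exists_associated_pow hp y
  have hvw : v = w := le_antisymm
    ((pow_dvd_pow_iff_of_le hp hv).1 (hwy.dvd_iff_dvd_right.2 ((h v hv).1 hvx.dvd)))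
    ((pow_dvd_pow_iff_of_le hp hw).1 (hvx.dvd_iff_dvd_right.2 ((h w hw).2 hwy.dvd)))
  subst hvw
  exact hvx.symm.trans hwy

lemma card_powIdeal (hp : p.Prime) (hm : m ≤ n) : Nat.card (powIdeal p n m) = p ^ (n - m) := by
  have hgen : (powIdeal p n m).toAddSubgroup
      = AddSubgroup.zmultiples (((p ^ m : ℕ) : ZMod (p ^ n))) := by
    ext x
    rw [Submodule.mem_toAddSubgroup, Ideal.mem_span_singleton', AddSubgroup.mem_zmultiples_iff,
      (ZMod.intCast_surjective (n := p ^ n)).exists]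
    simp only [zsmul_eq_mul, Nat.cast_pow]
  change Nat.card (powIdeal p n m).toAddSubgroup = _
  rw [hgen, Nat.card_zmultiples, ZMod.addOrderOf_coe _ (pow_ne_zero _ hp.ne_zero),
    Nat.gcd_eq_right (pow_dvd_pow _ hm), Nat.pow_div hm hp.pos]

lemma isFiberIdeal_powIdeal (hp : p.Prime) (n : ℕ) :
    IsFiberIdeal (powIdeal p (n + 1) n) p where
  card_eq := by rw [card_powIdeal hp (n.le_add_right 1), Nat.add_sub_cancel_left, pow_one]
  associated_of_mem {x y} hx hy hx0 hy0 := by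
    rw [Ideal.mem_span_singleton] at hx hy
    refine associated_of_pow_dvd_iff hp fun m hm => ?_
    rcases Nat.le_succ_iff.1 hm with hm | rfl
    · exact iff_of_true ((pow_dvd_pow _ hm).trans hx) ((pow_dvd_pow _ hm).trans hy)
    · rw [natCast_pow_self, zero_dvd_iff, zero_dvd_iff]
      exact iff_of_false hx0 hy0
  associated_of_add_mem {x y} hx hxy := by
    rw [Ideal.mem_span_singleton] at hx hxy
    refine associated_of_pow_dvd_iff hp fun m hm => ?_
    rcases Nat.le_succ_iff.1 hm with hm | rfl
    · have hdvd := (pow_dvd_pow (p : ZMod (p ^ (n + 1))) hm).trans hxy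
      exact ⟨fun h => (dvd_add_right h).1 hdvd, fun h => (dvd_add_left h).1 hdvd⟩
    · have hle := pow_dvd_pow (p : ZMod (p ^ (n + 1))) n.le_succ
      exact iff_of_false (fun h => hx (hle.trans h))
        (fun h => hx ((dvd_add_left (hle.trans h)).1 hxy))

lemma isSquareFiberIdeal_powIdeal (hp : p.Prime) : IsSquareFiberIdeal (powIdeal p 2 1) p where
  toIsFiberIdeal := isFiberIdeal_powIdeal hp 1
  associated_of_notMem {x y} hx hy := by
    rw [Ideal.mem_span_singleton] at hx hy
    refine associated_of_pow_dvd_iff hp fun m _ => ?_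
    rcases m.eq_zero_or_pos with rfl | hm
    · simp only [pow_zero, one_dvd]
    · have hle := pow_dvd_pow (p : ZMod (p ^ 2)) hm
      exact iff_of_false (fun h => hx (hle.trans h)) (fun h => hy (hle.trans h))
  card_quotient := by
    have hcard := Submodule.card_eq_card_quotient_mul_card (powIdeal p 2 1)
    rw [card_powIdeal hp one_le_two, Nat.card_zmod] at hcard
    exact Nat.eq_of_mul_eq_mul_left (pow_pos hp.pos (2 - 1)) (hcard.symm.trans (pow_succ p 1))

end PrimePower

section Transport

variable {R R' : Type*} [CommRing R] [CommRing R']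

/-- The set `S` in the coordinates given by a ring isomorphism `e`, translated so that the base
point `c` becomes the origin. -/
def coordSet (e : R ≃+* R') (c : R) (S : Finset R) : Finset R' :=
  S.map ((Equiv.subRight c).trans e.toEquiv).toEmbedding

lemma mem_coordSet {e : R ≃+* R'} {c : R} {S : Finset R} {v : R'} :
    v ∈ coordSet e c S ↔ e.symm v + c ∈ S := by
  rw [coordSet, mem_map_equiv]
  rfl

lemma origin_mem_coordSet {e : R ≃+* R'} {c : R} {S : Finset R} :
    0 ∈ coordSet e c S ↔ c ∈ S := by
  rw [mem_coordSet, map_zero, zero_add]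

lemma add_mem_coordSet_iff {e : R ≃+* R'} {c c' : R} {S : Finset R} {v : R'} :
    v + e (c' - c) ∈ coordSet e c S ↔ v ∈ coordSet e c' S := by
  rw [mem_coordSet, mem_coordSet, map_add, RingEquiv.symm_apply_apply, add_assoc, sub_add_cancel]

lemma card_coordSet (e : R ≃+* R') (c : R) (S : Finset R) : #(coordSet e c S) = #S :=
  card_map _

lemma cosetCount_coordSet (e : R ≃+* R') (c : R) (S : Finset R) (N : Ideal R) (v : R') :
    cosetCount (coordSet e c S) (N.comap e.symm) v = cosetCount S N (e.symm v + c) := by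
  classical
  rw [cosetCount, coordSet, filter_map, card_map, cosetCount]
  refine congrArg card (filter_congr fun a _ => ?_)
  simp only [Function.comp_apply, Equiv.coe_toEmbedding, Equiv.trans_apply, Equiv.subRight_apply,
    RingEquiv.toEquiv_eq_coe, RingEquiv.coe_toEquiv, Ideal.mem_comap, map_sub,
    RingEquiv.symm_apply_apply, sub_sub, add_comm c]

lemma foldr_fwdDiff_comp {G H E : Type*} [AddCommGroup G] [AddCommGroup H] [AddCommGroup E]
    (g : G →+ H) (c : H) (f : H → E) (l : List G) (v : G) :
    l.foldr fwdDiff (fun w => f (g w + c)) v = (l.map g).foldr fwdDiff f (g v + c) := by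
  induction l generalizing v with
  | nil => rfl
  | cons d l ih =>
    simp only [List.foldr_cons, List.map_cons, fwdDiff, ih, map_add, add_right_comm]

lemma comap_symm_span_natCast (e : R ≃+* R') (N : ℕ) :
    (Ideal.span {(N : R)}).comap e.symm = Ideal.span {(N : R')} := by
  rw [Ideal.comap_symm, Ideal.map_span, Set.image_singleton, map_natCast]

lemma symm_mem_span_natCast {e : R ≃+* R'} {N : ℕ} {v : R'} :
    e.symm v ∈ Ideal.span {(N : R)} ↔ v ∈ Ideal.span {(N : R')} := by
  rw [← comap_symm_span_natCast e, Ideal.mem_comap]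

variable {M N : ℕ} {A B : Finset (ZMod M)} {c : ZMod M}

lemma exists_add_eq_coordSet (htile : IsTiling M (A : Set (ZMod M)) (B : Set (ZMod M)))
    (e : ZMod M ≃+* R) (c c' : ZMod M) (v : R) :
    ∃ a ∈ coordSet e c A, ∃ b ∈ coordSet e c' B, a + b = v := by
  obtain ⟨⟨a, b⟩, ⟨ha, hb, hab⟩, -⟩ := htile (e.symm v + c + c')
  refine ⟨e (a - c), ?_, e (b - c'), ?_, ?_⟩
  · rwa [mem_coordSet, RingEquiv.symm_apply_apply, sub_add_cancel]
  · rwa [mem_coordSet, RingEquiv.symm_apply_apply, sub_add_cancel]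
  · rw [← map_add, ← RingEquiv.eq_symm_apply]
    linear_combination hab

lemma mem_coordSet_of_fibered {e : ZMod M ≃+* R} {p : ℕ}
    (hf : Fibered M p ((A : Set (ZMod M)) ∩ gridSet M c N)) {v w : R} (hv : v ∈ coordSet e c A)
    (hvN : v ∈ Ideal.span {(N : R)}) (hw : w - v ∈ Ideal.span {((M / p : ℕ) : R)}) :
    w ∈ coordSet e c A := by
  rw [mem_coordSet] at hv ⊢
  rw [← symm_mem_span_natCast (e := e), Ideal.mem_span_singleton] at hvN hw
  refine (hf _ ⟨hv, ?_⟩ ?_).1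
  · rwa [gridSet, Set.mem_ofPred_eq, add_sub_cancel_right]
  · rwa [gridSet, Set.mem_ofPred_eq, add_sub_add_right_eq_sub, ← map_sub]

variable [NeZero M]

lemma foldr_fwdDiff_cosetCount_coordSet_eq_zero (e : ZMod M ≃+* R) (c : ZMod M) (hN : 0 < N)
    (hA : cycDvd M N A) {l : List R}
    (hl : ∀ p, p.Prime → p ∣ N → ∃ d ∈ l, d ∈ Ideal.span {((N / p : ℕ) : R)}) :
    l.foldr fwdDiff (fun v => (cosetCount (coordSet e c A) (Ideal.span {(N : R)}) v : ℤ)) = 0 := by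
  funext v
  simp only [← comap_symm_span_natCast e, cosetCount_coordSet]
  refine (foldr_fwdDiff_comp (e.symm : R →+ ZMod M) c
    (fun w => (cosetCount A (Ideal.span {(N : ZMod M)}) w : ℤ)) l v).trans ?_
  refine congrFun (foldr_fwdDiff_cosetCount_eq_zero hN hA fun p hp hpN => ?_) _
  obtain ⟨d, hdl, hd⟩ := hl p hp hpN
  exact ⟨e.symm d, List.mem_map_of_mem hdl, symm_mem_span_natCast.2 hd⟩

lemma eq_of_associated_sub_coordSet (htile : IsTiling M (A : Set (ZMod M)) (B : Set (ZMod M)))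
    {e : ZMod M ≃+* R} {c c' : ZMod M} {a a' b b' : R} (ha : a ∈ coordSet e c A)
    (ha' : a' ∈ coordSet e c A) (hb : b ∈ coordSet e c' B) (hb' : b' ∈ coordSet e c' B)
    (hassoc : Associated (a - a') (b - b')) : b = b' := by
  rw [mem_coordSet] at ha ha' hb hb'
  refine e.symm.injective (add_right_cancel (eq_of_associated_sub htile ha ha' hb hb' ?_))
  rw [add_sub_add_right_eq_sub, add_sub_add_right_eq_sub, ← map_sub, ← map_sub]
  exact hassoc.map e.symm

end Transport

section Gcd

variable {M N q q' : ℕ}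

lemma gcd_mul_mul_eq_left (hq : q.Prime) (hq' : q'.Prime) (hN0 : 0 < N) {x : ℕ} (hN : N ∣ x)
    (hNq : ¬ N * q ∣ x) (hNq' : ¬ N * q' ∣ x) : Nat.gcd x (N * q * q') = N := by
  obtain ⟨t, rfl⟩ := hN
  rw [Nat.mul_dvd_mul_iff_left hN0] at hNq hNq'
  have hcop : t.Coprime (q * q') := ((hq.coprime_iff_not_dvd.2 hNq).mul_left
    (hq'.coprime_iff_not_dvd.2 hNq')).symm
  rw [mul_assoc, Nat.gcd_mul_left, hcop, mul_one]

lemma natCast_dvd_iff_dvd_val [NeZero M] (hN : N ∣ M) (x : ZMod M) :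
    (N : ZMod M) ∣ x ↔ N ∣ x.val := by
  constructor
  · rintro ⟨c, rfl⟩
    rw [ZMod.val_mul, Nat.dvd_mod_iff hN, ZMod.val_natCast]
    exact ((Nat.dvd_mod_iff hN).2 dvd_rfl).mul_right _
  · intro h
    rw [← ZMod.natCast_zmod_val x]
    exact Nat.cast_dvd_cast h

lemma gcd_val_eq_of_dvd [NeZero M] (hM : M = N * q * q') (hq : q.Prime) (hq' : q'.Prime)
    {x : ZMod M} (hN : (N : ZMod M) ∣ x) (hNq : ¬ ((N * q : ℕ) : ZMod M) ∣ x)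
    (hNq' : ¬ ((N * q' : ℕ) : ZMod M) ∣ x) : Nat.gcd x.val M = N := by
  have hdvd : N * q ∣ M := ⟨q', hM⟩
  have hdvd' : N * q' ∣ M := ⟨q, by rw [hM, mul_right_comm]⟩
  have hN0 : 0 < N := Nat.pos_of_ne_zero fun h0 => NeZero.ne M (by rw [hM, h0, zero_mul, zero_mul])
  rw [natCast_dvd_iff_dvd_val hdvd] at hNq
  rw [natCast_dvd_iff_dvd_val hdvd'] at hNq'
  rw [natCast_dvd_iff_dvd_val (dvd_of_mul_right_dvd hdvd)] at hN
  have hgcd := gcd_mul_mul_eq_left hq hq' hN0 hN hNq hNq'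
  rwa [← hM] at hgcd

end Gcd

section PrimePowerProduct

variable {pi pj pk : ℕ}

lemma span_natCast_eq_powIdeal {p m c N : ℕ} (hN : N = p ^ m * c) (hc : c.Coprime p) (n : ℕ) :
    Ideal.span {(N : ZMod (p ^ n))} = powIdeal p n m := by
  rw [hN, Nat.cast_mul, Nat.cast_pow]
  exact Ideal.span_singleton_mul_right_unit ((ZMod.isUnit_iff_coprime _ _).2 (hc.pow_right n)) _

lemma nonempty_zmod_equiv_prod (hpi : pi.Prime) (hpj : pj.Prime) (hpk : pk.Prime) (hij : pi ≠ pj)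
    (hik : pi ≠ pk) (hjk : pj ≠ pk) (a b c : ℕ) :
    Nonempty (ZMod (pi ^ a * pj ^ b * pk ^ c) ≃+*
      ZMod (pi ^ a) × ZMod (pj ^ b) × ZMod (pk ^ c)) := by
  have hcop : (pi ^ a).Coprime (pj ^ b * pk ^ c) :=
    (Nat.coprime_pow_primes _ _ hpi hpj hij).mul_right (Nat.coprime_pow_primes _ _ hpi hpk hik)
  have hcop' : (pj ^ b).Coprime (pk ^ c) := Nat.coprime_pow_primes _ _ hpj hpk hjk
  exact ⟨(ZMod.ringEquivCongr (mul_assoc _ _ _)).trans ((ZMod.chineseRemainder hcop).trans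
    ((RingEquiv.refl _).prodCongr (ZMod.chineseRemainder hcop')))⟩

lemma span_natCast_eq_prod (hpi : pi.Prime) (hpj : pj.Prime) (hpk : pk.Prime) (hij : pi ≠ pj)
    (hik : pi ≠ pk) (hjk : pj ≠ pk) (a b c α β γ : ℕ) :
    Ideal.span {((pi ^ α * pj ^ β * pk ^ γ : ℕ) : ZMod (pi ^ a) × ZMod (pj ^ b) × ZMod (pk ^ c))} =
      (powIdeal pi a α).prod ((powIdeal pj b β).prod (powIdeal pk c γ)) := by
  have hij := (Nat.coprime_primes hpi hpj).2 hij
  have hik := (Nat.coprime_primes hpi hpk).2 hik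
  have hjk := (Nat.coprime_primes hpj hpk).2 hjk
  rw [← span_natCast_eq_powIdeal (mul_assoc _ _ _)
      ((hij.symm.pow_left β).mul_left (hik.symm.pow_left γ)) a,
    ← span_natCast_eq_powIdeal (N := pi ^ α * pj ^ β * pk ^ γ) (c := pi ^ α * pk ^ γ) (by ring)
      ((hij.pow_left α).mul_left (hjk.symm.pow_left γ)) b,
    ← span_natCast_eq_powIdeal (mul_comm _ _) ((hik.pow_left α).mul_left (hjk.pow_left β)) c,
    ← Ideal.span_prod (by simp only [Set.singleton_nonempty]), Set.singleton_prod_singleton,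
    ← Ideal.span_prod (by simp only [Set.singleton_nonempty]), Set.singleton_prod_singleton]
  rfl

lemma pow_mul_div_eq {p α m : ℕ} (hp : p.Prime) (hα : α ≠ 0) :
    p ^ α * m / p = p ^ (α - 1) * m := by
  obtain ⟨β, rfl⟩ := Nat.exists_eq_succ_of_ne_zero hα
  rw [Nat.succ_sub_one, pow_succ', mul_assoc, Nat.mul_div_cancel_left _ hp.pos]

lemma foldr_fwdDiff_cosetCount_prod_eq_zero (hpi : pi.Prime) (hpj : pj.Prime) (hpk : pk.Prime)
    (hij : pi ≠ pj) (hik : pi ≠ pk) (hjk : pj ≠ pk) {M a b c α β γ : ℕ} [NeZero M]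
    {A : Finset (ZMod M)} (hA : cycDvd M (pi ^ α * pj ^ β * pk ^ γ) A)
    (e : ZMod M ≃+* ZMod (pi ^ a) × ZMod (pj ^ b) × ZMod (pk ^ c)) (w : ZMod M)
    {l : List (ZMod (pi ^ a) × ZMod (pj ^ b) × ZMod (pk ^ c))}
    (hi : α ≠ 0 → ∃ d ∈ l,
      d ∈ (powIdeal pi a (α - 1)).prod ((powIdeal pj b β).prod (powIdeal pk c γ)))
    (hj : β ≠ 0 → ∃ d ∈ l,
      d ∈ (powIdeal pi a α).prod ((powIdeal pj b (β - 1)).prod (powIdeal pk c γ)))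
    (hk : γ ≠ 0 → ∃ d ∈ l,
      d ∈ (powIdeal pi a α).prod ((powIdeal pj b β).prod (powIdeal pk c (γ - 1)))) :
    l.foldr fwdDiff (fun v => (cosetCount (coordSet e w A)
      ((powIdeal pi a α).prod ((powIdeal pj b β).prod (powIdeal pk c γ))) v : ℤ)) = 0 := by
  simp only [← span_natCast_eq_prod hpi hpj hpk hij hik hjk] at hi hj hk ⊢
  have hpos : 0 < pi ^ α * pj ^ β * pk ^ γ :=
    Nat.mul_pos (Nat.mul_pos (pow_pos hpi.pos _) (pow_pos hpj.pos _)) (pow_pos hpk.pos _)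
  have eq_of_dvd : ∀ {p q m : ℕ}, p.Prime → q.Prime → p ∣ q ^ m → p = q ∧ m ≠ 0 := by
    rintro p q m hp hq hdvd
    refine ⟨(Nat.prime_dvd_prime_iff_eq hp hq).1 (hp.dvd_of_dvd_pow hdvd), ?_⟩
    rintro rfl
    exact hp.not_dvd_one hdvd
  refine foldr_fwdDiff_cosetCount_coordSet_eq_zero e w hpos hA fun p hp hdvd => ?_
  rcases hp.dvd_mul.1 hdvd with hdvd | hdvd
  · rcases hp.dvd_mul.1 hdvd with hdvd | hdvd
    · obtain ⟨rfl, hα⟩ := eq_of_dvd hp hpi hdvd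
      rw [mul_assoc, pow_mul_div_eq hp hα, ← mul_assoc]
      exact hi hα
    · obtain ⟨rfl, hβ⟩ := eq_of_dvd hp hpj hdvd
      rw [mul_right_comm, mul_comm, pow_mul_div_eq hp hβ, mul_comm, mul_right_comm]
      exact hj hβ
  · obtain ⟨rfl, hγ⟩ := eq_of_dvd hp hpk hdvd
    rw [mul_comm, pow_mul_div_eq hp hγ, mul_comm]
    exact hk hγ

end PrimePowerProduct

section Corner

open scoped fwdDiff

variable {I J K : Type*} [CommRing I] [CommRing J] [CommRing K]

lemma exists_ne_zero_ne_zero_ne_of_two_lt_card {G : Type*} [AddGroup G] (h : 2 < Nat.card G) :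
    ∃ a b : G, a ≠ 0 ∧ b ≠ 0 ∧ a ≠ b := by
  have : Finite G := Nat.finite_of_card_ne_zero (by omega)
  have : Fintype G := Fintype.ofFinite G
  rw [Nat.card_eq_fintype_card, Fintype.two_lt_card_iff] at h
  obtain ⟨a, b, c, hab, hac, hbc⟩ := h
  exact ⟨a - c, b - c, sub_ne_zero.2 hac, sub_ne_zero.2 hbc, fun e => hab (sub_left_inj.1 e)⟩

lemma card_dvd_ncard_of_add_mem {G : Type*} [AddGroup G] (F : AddSubgroup G) {T : Set G}
    (hT : ∀ x ∈ T, ∀ t ∈ F, x + t ∈ T) : Nat.card F ∣ T.ncard := by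
  have hpre : QuotientAddGroup.mk ⁻¹' ((QuotientAddGroup.mk : G → G ⧸ F) '' T) = T := by
    refine Set.Subset.antisymm ?_ (Set.subset_preimage_image _ _)
    rintro x ⟨x', hx', e⟩
    simpa using hT x' hx' _ (QuotientAddGroup.eq.1 e)
  rw [← hpre, ← Nat.card_coe_set_eq,
    Nat.card_congr (QuotientAddGroup.preimageMkEquivAddSubgroupProdSet F _), Nat.card_prod]
  exact dvd_mul_right _ _

/-- The fiber through the origin in the second direction. -/
abbrev jFiber (F : Ideal J) : Ideal (I × J × K) := (⊥ : Ideal I).prod (F.prod ⊥)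

/-- The fiber through the origin in the third direction. -/
abbrev kFiber (F : Ideal K) : Ideal (I × J × K) := (⊥ : Ideal I).prod ((⊥ : Ideal J).prod F)

lemma sub_mem_jFiber {F : Ideal J} {x x' : I} {y y' : J} {z z' : K} :
    (x', y', z') - (x, y, z) ∈ jFiber F ↔ x' = x ∧ y' - y ∈ F ∧ z' = z := by
  simp only [Prod.mk_sub_mk, Ideal.mem_prod, Ideal.mem_bot, sub_eq_zero]

lemma sub_mem_kFiber {F : Ideal K} {x x' : I} {y y' : J} {z z' : K} :
    (x', y', z') - (x, y, z) ∈ kFiber F ↔ x' = x ∧ y' = y ∧ z' - z ∈ F := by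
  simp only [Prod.mk_sub_mk, Ideal.mem_prod, Ideal.mem_bot, sub_eq_zero]

lemma card_jFiber (F : Ideal J) : Nat.card (jFiber F : Ideal (I × J × K)) = Nat.card F := by
  refine Nat.card_congr ⟨fun v => ⟨v.1.2.1, v.2.2.1⟩, fun y => ⟨(0, y, 0), rfl, y.2, rfl⟩, ?_,
    fun _ => rfl⟩
  rintro ⟨⟨x, y, z⟩, hx : x = 0, hy, hz : z = 0⟩
  subst hx hz
  rfl

lemma cosetCount_jFiber_pos {S : Finset (I × J × K)} {F : Ideal J} {x : I} {y : J} {z : K} :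
    0 < cosetCount S (jFiber F) (x, y, z) ↔ ∃ y', y' - y ∈ F ∧ (x, y', z) ∈ S := by
  rw [cosetCount_pos]
  constructor
  · rintro ⟨⟨x', y', z'⟩, hS, hsub⟩
    obtain ⟨rfl, hy, rfl⟩ := sub_mem_jFiber.1 hsub
    exact ⟨y', hy, hS⟩
  · rintro ⟨y', hy, hS⟩
    exact ⟨_, hS, sub_mem_jFiber.2 ⟨rfl, hy, rfl⟩⟩

lemma card_kFiber (F : Ideal K) : Nat.card (kFiber F : Ideal (I × J × K)) = Nat.card F := by
  refine Nat.card_congr ⟨fun v => ⟨v.1.2.2, v.2.2.2⟩, fun z => ⟨(0, 0, z), rfl, rfl, z.2⟩, ?_,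
    fun _ => rfl⟩
  rintro ⟨⟨x, y, z⟩, hx : x = 0, hy : y = 0, hz⟩
  subst hx hy
  rfl

/-- The union of the columns `{(0, y, z) | y}` over the `z ∈ F`. -/
abbrev columns (F : Ideal K) : Ideal (I × J × K) := (⊥ : Ideal I).prod ((⊤ : Ideal J).prod F)

lemma sub_mem_columns {F : Ideal K} {x x' : I} {y y' : J} {z z' : K} :
    (x', y', z') - (x, y, z) ∈ columns F ↔ x' = x ∧ z' - z ∈ F := by
  simp only [Prod.mk_sub_mk, Ideal.mem_prod, Ideal.mem_bot, sub_eq_zero, Submodule.mem_top,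
    true_and]

lemma columns_mono {F F' : Ideal K} (h : F ≤ F') :
    (columns F : Ideal (I × J × K)) ≤ columns F' := fun _ hv => ⟨hv.1, hv.2.1, h hv.2.2⟩

lemma card_columns (F : Ideal K) :
    Nat.card (columns F : Ideal (I × J × K)) = Nat.card J * Nat.card F := by
  rw [← Nat.card_prod]
  refine Nat.card_congr ⟨fun v => ⟨v.1.2.1, v.1.2.2, v.2.2.2⟩,
    fun w => ⟨(0, w.1, w.2), rfl, trivial, w.2.2⟩, ?_, fun _ => rfl⟩
  rintro ⟨⟨x, y, z⟩, hx : x = 0, -⟩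
  subst hx
  rfl

lemma cosetCount_columns_pos {S : Finset (I × J × K)} {F : Ideal K} {x : I} {y : J} {z : K} :
    0 < cosetCount S (columns F) (x, y, z) ↔ ∃ y' z', (x, y', z') ∈ S ∧ z' - z ∈ F := by
  rw [cosetCount_pos]
  constructor
  · rintro ⟨⟨x', y', z'⟩, hS, hsub⟩
    obtain ⟨rfl, hz⟩ := sub_mem_columns.1 hsub
    exact ⟨y', z', hS, hz⟩
  · rintro ⟨y', z', hS, hz⟩
    exact ⟨_, hS, sub_mem_columns.2 ⟨rfl, hz⟩⟩

lemma cosetCount_columns_eq (S : Finset (I × J × K)) (F : Ideal K) (x : I) (y y' : J) (z : K) :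
    cosetCount S (columns F) (x, y, z) = cosetCount S (columns F) (x, y', z) :=
  le_antisymm (cosetCount_le_cosetCount fun _ _ ha => sub_mem_columns.2 (sub_mem_columns.1 ha))
    (cosetCount_le_cosetCount fun _ _ ha => sub_mem_columns.2 (sub_mem_columns.1 ha))

lemma card_mul_le_cosetCount_columns [Finite I] [Finite J] [Finite K] {S : Finset (I × J × K)}
    {F F' : Ideal K} (hF : F ≤ F') {x : I} {y : J} {z : K} {n : ℕ}
    (hn : ∀ t ∈ F', n ≤ cosetCount S (columns F) (x, y, z + t)) :
    Nat.card F' * n ≤ Nat.card F * cosetCount S (columns F') (x, y, z) := by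
  have hle := card_mul_le_card_mul_cosetCount (S := S) (x := (x, y, z)) (columns_mono hF) (n := n)
    (by
      rintro ⟨x', y', t⟩ ⟨hx : x' = 0, -, ht⟩
      subst hx
      rw [Prod.mk_add_mk, Prod.mk_add_mk, add_zero, cosetCount_columns_eq _ _ _ _ y]
      exact hn t ht)
  rw [card_columns, card_columns, mul_assoc, mul_assoc] at hle
  exact Nat.le_of_mul_le_mul_left hle Nat.card_pos

lemma cosetCount_columns_lt [Finite I] [Finite J] [Finite K] {S : Finset (I × J × K)}
    {F F' : Ideal K} (hF : F ≤ F') {x x' : I} {y : J} {z : K}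
    (hlt : ∀ t ∈ F',
      cosetCount S (columns F) (x, y, z + t) < cosetCount S (columns F) (x', y, z + t)) :
    cosetCount S (columns F') (x, y, z) < cosetCount S (columns F') (x', y, z) := by
  refine cosetCount_lt_cosetCount (columns_mono hF) ?_
  rintro ⟨u, v, t⟩ ⟨hu : u = 0, -, ht⟩
  subst hu
  rw [Prod.mk_add_mk, Prod.mk_add_mk, Prod.mk_add_mk, Prod.mk_add_mk, add_zero, add_zero,
    cosetCount_columns_eq _ _ _ _ y, cosetCount_columns_eq _ _ x' _ y]
  exact hlt t ht

/-- A tiling `A ⊕ B` of `I × J × K`, the model of `ZMod M` given by the Chinese remainder theorem,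
such that `A` has an extended corner: the base point is moved to the origin, `A` contains exactly a
`j`-fiber of the grid plane through the origin, and exactly a `k`-fiber of the one through
`(s, 0, 0)`. The fields from `cuboid_A` on are the vanishing cuboid sums corresponding to
`Φ_{M/p_k} ∣ A`, to `Φ_{M/p_j} ∣ B`, and to the alternatives that `Φ_N` divides `A` or `B` for
`N = p_i^n p_k^2`, `p_i^n p_k`, `p_i^n`, where `n` is the exponent of `p_i` in `M`. -/
structure CornerTiling (Fi : Ideal I) (Fj : Ideal J) (Fk : Ideal K) (pi pj pk : ℕ)
    (A B : Finset (I × J × K)) (s : I) : Prop where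
  isFiberIdeal_left : IsFiberIdeal Fi pi
  isSquareFiberIdeal_mid : IsSquareFiberIdeal Fj pj
  isSquareFiberIdeal_right : IsSquareFiberIdeal Fk pk
  prime_left : pi.Prime
  prime_mid : pj.Prime
  prime_right : pk.Prime
  left_ne_right : pi ≠ pk
  right_lt_mid : pk < pj
  card_eq : #A = pi * pj * pk
  exists_add_eq : ∀ v, ∃ a ∈ A, ∃ b ∈ B, a + b = v
  eq_of_associated : ∀ {a a' b b'}, a ∈ A → a' ∈ A → b ∈ B → b' ∈ B →
    Associated (a - a') (b - b') → b = b'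
  shift_mem : s ∈ Fi
  shift_ne_zero : s ≠ 0
  zero_mem_iff : ∀ {y z}, y ∈ Fj → z ∈ Fk → ((0, y, z) ∈ A ↔ z = 0)
  shift_mem_iff : ∀ {y z}, y ∈ Fj → z ∈ Fk → ((s, y, z) ∈ A ↔ y = 0)
  cuboid_A : ∀ x ∈ Fi, ∀ y ∈ Fj, ∀ z, Δ_[(x, 0, 0)] (Δ_[(0, y, 0)] (Δ_[(0, 0, z)]
    fun v => (cosetCount A (kFiber Fk) v : ℤ))) = 0
  cuboid_B : ∀ x ∈ Fi, ∀ y, ∀ z ∈ Fk, Δ_[(x, 0, 0)] (Δ_[(0, y, 0)] (Δ_[(0, 0, z)]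
    fun v => (cosetCount B (jFiber Fj) v : ℤ))) = 0
  cuboid_pow_mul_sq : ∃ S, (S = A ∨ S = B) ∧ ∀ x ∈ Fi, ∀ z ∈ Fk, Δ_[(x, 0, 0)] (Δ_[(0, 0, z)]
    fun v => (cosetCount S (columns ⊥) v : ℤ)) = 0
  cuboid_pow_mul : ∃ S, (S = A ∨ S = B) ∧ ∀ x ∈ Fi, ∀ z, Δ_[(x, 0, 0)] (Δ_[(0, 0, z)]
    fun v => (cosetCount S (columns Fk) v : ℤ)) = 0
  cuboid_pow : ∃ S, (S = A ∨ S = B) ∧ ∀ x ∈ Fi, Δ_[(x, 0, 0)]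
    (fun v => (cosetCount S (columns ⊤) v : ℤ)) = 0

/-- `B` contains two points differing only in the second and third coordinates, each by a nonzero
element of the fiber ideal. -/
def HasMixedPair (Fj : Ideal J) (Fk : Ideal K) (B : Finset (I × J × K)) : Prop :=
  ∃ x y z y' z', (x, y, z) ∈ B ∧ (x, y', z') ∈ B ∧ y - y' ∈ Fj ∧ y ≠ y' ∧ z - z' ∈ Fk ∧ z ≠ z'

/-- `B` contains two points differing only in the second coordinate, by an element outside the
fiber ideal. -/
def HasFarPair (Fj : Ideal J) (B : Finset (I × J × K)) : Prop :=
  ∃ x y y' z, (x, y, z) ∈ B ∧ (x, y', z) ∈ B ∧ y - y' ∉ Fj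

/-- `(x, y, z)` is the only point of `B` in its `D(M)`-grid. -/
def IsIsolated (Fi : Ideal I) (Fj : Ideal J) (Fk : Ideal K) (B : Finset (I × J × K)) (x : I) (y : J)
    (z : K) : Prop :=
  (x, y, z) ∈ B ∧ ∀ x' y' z', (x', y', z') ∈ B → x' - x ∈ Fi → y' - y ∈ Fj → z' - z ∈ Fk →
    x' = x ∧ y' = y ∧ z' = z

/-- `B` meets every coset of `Fj` in the column over `(x, z)`, and contains no point of the other
columns in the `D(M)`-grid directions of this one. -/
def IsIsolatedColumn (Fi : Ideal I) (Fj : Ideal J) (Fk : Ideal K) (B : Finset (I × J × K)) (x : I)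
    (z : K) : Prop :=
  (∀ y, ∃ y', y' - y ∈ Fj ∧ (x, y', z) ∈ B) ∧
    ∀ x' y' z', (x', y', z') ∈ B → x' - x ∈ Fi → z' - z ∈ Fk → x' = x ∧ z' = z

lemma IsIsolatedColumn.cosetCount_columns_eq_zero {Fi : Ideal I} {Fj : Ideal J} {Fk : Ideal K}
    {B : Finset (I × J × K)} {x x₁ : I} {z z₁ : K} (hcol : IsIsolatedColumn Fi Fj Fk B x z)
    (hx : x₁ ∈ Fi) (hz : z₁ ∈ Fk) (hne : x₁ ≠ 0 ∨ z₁ ≠ 0) :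
    cosetCount B (columns ⊥) (x + x₁, 0, z + z₁) = 0 := by
  refine Nat.eq_zero_of_not_pos fun hpos => ?_
  obtain ⟨y, z', hb, hz'⟩ := cosetCount_columns_pos.1 hpos
  obtain rfl := sub_eq_zero.1 hz'
  have e := hcol.2 _ _ _ hb (by simpa using hx) (by simpa using hz)
  simp only [add_eq_left] at e
  exact hne.elim (fun hx0 => hx0 e.1) fun hz0 => hz0 e.2

namespace CornerTiling

variable {Fi : Ideal I} {Fj : Ideal J} {Fk : Ideal K} {pi pj pk : ℕ} {A B : Finset (I × J × K)}
  {s : I} (h : CornerTiling Fi Fj Fk pi pj pk A B s)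
  {x x' x₁ x₁' x₂ x₂' : I} {y y' y₁ y₁' y₂ y₂' : J} {z z' z₁ z₁' z₂ z₂' : K}
include h

lemma zero_fiber_mem (hy : y ∈ Fj) : ((0 : I), y, (0 : K)) ∈ A :=
  (h.zero_mem_iff hy Fk.zero_mem).2 rfl

lemma shift_fiber_mem (hz : z ∈ Fk) : (s, (0 : J), z) ∈ A :=
  (h.shift_mem_iff Fj.zero_mem hz).2 rfl

lemma origin_mem : ((0 : I), (0 : J), (0 : K)) ∈ A := h.zero_fiber_mem Fj.zero_mem

lemma exists_mem_mid : ∃ y ∈ Fj, ∃ y' ∈ Fj, y ≠ 0 ∧ y' ≠ 0 ∧ y ≠ y' := by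
  have hcard : 2 < Nat.card Fj := by
    rw [h.isSquareFiberIdeal_mid.card_eq]
    have := h.prime_right.two_le
    have := h.right_lt_mid
    omega
  obtain ⟨a, b, ha, hb, hab⟩ := exists_ne_zero_ne_zero_ne_of_two_lt_card hcard
  exact ⟨a, a.2, b, b.2, by simpa using ha, by simpa using hb, fun e => hab (Subtype.ext e)⟩

lemma exists_mem_right : ∃ z ∈ Fk, z ≠ 0 :=
  h.isSquareFiberIdeal_right.exists_mem_ne_zero h.prime_right.ne_one

lemma exists_notMem_right : ∃ z, z ∉ Fk := by
  by_contra! hall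
  have := Ideal.Quotient.subsingleton_iff.2 (Ideal.eq_top_iff_one _ |>.2 (hall 1))
  exact h.prime_right.one_lt.ne'
    (h.isSquareFiberIdeal_right.card_quotient ▸ Nat.card_of_subsingleton (0 : K ⧸ Fk))

lemma exists_notMem_mid : ∃ y y', y ∉ Fj ∧ y' ∉ Fj ∧ y - y' ∉ Fj := by
  have hcard : 2 < Nat.card (J ⧸ Fj) := by
    rw [h.isSquareFiberIdeal_mid.card_quotient]
    have := h.prime_right.two_le
    have := h.right_lt_mid
    omega
  obtain ⟨a, b, ha, hb, hab⟩ := exists_ne_zero_ne_zero_ne_of_two_lt_card hcard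
  obtain ⟨y, rfl⟩ := Ideal.Quotient.mk_surjective a
  obtain ⟨y', rfl⟩ := Ideal.Quotient.mk_surjective b
  rw [Ne, Ideal.Quotient.eq_zero_iff_mem] at ha hb
  rw [Ne, Ideal.Quotient.eq] at hab
  exact ⟨y, y', ha, hb, hab⟩

lemma eq_of_associated_coord (ha : (x₁, y₁, z₁) ∈ A) (ha' : (x₁', y₁', z₁') ∈ A)
    (hb : (x₂, y₂, z₂) ∈ B) (hb' : (x₂', y₂', z₂') ∈ B) (hx : Associated (x₁ - x₁') (x₂ - x₂'))
    (hy : Associated (y₁ - y₁') (y₂ - y₂')) (hz : Associated (z₁ - z₁') (z₂ - z₂')) :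
    x₂ = x₂' ∧ y₂ = y₂' ∧ z₂ = z₂' := by
  have e := h.eq_of_associated ha ha' hb hb'
    (Prod.associated_iff.2 ⟨hx, Prod.associated_iff.2 ⟨hy, hz⟩⟩)
  simpa only [Prod.mk.injEq] using e

lemma left_eq_of_sub_mem (hb : (x, y, z) ∈ B) (hb' : (x', y', z') ∈ B) (hx : x - x' ∈ Fi)
    (hy : y - y' ∈ Fj) (hz : z - z' ∈ Fk) : x = x' := by
  by_contra hne
  refine hne (h.eq_of_associated_coord (h.shift_fiber_mem hz)
    (h.zero_fiber_mem (Fj.neg_mem hy)) hb hb' ?_ (by rw [zero_sub, neg_neg]) (by rw [sub_zero])).1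
  exact h.isFiberIdeal_left.associated_of_mem (by simpa using h.shift_mem) hx
    (by simpa using h.shift_ne_zero) (sub_ne_zero.2 hne)

lemma mid_eq_iff_of_sub_mem (hb : (x, y, z) ∈ B) (hb' : (x, y', z') ∈ B)
    (hy : y - y' ∈ Fj) (hz : z - z' ∈ Fk) : y = y' ↔ z = z' := by
  constructor <;> rintro rfl
  · exact (h.eq_of_associated_coord (h.shift_fiber_mem hz) (h.shift_fiber_mem Fk.zero_mem) hb hb'
      (associated_sub_of_eq rfl rfl) (associated_sub_of_eq rfl rfl) (by rw [sub_zero])).2.2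
  · exact (h.eq_of_associated_coord (h.zero_fiber_mem hy) h.origin_mem hb hb'
      (associated_sub_of_eq rfl rfl) (by rw [sub_zero]) (associated_sub_of_eq rfl rfl)).2.1

lemma cosetCount_zero_of_mem (hy : y ∈ Fj) : cosetCount A (kFiber Fk) (0, y, 0) = 1 := by
  refine le_antisymm (cosetCount_le_one.2 ?_)
    (cosetCount_pos.2 ⟨_, h.zero_fiber_mem hy, by rw [sub_self]; exact zero_mem _⟩)
  have hmem : ∀ a ∈ A, a - (0, y, 0) ∈ kFiber Fk → a = (0, y, 0) := by
    rintro ⟨x', y', z'⟩ ha hsub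
    obtain ⟨rfl, rfl, hz⟩ := sub_mem_kFiber.1 hsub
    rw [sub_zero] at hz
    rw [(h.zero_mem_iff hy hz).1 ha]
  exact fun a ha a' ha' hsub hsub' => (hmem a ha hsub).trans (hmem a' ha' hsub').symm

lemma cosetCount_shift_of_ne_zero (hy : y ∈ Fj) (hy0 : y ≠ 0) :
    cosetCount A (kFiber Fk) (s, y, 0) = 0 := by
  rw [cosetCount_eq_zero]
  rintro ⟨x', y', z'⟩ ha hsub
  obtain ⟨rfl, rfl, hz⟩ := sub_mem_kFiber.1 hsub
  exact hy0 ((h.shift_mem_iff hy (by rwa [sub_zero] at hz)).1 ha)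

lemma card_le_cosetCount_kFiber [Finite I] [Finite J] [Finite K] :
    pk ≤ cosetCount A (kFiber Fk) (x, y, z) ↔ ∀ t ∈ Fk, (x, y, z + t) ∈ A := by
  rw [← h.isSquareFiberIdeal_right.card_eq, ← card_kFiber (I := I) (J := J), card_le_cosetCount]
  refine ⟨fun hA t ht => hA _ (sub_mem_kFiber.2 ⟨rfl, rfl, by rwa [add_sub_cancel_left]⟩), ?_⟩
  rintro hA ⟨x', y', z'⟩ hsub
  obtain ⟨rfl, rfl, hz⟩ := sub_mem_kFiber.1 hsub
  simpa only [add_sub_cancel] using hA _ hz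

/-- The vanishing of the cuboid sum for `Φ_{M/p_k} ∣ A` at a cuboid with an edge joining the two
fibers of the corner. -/
lemma cosetCount_add_of_corner [Finite I] [Finite J] [Finite K] (hy : y ∈ Fj) (hy0 : y ≠ 0)
    (z : K) :
    pk + cosetCount A (kFiber Fk) (0, 0, z) + cosetCount A (kFiber Fk) (s, y, z) ≤
      cosetCount A (kFiber Fk) (0, y, z) + cosetCount A (kFiber Fk) (s, 0, z) := by
  have hsum := congrFun (h.cuboid_A s h.shift_mem y hy z) (0, 0, 0)
  have hfull : pk ≤ cosetCount A (kFiber Fk) (s, 0, 0) :=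
    h.card_le_cosetCount_kFiber.2 fun t ht => by
      rw [zero_add]
      exact h.shift_fiber_mem ht
  have h₀ := h.cosetCount_zero_of_mem Fj.zero_mem
  have h₁ := h.cosetCount_zero_of_mem hy
  have h₂ := h.cosetCount_shift_of_ne_zero hy hy0
  simp only [fwdDiff, zero_add, Prod.mk_add_mk, add_zero, Pi.zero_apply] at hsum
  omega

lemma mid_eq_or_right_eq_of_hasMixedPair (hB : HasMixedPair Fj Fk B) (ha : (x, y, z) ∈ A)
    (ha' : (x, y', z') ∈ A) (hy : y - y' ∈ Fj) (hz : z - z' ∈ Fk) : y = y' ∨ z = z' := by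
  by_contra! hne
  obtain ⟨u, v, w, v', w', hb, hb', hv, hv0, hw, hw0⟩ := hB
  exact hv0 (h.eq_of_associated_coord ha ha' hb hb' (associated_sub_of_eq rfl rfl)
    (h.isSquareFiberIdeal_mid.associated_of_mem hy hv (sub_ne_zero.2 hne.1) (sub_ne_zero.2 hv0))
    (h.isSquareFiberIdeal_right.associated_of_mem hz hw (sub_ne_zero.2 hne.2)
      (sub_ne_zero.2 hw0))).2.1

lemma exists_shift_mem_of_hasMixedPair [Finite I] [Finite J] [Finite K]
    (hB : HasMixedPair Fj Fk B) (z : K) : ∃ c, (s, (0 : J), c) ∈ A ∧ c - z ∈ Fk := by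
  by_contra! hc
  have hempty : cosetCount A (kFiber Fk) (s, 0, z) = 0 := by
    rw [cosetCount_eq_zero]
    rintro ⟨x', y', c⟩ ha hsub
    obtain ⟨rfl, rfl, hcz⟩ := sub_mem_kFiber.1 hsub
    exact hc c ha hcz
  have hfull : ∀ y ∈ Fj, y ≠ 0 → ∀ t ∈ Fk, ((0 : I), y, z + t) ∈ A := fun y hy hy0 =>
    h.card_le_cosetCount_kFiber.1 (by have := h.cosetCount_add_of_corner hy hy0 z; omega)
  obtain ⟨y, hy, y', hy', hy0, hy0', hne⟩ := h.exists_mem_mid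
  obtain ⟨t, ht, ht0⟩ := h.exists_mem_right
  rcases h.mid_eq_or_right_eq_of_hasMixedPair hB (hfull y hy hy0 0 Fk.zero_mem)
    (hfull y' hy' hy0' t ht) (Fj.sub_mem hy hy') (by simpa using ht) with e | e
  · exact hne e
  · exact ht0 (by simpa using e.symm)

lemma exists_shift_mem_associated [Finite I] [Finite J] [Finite K] (hB : HasMixedPair Fj Fk B)
    (z : K) : ∃ c, (s, (0 : J), c) ∈ A ∧ Associated c z := by
  by_cases hz : z ∈ Fk
  · exact ⟨z, h.shift_fiber_mem hz, .refl z⟩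
  · obtain ⟨c, hc, hcz⟩ := h.exists_shift_mem_of_hasMixedPair hB z
    have hcF : c ∉ Fk := fun hc => hz ((Fk.sub_mem_iff_right hc).1 hcz)
    exact ⟨c, hc, h.isSquareFiberIdeal_right.associated_of_notMem hcF hz⟩

lemma left_eq_of_hasMixedPair [Finite I] [Finite J] [Finite K] (hB : HasMixedPair Fj Fk B)
    (hb : (x, y, z) ∈ B) (hb' : (x', y', z') ∈ B) (hx : x - x' ∈ Fi) (hy : y - y' ∈ Fj) :
    x = x' := by
  by_contra hne
  obtain ⟨c, hc, hassoc⟩ := h.exists_shift_mem_associated hB (z - z')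
  refine hne (h.eq_of_associated_coord hc (h.zero_fiber_mem (Fj.neg_mem hy)) hb hb' ?_
    (by rw [zero_sub, neg_neg]) (by rwa [sub_zero])).1
  exact h.isFiberIdeal_left.associated_of_mem (by simpa using h.shift_mem) hx
    (by simpa using h.shift_ne_zero) (sub_ne_zero.2 hne)

lemma right_eq_of_hasMixedPair [Finite I] [Finite J] [Finite K] (hB : HasMixedPair Fj Fk B)
    (hb : (x, y, z) ∈ B) (hb' : (x, y, z') ∈ B) : z = z' := by
  obtain ⟨c, hc, hassoc⟩ := h.exists_shift_mem_associated hB (z - z')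
  exact (h.eq_of_associated_coord hc (h.shift_fiber_mem Fk.zero_mem) hb hb'
    (associated_sub_of_eq rfl rfl) (associated_sub_of_eq rfl rfl) (by rwa [sub_zero])).2.2

lemma split_left (ha : (x₁, y₁, z₁) ∈ A) (ha' : (x₁', y₁', z₁') ∈ A) (hb : (x₂, y₂, z₂) ∈ B)
    (hb' : (x₂', y₂', z₂') ∈ B) (hx : x₁ + x₂ - (x₁' + x₂') ∈ Fi) (hx0 : x₁ + x₂ ≠ x₁' + x₂')
    (hy : y₁ + y₂ = y₁' + y₂') (hz : z₁ + z₂ = z₁' + z₂') :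
    x₁ - x₁' ∈ Fi ∧ x₂ - x₂' ∈ Fi ∧ (x₁ = x₁' ∨ x₂ = x₂') := by
  refine (h.isFiberIdeal_left.associated_or_split hx).resolve_left fun hassoc => hx0 ?_
  have e := (h.eq_of_associated_coord ha ha' hb hb' hassoc (associated_sub_of_add_eq hy)
    (associated_sub_of_add_eq hz)).1
  rw [e, sub_self, associated_zero_iff_eq_zero, sub_eq_zero] at hassoc
  rw [hassoc, e]

lemma split_mid (ha : (x₁, y₁, z₁) ∈ A) (ha' : (x₁', y₁', z₁') ∈ A) (hb : (x₂, y₂, z₂) ∈ B)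
    (hb' : (x₂', y₂', z₂') ∈ B) (hx : x₁ + x₂ = x₁' + x₂') (hy : y₁ + y₂ - (y₁' + y₂') ∈ Fj)
    (hy0 : y₁ + y₂ ≠ y₁' + y₂') (hz : z₁ + z₂ = z₁' + z₂') :
    y₁ - y₁' ∈ Fj ∧ y₂ - y₂' ∈ Fj ∧ (y₁ = y₁' ∨ y₂ = y₂') := by
  refine (h.isSquareFiberIdeal_mid.associated_or_split hy).resolve_left fun hassoc => hy0 ?_
  have e := (h.eq_of_associated_coord ha ha' hb hb' (associated_sub_of_add_eq hx) hassoc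
    (associated_sub_of_add_eq hz)).2.1
  rw [e, sub_self, associated_zero_iff_eq_zero, sub_eq_zero] at hassoc
  rw [hassoc, e]

lemma split_right (ha : (x₁, y₁, z₁) ∈ A) (ha' : (x₁', y₁', z₁') ∈ A) (hb : (x₂, y₂, z₂) ∈ B)
    (hb' : (x₂', y₂', z₂') ∈ B) (hx : x₁ + x₂ = x₁' + x₂') (hy : y₁ + y₂ = y₁' + y₂')
    (hz : z₁ + z₂ - (z₁' + z₂') ∈ Fk) (hz0 : z₁ + z₂ ≠ z₁' + z₂') :
    z₁ - z₁' ∈ Fk ∧ z₂ - z₂' ∈ Fk ∧ (z₁ = z₁' ∨ z₂ = z₂') := by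
  refine (h.isSquareFiberIdeal_right.associated_or_split hz).resolve_left fun hassoc => hz0 ?_
  have e := (h.eq_of_associated_coord ha ha' hb hb' (associated_sub_of_add_eq hx)
    (associated_sub_of_add_eq hy) hassoc).2.2
  rw [e, sub_self, associated_zero_iff_eq_zero, sub_eq_zero] at hassoc
  rw [hassoc, e]

/-- The point `(s + x, y₁ + y, z₁)` is decomposed by comparing it with the sums of the two given
points of `B` and points of the `k`-fiber of the corner. -/
lemma exists_mem_add_mid_of_mixedPair [Finite I] [Finite J] [Finite K] (hb₁ : (x, y₁, z₁) ∈ B)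
    (hb₂ : (x, y₂, z₂) ∈ B) (hy₁₂ : y₁ - y₂ ∈ Fj) (hyne : y₁ ≠ y₂) (hz₁₂ : z₁ - z₂ ∈ Fk)
    (hzne : z₁ ≠ z₂) (hy : y ∈ Fj) : ∃ z, (x, y₁ + y, z) ∈ B := by
  by_cases hy0 : y = 0
  · exact ⟨z₁, by rwa [hy0, add_zero]⟩
  by_cases hyy₂ : y₁ + y = y₂
  · exact ⟨z₂, by rwa [hyy₂]⟩
  obtain ⟨⟨xa, ya, za⟩, ha, ⟨xb, yb, zb⟩, hb, e⟩ := h.exists_add_eq (s + x, y₁ + y, z₁)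
  obtain ⟨ex, ey, ez⟩ : xa + xb = s + x ∧ ya + yb = y₁ + y ∧ za + zb = z₁ := by
    simpa only [Prod.mk_add_mk, Prod.mk.injEq] using e
  obtain ⟨-, -, hsplit₁⟩ := h.split_mid ha (h.shift_fiber_mem Fk.zero_mem) hb hb₁ ex
    (by rw [ey]; simpa using hy) (by rw [ey]; simpa using hy0) (by rw [ez, zero_add])
  obtain ⟨-, -, hsplit₂⟩ := h.split_mid ha (h.shift_fiber_mem hz₁₂) hb hb₂ ex
    (by rw [ey, zero_add, add_sub_right_comm]; exact Fj.add_mem hy₁₂ hy)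
    (by rw [ey, zero_add]; exact hyy₂) (by rw [ez, sub_add_cancel])
  obtain rfl : ya = 0 := by grind
  obtain rfl : yb = y₁ + y := by rwa [zero_add] at ey
  obtain ⟨-, hxb, -⟩ := h.split_left ha (h.zero_fiber_mem hy) hb hb₁
    (by rw [ex]; simpa using h.shift_mem) (by rw [ex]; simpa using h.shift_ne_zero) (by abel)
    (by rw [ez, zero_add])
  obtain rfl := h.left_eq_of_hasMixedPair ⟨x, y₁, z₁, y₂, z₂, hb₁, hb₂, hy₁₂, hyne, hz₁₂, hzne⟩
    hb hb₁ hxb (by simpa using hy)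
  exact ⟨zb, hb⟩

lemma cosetCount_jFiber_le_one (v : I × J × K) : cosetCount B (jFiber Fj) v ≤ 1 := by
  obtain ⟨x, y, z⟩ := v
  rw [cosetCount_le_one]
  rintro ⟨x₁, y₁, z₁⟩ hb₁ ⟨x₂, y₂, z₂⟩ hb₂ hsub₁ hsub₂
  obtain ⟨rfl, hy₁, rfl⟩ := sub_mem_jFiber.1 hsub₁
  obtain ⟨rfl, hy₂, rfl⟩ := sub_mem_jFiber.1 hsub₂
  have hy : y₁ - y₂ ∈ Fj := by simpa using Fj.sub_mem hy₁ hy₂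
  rw [(h.mid_eq_iff_of_sub_mem hb₁ hb₂ hy (by simp)).2 rfl]

/-- The vanishing of the cuboid sum for `Φ_{M/p_j} ∣ B` at a cuboid one of whose vertices is a
`j`-fiber meeting `B`, while a neighbouring one does not. -/
lemma cosetCount_add_of_missing (hb : (x, y, z) ∈ B) (hx : x₁ ∈ Fi) (hx0 : x₁ ≠ 0) (u : J)
    (hz : z₁ ∈ Fk) (hmiss : ∀ y', y' - y ∈ Fj → (x, y', z + z₁) ∉ B) :
    1 + cosetCount B (jFiber Fj) (x + x₁, y + u, z) +
        cosetCount B (jFiber Fj) (x, y + u, z + z₁) =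
      cosetCount B (jFiber Fj) (x, y + u, z) +
        cosetCount B (jFiber Fj) (x + x₁, y + u, z + z₁) := by
  have hsum := congrFun (h.cuboid_B x₁ hx u z₁ hz) (x, y, z)
  have hone : cosetCount B (jFiber Fj) (x, y, z) = 1 :=
    le_antisymm (h.cosetCount_jFiber_le_one _)
      (cosetCount_jFiber_pos.2 ⟨y, by rw [sub_self]; exact Fj.zero_mem, hb⟩)
  have hshift : ∀ t ∈ Fk, cosetCount B (jFiber Fj) (x + x₁, y, z + t) = 0 := by
    intro t ht
    refine Nat.eq_zero_of_not_pos fun hpos => ?_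
    obtain ⟨y', hy', hb'⟩ := cosetCount_jFiber_pos.1 hpos
    have e := h.left_eq_of_sub_mem hb' hb (by simpa using hx) hy' (by simpa using ht)
    exact hx0 (by simpa using e)
  have hzero : cosetCount B (jFiber Fj) (x, y, z + z₁) = 0 := by
    refine Nat.eq_zero_of_not_pos fun hpos => ?_
    obtain ⟨y', hy', hb'⟩ := cosetCount_jFiber_pos.1 hpos
    exact hmiss y' hy' hb'
  have h₀ := hshift 0 Fk.zero_mem
  have h₁ := hshift z₁ hz
  simp only [fwdDiff, Prod.mk_add_mk, add_zero, Pi.zero_apply] at hsum h₀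
  omega

lemma sub_mem_of_hasFarPair (hB : HasFarPair Fj B)
    (ha : (x, y, z) ∈ A) (ha' : (x, y', z) ∈ A) : y - y' ∈ Fj := by
  by_contra hy
  obtain ⟨u, v, v', w, hb, hb', hv⟩ := hB
  have e := (h.eq_of_associated_coord ha ha' hb hb' (associated_sub_of_eq rfl rfl)
    (h.isSquareFiberIdeal_mid.associated_of_notMem hy hv) (associated_sub_of_eq rfl rfl)).2.1
  exact hv (by rw [e, sub_self]; exact Fj.zero_mem)

lemma hasFarPair_of_missing (hb : (x, y, z) ∈ B) (hz : z₁ ∈ Fk)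
    (hmiss : ∀ y', y' - y ∈ Fj → (x, y', z + z₁) ∉ B) :
    HasFarPair Fj B := by
  have far_or_shifted : ∀ u ∉ Fj, HasFarPair Fj B ∨
      ∃ v, v - (y + u) ∈ Fj ∧ (x + s, v, z + z₁) ∈ B := by
    intro u hu
    have hsum := h.cosetCount_add_of_missing hb h.shift_mem h.shift_ne_zero u hz hmiss
    rcases Nat.eq_zero_or_pos (cosetCount B (jFiber Fj) (x, y + u, z)) with h0 | hpos
    · exact Or.inr (cosetCount_jFiber_pos.1 (by omega))
    · obtain ⟨v, hv, hbv⟩ := cosetCount_jFiber_pos.1 hpos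
      refine Or.inl ⟨_, _, _, _, hbv, hb, fun hc => hu ?_⟩
      simpa using Fj.sub_mem hc hv
  obtain ⟨u, u', hu, hu', huu'⟩ := h.exists_notMem_mid
  rcases far_or_shifted u hu with hfound | ⟨v, hv, hbv⟩
  · exact hfound
  rcases far_or_shifted u' hu' with hfound | ⟨v', hv', hbv'⟩
  · exact hfound
  refine ⟨_, _, _, _, hbv, hbv', fun hc => huu' ?_⟩
  convert Fj.add_mem (Fj.sub_mem hc hv) hv' using 1
  ring

lemma exists_mem_add_right_of_mixedPair [Finite I] [Finite J] [Finite K] (hb₁ : (x, y₁, z₁) ∈ B)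
    (hb₂ : (x, y₂, z₂) ∈ B) (hy₁₂ : y₁ - y₂ ∈ Fj) (hyne : y₁ ≠ y₂) (hz₁₂ : z₁ - z₂ ∈ Fk)
    (hzne : z₁ ≠ z₂) (hz : z ∈ Fk) : ∃ y, y - y₁ ∈ Fj ∧ (x, y, z₁ + z) ∈ B := by
  by_contra! hmiss
  have hz0 : z ≠ 0 := by
    rintro rfl
    exact hmiss y₁ (by simp) (by rwa [add_zero])
  have hzz₂ : z₁ + z ≠ z₂ := fun e => hmiss y₂ (by simpa using Fj.neg_mem hy₁₂) (e ▸ hb₂)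
  have hfar := h.hasFarPair_of_missing hb₁ hz hmiss
  obtain ⟨⟨xa, ya, za⟩, ha, ⟨xb, yb, zb⟩, hb, e⟩ := h.exists_add_eq (x, y₁, z₁ + z)
  obtain ⟨ex, ey, ez⟩ : xa + xb = x ∧ ya + yb = y₁ ∧ za + zb = z₁ + z := by
    simpa only [Prod.mk_add_mk, Prod.mk.injEq] using e
  obtain ⟨-, -, hsplit₁⟩ := h.split_right ha h.origin_mem hb hb₁ (by rw [ex, zero_add])
    (by rw [ey, zero_add]) (by rw [ez]; simpa using hz) (by rw [ez]; simpa using hz0)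
  obtain ⟨-, -, hsplit₂⟩ := h.split_right ha (h.zero_fiber_mem hy₁₂) hb hb₂ (by rw [ex, zero_add])
    (by rw [ey, sub_add_cancel])
    (by rw [ez, zero_add, add_sub_right_comm]; exact Fk.add_mem hz₁₂ hz)
    (by rw [ez, zero_add]; exact hzz₂)
  obtain rfl : za = 0 := by grind
  obtain rfl : zb = z₁ + z := by rwa [zero_add] at ez
  obtain ⟨-, hxb, hsplit⟩ := h.split_left ha (h.shift_fiber_mem hz) hb hb₁
    (by rw [ex]; simpa using h.shift_mem) (by rw [ex]; simpa using h.shift_ne_zero)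
    (by rw [ey, zero_add]) (by abel)
  have hya : ya ∉ Fj := by
    intro hya
    have hyb : yb - y₁ ∈ Fj := by simpa [← ey] using hya
    obtain rfl := h.left_eq_of_hasMixedPair ⟨x, y₁, z₁, y₂, z₂, hb₁, hb₂, hy₁₂, hyne, hz₁₂, hzne⟩
      hb hb₁ hxb hyb
    exact hmiss yb hyb hb
  rcases hsplit with rfl | rfl
  · exact hya (by simpa using h.sub_mem_of_hasFarPair hfar ha (h.shift_fiber_mem Fk.zero_mem))
  · obtain rfl : xa = 0 := by simpa using ex
    exact hya (by simpa using h.sub_mem_of_hasFarPair hfar ha h.origin_mem)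

lemma exists_isIsolated_of_not_hasMixedPair (hB : ¬ HasMixedPair Fj Fk B) :
    ∃ x y z, IsIsolated Fi Fj Fk B x y z := by
  obtain ⟨-, -, ⟨x, y, z⟩, hb, -⟩ := h.exists_add_eq 0
  refine ⟨x, y, z, hb, fun x' y' z' hb' hx hy hz => ?_⟩
  obtain rfl := h.left_eq_of_sub_mem hb' hb hx hy hz
  have hiff := h.mid_eq_iff_of_sub_mem hb' hb hy hz
  have hyz : y' = y := by
    by_contra hne
    exact hB ⟨_, _, _, _, _, hb', hb, hy, hne, hz, fun e => hne (hiff.2 e)⟩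
  exact ⟨rfl, hyz, hiff.1 hyz⟩

/-- Otherwise the image of `f` would be a union of cosets of `Fk`, and `p_k` would divide `p_j`. -/
lemma exists_add_notMem_range {f : Fj → K} (hf : Function.Injective f) :
    ∃ v, ∃ t ∈ Fk, f v + t ∉ Set.range f := by
  by_contra! hall
  have hdvd := card_dvd_ncard_of_add_mem Fk.toAddSubgroup (T := Set.range f) (by
    rintro _ ⟨v, rfl⟩ t ht
    exact hall v t ht)
  rw [← Nat.card_coe_set_eq, Nat.card_range_of_injective hf] at hdvd
  change Nat.card Fk ∣ _ at hdvd
  rw [h.isSquareFiberIdeal_mid.card_eq, h.isSquareFiberIdeal_right.card_eq,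
    Nat.prime_dvd_prime_iff_eq h.prime_right h.prime_mid] at hdvd
  exact h.right_lt_mid.ne hdvd

lemma exists_isIsolated_of_hasMixedPair [Finite I] [Finite J] [Finite K]
    (hB : HasMixedPair Fj Fk B) :
    ∃ x y z, IsIsolated Fi Fj Fk B x y z := by
  obtain ⟨x, y₁, z₁, y₂, z₂, hb₁, hb₂, hy₁₂, hyne, hz₁₂, hzne⟩ := id hB
  choose f hf using fun y : Fj =>
    h.exists_mem_add_mid_of_mixedPair hb₁ hb₂ hy₁₂ hyne hz₁₂ hzne y.2
  have hinj : Function.Injective f := fun v v' e => by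
    have := (h.mid_eq_iff_of_sub_mem (hf v) (hf v') (by simpa using Fj.sub_mem v.2 v'.2)
      (by rw [e, sub_self]; exact Fk.zero_mem)).2 e
    exact Subtype.ext (add_left_cancel this)
  obtain ⟨v, t, ht, hvt⟩ := h.exists_add_notMem_range hinj
  refine ⟨x, y₁ + v, f v, hf v, fun x' y' z' hb hx hy hz => ?_⟩
  obtain rfl := h.left_eq_of_sub_mem hb (hf v) hx hy hz
  have hiff := h.mid_eq_iff_of_sub_mem hb (hf v) hy hz
  have hy' : y' = y₁ + v := by
    by_contra hne
    obtain ⟨y₃, hy₃, hb₃⟩ := h.exists_mem_add_right_of_mixedPair (hf v) hb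
      (by simpa using Fj.neg_mem hy) (Ne.symm hne) (by simpa using Fk.neg_mem hz)
      (fun e => hne (hiff.2 e.symm)) ht
    have hw : y₃ - y₁ ∈ Fj := by simpa [sub_add_eq_sub_sub] using Fj.add_mem hy₃ v.2
    have hfw := hf ⟨y₃ - y₁, hw⟩
    rw [add_sub_cancel] at hfw
    exact hvt ⟨_, h.right_eq_of_hasMixedPair hB hfw hb₃⟩
  exact ⟨rfl, hy', hiff.1 hy'⟩

lemma shift_of_isIsolated (hiso : IsIsolated Fi Fj Fk B x y z) {u : J}
    (hu : ∀ v, v - (y + u) ∈ Fj → (x, v, z) ∉ B) (hx : x₁ ∈ Fi) (hx0 : x₁ ≠ 0) (hz : z₁ ∈ Fk)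
    (hz0 : z₁ ≠ 0) :
    (∀ v, v - (y + u) ∈ Fj → (x + x₁, v, z) ∉ B) ∧
      ∃ v, v - (y + u) ∈ Fj ∧ (x + x₁, v, z + z₁) ∈ B := by
  have hmiss : ∀ y', y' - y ∈ Fj → (x, y', z + z₁) ∉ B := fun y' hy' hb =>
    hz0 (by simpa using (hiso.2 _ _ _ hb (by simp) hy' (by simpa using hz)).2.2)
  have hsum := h.cosetCount_add_of_missing hiso.1 hx hx0 u hz hmiss
  have hzero : cosetCount B (jFiber Fj) (x, y + u, z) = 0 := by
    refine Nat.eq_zero_of_not_pos fun hpos => ?_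
    obtain ⟨v, hv, hb⟩ := cosetCount_jFiber_pos.1 hpos
    exact hu v hv hb
  have hle := h.cosetCount_jFiber_le_one (x + x₁, y + u, z + z₁)
  refine ⟨fun v hv hb => ?_, cosetCount_jFiber_pos.1 (by omega)⟩
  have := cosetCount_jFiber_pos.2 ⟨v, hv, hb⟩
  omega

lemma exists_mem_column_of_isIsolated_of_two_lt_right [Finite I] [Finite J] [Finite K]
    (hpk : 2 < pk) (hiso : IsIsolated Fi Fj Fk B x y z) (u : J) :
    ∃ v, v - (y + u) ∈ Fj ∧ (x, v, z) ∈ B := by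
  by_contra! hu
  obtain ⟨t, t', ht0, ht0', hne⟩ := exists_ne_zero_ne_zero_ne_of_two_lt_card
    (G := Fk) (by rwa [h.isSquareFiberIdeal_right.card_eq])
  obtain ⟨hmiss, v, hv, hb⟩ := h.shift_of_isIsolated hiso hu h.shift_mem h.shift_ne_zero t.2
    (by simpa using ht0)
  obtain ⟨-, v', hv', hb'⟩ := h.shift_of_isIsolated hiso hu h.shift_mem h.shift_ne_zero t'.2
    (by simpa using ht0')
  have hvv' : v - v' ∈ Fj := by simpa using Fj.sub_mem hv hv'
  have htt' : z + (t : K) - (z + t') ∈ Fk := by simpa using Fk.sub_mem t.2 t'.2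
  have hzne : z + (t : K) ≠ z + t' := fun e => hne (Subtype.ext (add_left_cancel e))
  obtain ⟨y₃, hy₃, hb₃⟩ := h.exists_mem_add_right_of_mixedPair hb hb' hvv'
    (fun e => hzne ((h.mid_eq_iff_of_sub_mem hb hb' hvv' htt').1 e)) htt' hzne (Fk.neg_mem t.2)
  rw [add_neg_cancel_right] at hb₃
  exact hmiss y₃ (by simpa using Fj.add_mem hy₃ hv) hb₃

lemma exists_mem_column_of_isIsolated_of_two_lt_left (hpi : 2 < pi)
    (hiso : IsIsolated Fi Fj Fk B x y z) (u : J) :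
    ∃ v, v - (y + u) ∈ Fj ∧ (x, v, z) ∈ B := by
  by_contra! hu
  obtain ⟨r, r', hr0, hr0', hne⟩ := exists_ne_zero_ne_zero_ne_of_two_lt_card
    (G := Fi) (by rwa [h.isFiberIdeal_left.card_eq])
  obtain ⟨t, ht, ht0⟩ := h.exists_mem_right
  obtain ⟨-, v, hv, hb⟩ := h.shift_of_isIsolated hiso hu r.2 (by simpa using hr0) ht ht0
  obtain ⟨-, v', hv', hb'⟩ := h.shift_of_isIsolated hiso hu r'.2 (by simpa using hr0') ht ht0
  have e := h.left_eq_of_sub_mem hb hb' (by simpa using Fi.sub_mem r.2 r'.2)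
    (by simpa using Fj.sub_mem hv hv') (by simp)
  exact hne (Subtype.ext (add_left_cancel e))

lemma exists_mem_column_of_isIsolated [Finite I] [Finite J] [Finite K]
    (hiso : IsIsolated Fi Fj Fk B x y z) (v : J) : ∃ v', v' - v ∈ Fj ∧ (x, v', z) ∈ B := by
  have hor : 2 < pk ∨ 2 < pi := by
    have := h.prime_left.two_le
    have := h.prime_right.two_le
    have := h.left_ne_right
    omega
  have hcol : ∃ v', v' - (y + (v - y)) ∈ Fj ∧ (x, v', z) ∈ B := by
    rcases hor with hpk | hpi
    · exact h.exists_mem_column_of_isIsolated_of_two_lt_right hpk hiso _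
    · exact h.exists_mem_column_of_isIsolated_of_two_lt_left hpi hiso _
  rwa [add_sub_cancel] at hcol

lemma isIsolatedColumn_of_isIsolated [Finite I] [Finite J] [Finite K]
    (hiso : IsIsolated Fi Fj Fk B x y z) : IsIsolatedColumn Fi Fj Fk B x z := by
  have hcol := h.exists_mem_column_of_isIsolated hiso
  refine ⟨hcol, fun x' y' z' hb hx hz => ?_⟩
  obtain ⟨v, hv, hbv⟩ := hcol y'
  obtain rfl := h.left_eq_of_sub_mem hb hbv hx (by simpa using Fj.neg_mem hv) hz
  refine ⟨rfl, ?_⟩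
  by_contra hne
  have hmiss : ∀ w, w - y ∈ Fj → (x', w, z + (z' - z)) ∉ B := fun w hw hbw =>
    hne (by simpa using (hiso.2 _ _ _ hbw (by simp) hw (by simpa using hz)).2.2)
  have hsum := h.cosetCount_add_of_missing hiso.1 h.shift_mem h.shift_ne_zero (y' - y) hz hmiss
  rw [add_sub_cancel, add_sub_cancel] at hsum
  have hzero : cosetCount B (jFiber Fj) (x' + s, y', z') = 0 := by
    refine Nat.eq_zero_of_not_pos fun hpos => ?_
    obtain ⟨w, hw, hbw⟩ := cosetCount_jFiber_pos.1 hpos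
    refine h.shift_ne_zero ?_
    simpa using h.left_eq_of_sub_mem hbw hb (by simpa using h.shift_mem) hw (by simp)
  have hle := h.cosetCount_jFiber_le_one (x', y', z)
  have hpos := cosetCount_jFiber_pos.2 ⟨y', by rw [sub_self]; exact Fj.zero_mem, hb⟩
  omega

lemma exists_isIsolatedColumn [Finite I] [Finite J] [Finite K] :
    ∃ x z, IsIsolatedColumn Fi Fj Fk B x z := by
  obtain ⟨x, y, z, hiso⟩ : ∃ x y z, IsIsolated Fi Fj Fk B x y z := by
    by_cases hB : HasMixedPair Fj Fk B
    · exact h.exists_isIsolated_of_hasMixedPair hB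
    · exact h.exists_isIsolated_of_not_hasMixedPair hB
  exact ⟨x, z, h.isIsolatedColumn_of_isIsolated hiso⟩

lemma hasFarPair_of_isIsolatedColumn (hcol : IsIsolatedColumn Fi Fj Fk B x z) :
    HasFarPair Fj B := by
  obtain ⟨u, -, hu, -, -⟩ := h.exists_notMem_mid
  obtain ⟨y, hy, hb⟩ := hcol.1 0
  obtain ⟨y', hy', hb'⟩ := hcol.1 u
  refine ⟨x, y', y, z, hb', hb, fun hc => hu ?_⟩
  rw [sub_zero] at hy
  have hy'F : y' ∈ Fj := by simpa using Fj.add_mem hc hy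
  simpa using Fj.sub_mem hy'F hy'

lemma cosetCount_columns_bot_eq (hB : HasFarPair Fj B) (ha : (x, y, z) ∈ A) :
    cosetCount A (columns ⊥) (x, 0, z) = cosetCount A (jFiber Fj) (x, y, z) := by
  apply le_antisymm <;> refine cosetCount_le_cosetCount ?_ <;> rintro ⟨x', y', z'⟩ ha' hsub
  · obtain ⟨rfl, hz⟩ := sub_mem_columns.1 hsub
    obtain rfl := sub_eq_zero.1 hz
    exact sub_mem_jFiber.2 ⟨rfl, h.sub_mem_of_hasFarPair hB ha' ha, rfl⟩
  · obtain ⟨rfl, -, rfl⟩ := sub_mem_jFiber.1 hsub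
    exact sub_mem_columns.2 ⟨rfl, by simp⟩

lemma eq_zero_of_shift_mem (hB : HasFarPair Fj B) (hz : z ∈ Fk) (ha : (s, y, z) ∈ A) : y = 0 :=
  (h.shift_mem_iff (by simpa using h.sub_mem_of_hasFarPair hB ha (h.shift_fiber_mem hz)) hz).1 ha

lemma cosetCount_columns_shift_eq_one (hB : HasFarPair Fj B) (hz : z ∈ Fk) :
    cosetCount A (columns ⊥) (s, 0, z) = 1 := by
  refine le_antisymm (cosetCount_le_one.2 ?_)
    (cosetCount_columns_pos.2 ⟨0, z, h.shift_fiber_mem hz, by simp⟩)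
  have hmem : ∀ a ∈ A, a - (s, 0, z) ∈ columns ⊥ → a = (s, 0, z) := by
    rintro ⟨x', y', z'⟩ ha hsub
    obtain ⟨rfl, hz'⟩ := sub_mem_columns.1 hsub
    obtain rfl := sub_eq_zero.1 hz'
    rw [h.eq_zero_of_shift_mem hB hz ha]
  exact fun a ha a' ha' hsub hsub' => (hmem a ha hsub).trans (hmem a' ha' hsub').symm

lemma cosetCount_columns_zero [Finite I] [Finite J] [Finite K]
    (hcol : IsIsolatedColumn Fi Fj Fk B x z) (hz : z₁ ∈ Fk) :
    cosetCount A (columns ⊥) (0, 0, z₁) = pj := by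
  have hB := h.hasFarPair_of_isIsolatedColumn hcol
  have hfull : cosetCount A (columns ⊥) (0, 0, 0) = pj := by
    rw [h.cosetCount_columns_bot_eq hB h.origin_mem, ← h.isSquareFiberIdeal_mid.card_eq,
      ← card_jFiber (I := I) (K := K)]
    refine le_antisymm cosetCount_le_card_ideal (card_le_cosetCount.2 ?_)
    rintro ⟨x', y', z'⟩ hsub
    obtain ⟨rfl, hy, rfl⟩ := sub_mem_jFiber.1 hsub
    exact h.zero_fiber_mem (by rwa [sub_zero] at hy)
  obtain ⟨S, rfl | rfl, hS⟩ := h.cuboid_pow_mul_sq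
  · have hsum := congrFun (hS s h.shift_mem z₁ hz) (0, 0, 0)
    have h₀ := h.cosetCount_columns_shift_eq_one hB Fk.zero_mem
    have h₁ := h.cosetCount_columns_shift_eq_one hB hz
    simp only [fwdDiff, Prod.mk_add_mk, zero_add, add_zero, Pi.zero_apply] at hsum
    omega
  · exfalso
    obtain ⟨t, ht, ht0⟩ := h.exists_mem_right
    have hsum := congrFun (hS s h.shift_mem t ht) (x, 0, z)
    obtain ⟨y, -, hb⟩ := hcol.1 0
    have hpos : 0 < cosetCount S (columns ⊥) (x, 0, z) :=
      cosetCount_columns_pos.2 ⟨y, z, hb, by simp⟩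
    have h₁ := hcol.cosetCount_columns_eq_zero h.shift_mem Fk.zero_mem
      (Or.inl h.shift_ne_zero)
    have h₂ := hcol.cosetCount_columns_eq_zero Fi.zero_mem ht (Or.inr ht0)
    simp only [fwdDiff, Prod.mk_add_mk, add_zero, Pi.zero_apply] at hsum h₁ h₂
    omega

lemma card_mid : Nat.card J = pj * pj := by
  rw [Submodule.card_eq_card_quotient_mul_card Fj, h.isSquareFiberIdeal_mid.card_eq]
  exact congrArg (pj * ·) h.isSquareFiberIdeal_mid.card_quotient

lemma card_right : Nat.card K = pk * pk := by
  rw [Submodule.card_eq_card_quotient_mul_card Fk, h.isSquareFiberIdeal_right.card_eq]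
  exact congrArg (pk * ·) h.isSquareFiberIdeal_right.card_quotient

section IsolatedColumn

variable [Finite I] [Finite J] [Finite K] (hcol : IsIsolatedColumn Fi Fj Fk B x z)
include hcol

lemma mul_le_cosetCount_columns_zero : pk * pj ≤ cosetCount A (columns Fk) (0, 0, 0) := by
  have hle := card_mul_le_cosetCount_columns (S := A) (x := 0) (y := 0) (z := 0) bot_le
    (F' := Fk) (n := pj) (fun t ht => by rw [zero_add, h.cosetCount_columns_zero hcol ht])
  rwa [h.isSquareFiberIdeal_right.card_eq, Nat.card_unique, one_mul] at hle

lemma cosetCount_columns_shift_le : cosetCount A (columns Fk) (s, 0, 0) ≤ pk := by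
  rw [← h.isSquareFiberIdeal_right.card_eq, ← card_kFiber (I := I) (J := J)]
  refine (cosetCount_le_cosetCount (y := (s, 0, 0)) ?_).trans cosetCount_le_card_ideal
  rintro ⟨x', y', z'⟩ ha hsub
  obtain ⟨rfl, hz⟩ := sub_mem_columns.1 hsub
  rw [h.eq_zero_of_shift_mem (h.hasFarPair_of_isIsolatedColumn hcol) (by simpa using hz) ha]
  exact sub_mem_kFiber.2 ⟨rfl, rfl, hz⟩

lemma exists_zero_mem_notMem_mid : ∃ y ∉ Fj, ∃ t ∈ Fk, t ≠ 0 ∧ ((0 : I), y, t) ∈ A := by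
  obtain ⟨t, ht, ht0⟩ := h.exists_mem_right
  have hpos : 0 < cosetCount A (columns ⊥) (0, 0, t) := by
    rw [h.cosetCount_columns_zero hcol ht]
    exact h.prime_mid.pos
  obtain ⟨y, z', ha, hz'⟩ := cosetCount_columns_pos.1 hpos
  obtain rfl := sub_eq_zero.1 hz'
  exact ⟨y, fun hy => ht0 ((h.zero_mem_iff hy ht).1 ha), z', ht, ht0, ha⟩

lemma left_eq_of_sub_mem_right (hb : (x₁, y₁, z₁) ∈ B) (hb' : (x₂, y₂, z₂) ∈ B)
    (hx : x₁ - x₂ ∈ Fi) (hz : z₁ - z₂ ∈ Fk) : x₁ = x₂ := by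
  by_cases hy : y₁ - y₂ ∈ Fj
  · exact h.left_eq_of_sub_mem hb hb' hx hy hz
  by_contra hne
  obtain ⟨y', hy', t, ht, ht0, ha⟩ := h.exists_zero_mem_notMem_mid hcol
  have hassoc_left : Associated (0 - s) (x₁ - x₂) :=
    h.isFiberIdeal_left.associated_of_mem (by simpa using h.shift_mem) hx
      (by simpa using h.shift_ne_zero) (sub_ne_zero.2 hne)
  have hassoc_mid : Associated (y' - 0) (y₁ - y₂) :=
    h.isSquareFiberIdeal_mid.associated_of_notMem (by simpa using hy') hy
  by_cases hz0 : z₁ = z₂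
  · exact hne (h.eq_of_associated_coord ha (h.shift_fiber_mem ht) hb hb' hassoc_left hassoc_mid
      (associated_sub_of_eq rfl hz0)).1
  · exact hne (h.eq_of_associated_coord ha (h.shift_fiber_mem Fk.zero_mem) hb hb' hassoc_left
      hassoc_mid (h.isSquareFiberIdeal_right.associated_of_mem (by simpa using ht) hz
        (by simpa using ht0) (sub_ne_zero.2 hz0))).1

lemma left_eq_of_exists_shift_mem (hz : z' ∉ Fk) (hz' : (s, (0 : J), z') ∈ A)
    (hb : (x₁, y₁, z₁) ∈ B) (hb' : (x₂, y₂, z₂) ∈ B) (hx : x₁ - x₂ ∈ Fi) : x₁ = x₂ := by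
  by_cases hk : z₁ - z₂ ∈ Fk
  · exact h.left_eq_of_sub_mem_right hcol hb hb' hx hk
  by_contra hne
  have hassoc_left : Associated (s - 0) (x₁ - x₂) :=
    h.isFiberIdeal_left.associated_of_mem (by simpa using h.shift_mem) hx
      (by simpa using h.shift_ne_zero) (sub_ne_zero.2 hne)
  by_cases hy : y₁ - y₂ ∈ Fj
  · exact hne (h.eq_of_associated_coord hz' (h.zero_fiber_mem (Fj.neg_mem hy)) hb hb' hassoc_left
      (by rw [zero_sub, neg_neg])
      (h.isSquareFiberIdeal_right.associated_of_notMem (by simpa using hz) hk)).1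
  · obtain ⟨y', hy', t, ht, -, ha⟩ := h.exists_zero_mem_notMem_mid hcol
    exact hne (h.eq_of_associated_coord hz' ha hb hb' hassoc_left
      (h.isSquareFiberIdeal_mid.associated_of_notMem (by simpa using hy') hy)
      (h.isSquareFiberIdeal_right.associated_of_notMem
        (fun hc => hz ((Fk.sub_mem_iff_left ht).1 hc)) hk)).1

end IsolatedColumn

lemma cosetCount_mul_cosetCount_le [Finite I] [Finite J] [Finite K] (x x' : I) :
    cosetCount A (columns ⊤) (x, 0, 0) * cosetCount B (columns ⊤) (x', 0, 0) ≤
      (pj * pj) * (pk * pk) := by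
  have hcard := card_columns (I := I) (J := J) (⊤ : Ideal K)
  rw [h.card_mid, Nat.card_congr Submodule.topEquiv.toEquiv, h.card_right] at hcard
  rw [← hcard]
  refine cosetCount_mul_cosetCount_le_card fun a ha a' ha' b hb b' hb' e => ?_
  obtain rfl := h.eq_of_associated ha ha' hb hb' (associated_sub_of_add_eq e)
  exact ⟨add_right_cancel e, rfl⟩

lemma mid_le_cosetCount_columns [Finite I] [Finite J] [Finite K]
    (hcol : IsIsolatedColumn Fi Fj Fk B x z) : pj ≤ cosetCount B (columns ⊥) (x, 0, z) := by
  have hle := card_mul_le_card_mul_cosetCount (S := B) (x := (x, 0, z)) (n := 1)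
    (N := jFiber Fj) (N' := columns ⊥) (fun v hv => ⟨hv.1, trivial, hv.2.2⟩) (by
      rintro ⟨u, v, w⟩ ⟨hu : u = 0, -, hw : w = 0⟩
      subst hu hw
      rw [Prod.mk_add_mk, Prod.mk_add_mk, add_zero, add_zero, zero_add]
      exact cosetCount_jFiber_pos.2 (hcol.1 v))
  rw [card_columns, card_jFiber, h.card_mid, h.isSquareFiberIdeal_mid.card_eq, Nat.card_unique,
    mul_one, mul_one] at hle
  exact Nat.le_of_mul_le_mul_left hle h.prime_mid.pos

section IsolatedColumn

variable [Finite I] [Finite J] [Finite K] (hcol : IsIsolatedColumn Fi Fj Fk B x z)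
include hcol

section CuboidB

variable (hcuboid : ∀ x ∈ Fi, ∀ z, Δ_[(x, 0, 0)] (Δ_[(0, 0, z)]
  fun v => (cosetCount B (columns Fk) v : ℤ)) = 0)
include hcuboid

lemma mul_le_cosetCount_columns_of_cuboid : pk * pj ≤ cosetCount B (columns ⊤) (x, 0, 0) := by
  have hcolumn : pj ≤ cosetCount B (columns Fk) (x, 0, z) :=
    (h.mid_le_cosetCount_columns hcol).trans
      (cosetCount_le_cosetCount fun _ _ hb => columns_mono bot_le hb)
  have hshift : cosetCount B (columns Fk) (x + s, 0, z) = 0 := by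
    refine Nat.eq_zero_of_not_pos fun hpos => ?_
    obtain ⟨y, z', hb, hz'⟩ := cosetCount_columns_pos.1 hpos
    exact h.shift_ne_zero (by simpa using (hcol.2 _ _ _ hb (by simpa using h.shift_mem) hz').1)
  have hle := card_mul_le_cosetCount_columns (S := B) (x := x) (y := 0) (z := 0) (n := pj)
    (F := Fk) le_top fun t _ => by
      have hsum := congrFun (hcuboid s h.shift_mem (t - z)) (x, 0, z)
      simp only [fwdDiff, Prod.mk_add_mk, add_zero, add_sub_cancel, Pi.zero_apply] at hsum
      rw [zero_add]
      omega
  rw [Nat.card_congr Submodule.topEquiv.toEquiv, h.card_right, h.isSquareFiberIdeal_right.card_eq,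
    mul_assoc] at hle
  exact Nat.le_of_mul_le_mul_left hle h.prime_right.pos

lemma cosetCount_columns_zero_le_of_cuboid :
    cosetCount A (columns ⊤) (0, 0, 0) ≤ pk * pj := by
  have hB := h.mul_le_cosetCount_columns_of_cuboid hcol hcuboid
  have hAB := h.cosetCount_mul_cosetCount_le 0 x
  by_contra! hlt
  have hpos : 0 < pk * pj := Nat.mul_pos h.prime_right.pos h.prime_mid.pos
  nlinarith

lemma notMem_of_cuboid (hz : z' ∉ Fk) : ((0 : I), y, z') ∉ A := by
  intro ha
  have hlt : cosetCount A (columns Fk) (0, 0, 0) < cosetCount A (columns ⊤) (0, 0, 0) := by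
    refine cosetCount_lt_cosetCount_of_mem (columns_mono le_top) ha ?_ ?_
    · exact sub_mem_columns.2 ⟨rfl, trivial⟩
    · exact fun hc => hz (by simpa using (sub_mem_columns.1 hc).2)
  exact absurd (h.cosetCount_columns_zero_le_of_cuboid hcol hcuboid)
    (((h.mul_le_cosetCount_columns_zero hcol).trans_lt hlt).not_ge)

lemma cosetCount_kFiber_eq_zero_of_cuboid (hz : z' ∉ Fk) :
    cosetCount A (kFiber Fk) (0, y, z') = 0 := by
  rw [cosetCount_eq_zero]
  rintro ⟨u, v, w⟩ ha hsub
  obtain ⟨rfl, rfl, hw⟩ := sub_mem_kFiber.1 hsub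
  exact h.notMem_of_cuboid hcol hcuboid (fun hwF => hz ((Fk.sub_mem_iff_right hwF).1 hw)) ha

lemma shift_mem_of_cuboid (hz : z' ∉ Fk) : (s, (0 : J), z') ∈ A := by
  obtain ⟨y, hy, -, -, hy0, -, -⟩ := h.exists_mem_mid
  have hle := h.cosetCount_add_of_corner hy hy0 z'
  rw [h.cosetCount_kFiber_eq_zero_of_cuboid hcol hcuboid (y := y) hz] at hle
  simpa using h.card_le_cosetCount_kFiber.1 (show pk ≤ _ by omega) 0 Fk.zero_mem

lemma mid_eq_zero_of_cuboid (ha : (s, y, z') ∈ A) : y = 0 := by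
  have hB := h.hasFarPair_of_isIsolatedColumn hcol
  by_cases hz : z' ∈ Fk
  · exact h.eq_zero_of_shift_mem hB hz ha
  by_contra hy0
  have hy : y ∈ Fj := by
    simpa using h.sub_mem_of_hasFarPair hB ha (h.shift_mem_of_cuboid hcol hcuboid hz)
  have hle := h.cosetCount_add_of_corner hy hy0 z'
  rw [h.cosetCount_kFiber_eq_zero_of_cuboid hcol hcuboid (y := y) hz] at hle
  have hpos : 0 < cosetCount A (kFiber Fk) (s, y, z') :=
    cosetCount_pos.2 ⟨_, ha, by rw [sub_self]; exact zero_mem _⟩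
  have hcard : cosetCount A (kFiber Fk) (s, 0, z') ≤ pk := by
    rw [← h.isSquareFiberIdeal_right.card_eq, ← card_kFiber (I := I) (J := J)]
    exact cosetCount_le_card_ideal
  omega

lemma cosetCount_columns_shift_le_of_cuboid :
    cosetCount A (columns ⊤) (s, 0, 0) ≤ pk * pk := by
  have hcard := card_kFiber (I := I) (J := J) (⊤ : Ideal K)
  rw [Nat.card_congr Submodule.topEquiv.toEquiv, h.card_right] at hcard
  rw [← hcard]
  refine (cosetCount_le_cosetCount (y := (s, 0, 0)) ?_).trans cosetCount_le_card_ideal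
  rintro ⟨x', y', z'⟩ ha hsub
  obtain ⟨rfl, hz⟩ := sub_mem_columns.1 hsub
  rw [h.mid_eq_zero_of_cuboid hcol hcuboid ha]
  exact sub_mem_kFiber.2 ⟨rfl, rfl, hz⟩

lemma false_of_cuboid_B : False := by
  obtain ⟨S, rfl | rfl, hS⟩ := h.cuboid_pow
  · have hsum := congrFun (hS s h.shift_mem) (0, 0, 0)
    simp only [fwdDiff, Prod.mk_add_mk, zero_add, add_zero, Pi.zero_apply] at hsum
    have hle := h.cosetCount_columns_shift_le_of_cuboid hcol hcuboid
    have hge := (h.mul_le_cosetCount_columns_zero hcol).trans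
      (cosetCount_le_cosetCount (y := (0, 0, 0)) fun _ _ ha => columns_mono le_top ha)
    have hlt := Nat.mul_lt_mul_of_pos_left h.right_lt_mid h.prime_right.pos
    omega
  · have hsum := congrFun (hS s h.shift_mem) (x, 0, 0)
    simp only [fwdDiff, Prod.mk_add_mk, add_zero, Pi.zero_apply] at hsum
    have hge := h.mul_le_cosetCount_columns_of_cuboid hcol hcuboid
    have hpos := Nat.mul_pos h.prime_right.pos h.prime_mid.pos
    obtain ⟨y, z', hb, -⟩ := cosetCount_columns_pos.1
      (show 0 < cosetCount S (columns ⊤) (x + s, 0, 0) by omega)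
    obtain ⟨w, hw⟩ := h.exists_notMem_right
    obtain ⟨y', -, hb'⟩ := hcol.1 0
    have e := h.left_eq_of_exists_shift_mem hcol hw (h.shift_mem_of_cuboid hcol hcuboid hw) hb hb'
      (by simpa using h.shift_mem)
    exact h.shift_ne_zero (by simpa using e)

end CuboidB

section CuboidA

lemma cosetCount_columns_shift_lt (hcuboid : ∀ x ∈ Fi, ∀ z, Δ_[(x, 0, 0)] (Δ_[(0, 0, z)]
    fun v => (cosetCount A (columns Fk) v : ℤ)) = 0) :
    cosetCount A (columns ⊤) (s, 0, 0) < cosetCount A (columns ⊤) (0, 0, 0) := by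
  refine cosetCount_columns_lt (F := Fk) le_top fun t _ => ?_
  have hsum := congrFun (hcuboid s h.shift_mem t) (0, 0, 0)
  simp only [fwdDiff, Prod.mk_add_mk, zero_add, add_zero, Pi.zero_apply] at hsum
  rw [zero_add]
  have h₀ := h.mul_le_cosetCount_columns_zero hcol
  have h₁ := h.cosetCount_columns_shift_le hcol
  have hlt := Nat.mul_lt_mul_of_pos_left h.prime_mid.one_lt h.prime_right.pos
  omega

variable (hexists : ∀ t ∈ Fi, ∃ y z, (x + t, y, z) ∈ B)
include hexists

lemma shift_notMem_of_exists (hz : z' ∉ Fk) : (s, (0 : J), z') ∉ A := by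
  intro ha
  obtain ⟨y, z₁, hb⟩ := hexists s h.shift_mem
  obtain ⟨y', -, hb'⟩ := hcol.1 0
  have e := h.left_eq_of_exists_shift_mem hcol hz ha hb hb' (by simpa using h.shift_mem)
  exact h.shift_ne_zero (by simpa using e)

lemma left_lt_right_of_exists : pi < pk := by
  have : Finite (K ⧸ Fk) := Finite.of_surjective _ Ideal.Quotient.mk_surjective
  choose f hf using fun t : Fi => hexists t t.2
  choose g hg using hf
  have hinj : Function.Injective fun t : Fi => Ideal.Quotient.mk Fk (g t) := fun t t' e => by
    have e' := h.left_eq_of_sub_mem_right hcol (hg t) (hg t')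
      (by simpa using Fi.sub_mem t.2 t'.2) (Ideal.Quotient.eq.1 e)
    exact Subtype.ext (add_left_cancel e')
  have hle := Nat.card_le_card_of_injective _ hinj
  rw [h.isFiberIdeal_left.card_eq, h.isSquareFiberIdeal_right.card_quotient] at hle
  exact hle.lt_of_ne h.left_ne_right

lemma zero_mem_of_exists (hz : z' ∉ Fk) (hy : y ∈ Fj) (hy0 : y ≠ 0) : ((0 : I), y, z') ∈ A := by
  have hle := h.cosetCount_add_of_corner hy hy0 z'
  have hzero : cosetCount A (kFiber Fk) (s, 0, z') = 0 := by
    rw [cosetCount_eq_zero]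
    rintro ⟨x₁, y₁, z₁⟩ ha hsub
    obtain ⟨rfl, rfl, hz₁⟩ := sub_mem_kFiber.1 hsub
    exact h.shift_notMem_of_exists hcol hexists
      (fun hmem => hz ((Fk.sub_mem_iff_right hmem).1 hz₁)) ha
  simpa using h.card_le_cosetCount_kFiber.1 (show pk ≤ _ by omega) 0 Fk.zero_mem

lemma pred_mid_le_cosetCount_columns (z' : K) :
    pj - 1 ≤ cosetCount A (columns ⊥) (0, 0, z') := by
  by_cases hz : z' ∈ Fk
  · rw [h.cosetCount_columns_zero hcol hz]
    exact Nat.sub_le _ _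
  have hcard : ((Fj : Set J) \ {0}).ncard = pj - 1 := by
    rw [Set.ncard_sdiff_singleton_of_mem Fj.zero_mem]
    exact congrArg (· - 1) h.isSquareFiberIdeal_mid.card_eq
  rw [← hcard, cosetCount_eq_ncard]
  refine Set.ncard_le_ncard_of_injOn (fun y => (0, y, z')) (fun y hy => ?_) (by simp)
  exact ⟨h.zero_mem_of_exists hcol hexists hz hy.1 hy.2, sub_mem_columns.2 ⟨rfl, by simp⟩⟩

lemma false_of_exists : False := by
  have hle := card_mul_le_cosetCount_columns (S := A) (x := 0) (y := 0) (z := 0) (n := pj - 1)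
    (F := ⊥) (F' := ⊤) bot_le fun t _ => h.pred_mid_le_cosetCount_columns hcol hexists (0 + t)
  have hA : cosetCount A (columns ⊤) (0, 0, 0) ≤ pi * pj * pk := by
    rw [← h.card_eq]
    exact cosetCount_le_card
  rw [Nat.card_congr Submodule.topEquiv.toEquiv, h.card_right, Nat.card_unique, one_mul] at hle
  have hlt := h.left_lt_right_of_exists hcol hexists
  have hlt' := h.right_lt_mid
  obtain ⟨m, rfl⟩ := Nat.exists_eq_add_of_lt hlt'
  have hbound : (pi + 1) * (pk + m + 1) ≤ pk * (pk + m + 1) := Nat.mul_le_mul_right _ hlt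
  have hmul : pk * (pk * (pk + m)) ≤ pk * (pi * (pk + m + 1)) := by
    calc pk * (pk * (pk + m)) = pk * pk * (pk + m + 1 - 1) := by
          rw [Nat.add_sub_cancel, mul_assoc]
      _ ≤ pi * (pk + m + 1) * pk := hle.trans hA
      _ = pk * (pi * (pk + m + 1)) := mul_comm _ _
  have hdiv := Nat.le_of_mul_le_mul_left hmul h.prime_right.pos
  nlinarith

end CuboidA

end IsolatedColumn

theorem false [Finite I] [Finite J] [Finite K] : False := by
  obtain ⟨x, z, hcol⟩ := h.exists_isIsolatedColumn
  obtain ⟨S, rfl | rfl, hcuboid⟩ := h.cuboid_pow_mul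
  · obtain ⟨T, rfl | rfl, hpow⟩ := h.cuboid_pow
    · have hsum := congrFun (hpow s h.shift_mem) (0, 0, 0)
      simp only [fwdDiff, Prod.mk_add_mk, zero_add, add_zero, Pi.zero_apply] at hsum
      have hlt := h.cosetCount_columns_shift_lt hcol hcuboid
      omega
    · refine h.false_of_exists hcol fun t ht => ?_
      have hsum := congrFun (hpow t ht) (x, 0, 0)
      simp only [fwdDiff, Prod.mk_add_mk, add_zero, Pi.zero_apply] at hsum
      obtain ⟨y, -, hb⟩ := hcol.1 0
      have hpos := (cosetCount_columns_pos (F := ⊤) (y := 0) (z := 0)).2 ⟨y, z, hb, trivial⟩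
      obtain ⟨y', z', hb', -⟩ := cosetCount_columns_pos.1
        (show 0 < cosetCount T (columns ⊤) (x + t, 0, 0) by omega)
      exact ⟨y', z', hb'⟩
  · exact h.false_of_cuboid_B hcol hcuboid

end CornerTiling

end Corner

section CornerOfTiling

lemma iff_right_eq_zero_of_saturated {J K : Type*} [Zero J] [Zero K] {Fj : Set J} {Fk : Set K}
    {P : J → K → Prop} (h0j : 0 ∈ Fj) (h0k : 0 ∈ Fk) (h0 : P 0 0) (hne : ∃ y ∈ Fj, y ≠ 0)
    (hsat : ∀ y ∈ Fj, ∀ z ∈ Fk, P y z → ∀ y' ∈ Fj, P y' z)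
    (haxes : ∀ y ∈ Fj, ∀ z ∈ Fk, P y z → y = 0 ∨ z = 0) {y : J} {z : K} (hy : y ∈ Fj)
    (hz : z ∈ Fk) : P y z ↔ z = 0 := by
  constructor
  · intro hP
    obtain ⟨y', hy', hne⟩ := hne
    exact (haxes y' hy' z hz (hsat y hy z hz hP y' hy')).resolve_left hne
  · rintro rfl
    exact hsat 0 h0j 0 h0k h0 y hy

variable {pi pj pk n M : ℕ} (hpi : pi.Prime) (hpj : pj.Prime) (hpk : pk.Prime) (hij : pi ≠ pj)
  (hik : pi ≠ pk) (hjk : pj ≠ pk) (hM : M = pi ^ (n + 1) * pj ^ 2 * pk ^ 2)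
  {A B : Finset (ZMod M)} {a ai c : ZMod M}
  {e : ZMod M ≃+* ZMod (pi ^ (n + 1)) × ZMod (pj ^ 2) × ZMod (pk ^ 2)}
  {y y' : ZMod (pj ^ 2)} {z z' : ZMod (pk ^ 2)}
include hpi hpj hpk hij hik hjk hM

lemma mem_coordSet_of_fibered_mid
    (hf : Fibered M pj ((A : Set (ZMod M)) ∩ gridSet M c (M / (pj * pk))))
    (hy : y ∈ powIdeal pj 2 1) (hz : z ∈ powIdeal pk 2 1) (hmem : (0, y, z) ∈ coordSet e c A)
    (hy' : y' ∈ powIdeal pj 2 1) : (0, y', z) ∈ coordSet e c A := by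
  have hdiv : M / pj = pi ^ (n + 1) * pj ^ 1 * pk ^ 2 :=
    Nat.div_eq_of_eq_mul_left hpj.pos (by rw [hM]; ring)
  have hdiv' : M / (pj * pk) = pi ^ (n + 1) * pj ^ 1 * pk ^ 1 :=
    Nat.div_eq_of_eq_mul_left (Nat.mul_pos hpj.pos hpk.pos) (by rw [hM]; ring)
  refine mem_coordSet_of_fibered hf hmem ?_ ?_
  · rw [hdiv', span_natCast_eq_prod hpi hpj hpk hij hik hjk, Ideal.mem_prod,
      Ideal.mem_prod]
    exact ⟨zero_mem _, hy, hz⟩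
  · rw [hdiv, span_natCast_eq_prod hpi hpj hpk hij hik hjk, Prod.mk_sub_mk, Prod.mk_sub_mk,
      sub_self, sub_self, Ideal.mem_prod, Ideal.mem_prod]
    exact ⟨zero_mem _, sub_mem hy' hy, zero_mem _⟩

lemma mem_coordSet_of_fibered_right
    (hf : Fibered M pk ((A : Set (ZMod M)) ∩ gridSet M c (M / (pj * pk))))
    (hy : y ∈ powIdeal pj 2 1) (hz : z ∈ powIdeal pk 2 1) (hmem : (0, y, z) ∈ coordSet e c A)
    (hz' : z' ∈ powIdeal pk 2 1) : (0, y, z') ∈ coordSet e c A := by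
  have hdiv : M / pk = pi ^ (n + 1) * pj ^ 2 * pk ^ 1 :=
    Nat.div_eq_of_eq_mul_left hpk.pos (by rw [hM]; ring)
  have hdiv' : M / (pj * pk) = pi ^ (n + 1) * pj ^ 1 * pk ^ 1 :=
    Nat.div_eq_of_eq_mul_left (Nat.mul_pos hpj.pos hpk.pos) (by rw [hM]; ring)
  refine mem_coordSet_of_fibered hf hmem ?_ ?_
  · rw [hdiv', span_natCast_eq_prod hpi hpj hpk hij hik hjk, Ideal.mem_prod,
      Ideal.mem_prod]
    exact ⟨zero_mem _, hy, hz⟩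
  · rw [hdiv, span_natCast_eq_prod hpi hpj hpk hij hik hjk, Prod.mk_sub_mk, Prod.mk_sub_mk,
      sub_self, sub_self, Ideal.mem_prod, Ideal.mem_prod]
    exact ⟨zero_mem _, zero_mem _, sub_mem hz' hz⟩

variable [NeZero M]

lemma mid_eq_zero_or_right_eq_zero
    (hno : ∀ a' ∈ A, Nat.gcd (a' - c).val M ≠ M / (pj * pk))
    (hy : y ∈ powIdeal pj 2 1) (hz : z ∈ powIdeal pk 2 1) (hmem : (0, y, z) ∈ coordSet e c A) :
    y = 0 ∨ z = 0 := by
  by_contra! hne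
  have hdiv : M / (pj * pk) = pi ^ (n + 1) * pj ^ 1 * pk ^ 1 :=
    Nat.div_eq_of_eq_mul_left (Nat.mul_pos hpj.pos hpk.pos) (by rw [hM]; ring)
  refine hno _ (mem_coordSet.1 hmem) ?_
  rw [add_sub_cancel_right, hdiv]
  refine gcd_val_eq_of_dvd (by rw [hM]; ring) hpj hpk ?_ ?_ ?_
  · rw [← Ideal.mem_span_singleton, symm_mem_span_natCast,
      span_natCast_eq_prod hpi hpj hpk hij hik hjk, Ideal.mem_prod,
      Ideal.mem_prod]
    exact ⟨zero_mem _, hy, hz⟩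
  · rw [mul_assoc, mul_comm _ pj, ← mul_assoc, mul_assoc _ _ pj, ← pow_succ,
      ← Ideal.mem_span_singleton, symm_mem_span_natCast,
      span_natCast_eq_prod hpi hpj hpk hij hik hjk, powIdeal_self pj]
    exact fun h => hne.1 h.2.1
  · rw [mul_assoc, ← pow_succ, ← Ideal.mem_span_singleton, symm_mem_span_natCast,
      span_natCast_eq_prod hpi hpj hpk hij hik hjk, powIdeal_self pk]
    exact fun h => hne.2 h.2.2

lemma mem_coordSet_iff_right_eq_zero (hc : c ∈ A)
    (hf : Fibered M pj ((A : Set (ZMod M)) ∩ gridSet M c (M / (pj * pk))))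
    (hno : ∀ a' ∈ A, Nat.gcd (a' - c).val M ≠ M / (pj * pk))
    (hy : y ∈ powIdeal pj 2 1) (hz : z ∈ powIdeal pk 2 1) :
    (0, y, z) ∈ coordSet e c A ↔ z = 0 :=
  iff_right_eq_zero_of_saturated (P := fun y z => (0, y, z) ∈ coordSet e c A)
    (zero_mem _) (zero_mem _) (origin_mem_coordSet.2 hc)
    ((isFiberIdeal_powIdeal hpj 1).exists_mem_ne_zero hpj.ne_one)
    (fun _ hy _ hz hmem _ =>
      mem_coordSet_of_fibered_mid hpi hpj hpk hij hik hjk hM hf hy hz hmem)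
    (fun _ hy _ hz => mid_eq_zero_or_right_eq_zero hpi hpj hpk hij hik hjk hM hno hy hz) hy hz

lemma mem_coordSet_iff_mid_eq_zero (hc : c ∈ A)
    (hf : Fibered M pk ((A : Set (ZMod M)) ∩ gridSet M c (M / (pj * pk))))
    (hno : ∀ a' ∈ A, Nat.gcd (a' - c).val M ≠ M / (pj * pk))
    (hy : y ∈ powIdeal pj 2 1) (hz : z ∈ powIdeal pk 2 1) :
    (0, y, z) ∈ coordSet e c A ↔ y = 0 :=
  iff_right_eq_zero_of_saturated (P := fun z y => (0, y, z) ∈ coordSet e c A)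
    (zero_mem _) (zero_mem _) (origin_mem_coordSet.2 hc)
    ((isFiberIdeal_powIdeal hpk 1).exists_mem_ne_zero hpk.ne_one)
    (fun _ hz _ hy hmem _ =>
      mem_coordSet_of_fibered_right hpi hpj hpk hij hik hjk hM hf hy hz hmem)
    (fun _ hz _ hy hmem =>
      (mid_eq_zero_or_right_eq_zero hpi hpj hpk hij hik hjk hM hno hy hz hmem).symm) hz hy

lemma exists_shift_of_gcd_eq (e : ZMod M ≃+* ZMod (pi ^ (n + 1)) × ZMod (pj ^ 2) × ZMod (pk ^ 2))
    (hgcd : Nat.gcd c.val M = M / pi) :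
    ∃ s ∈ powIdeal pi (n + 1) n, s ≠ 0 ∧ e c = (s, 0, 0) := by
  have hdiv : M / pi = pi ^ n * pj ^ 2 * pk ^ 2 :=
    Nat.div_eq_of_eq_mul_left hpi.pos (by rw [hM]; ring)
  have hmem : e c ∈
      Ideal.span {((M / pi : ℕ) : ZMod (pi ^ (n + 1)) × ZMod (pj ^ 2) × ZMod (pk ^ 2))} := by
    rw [← symm_mem_span_natCast (e := e), RingEquiv.symm_apply_apply, Ideal.mem_span_singleton,
      ← hgcd, natCast_dvd_iff_dvd_val (Nat.gcd_dvd_right _ _)]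
    exact Nat.gcd_dvd_left _ _
  rw [hdiv, span_natCast_eq_prod hpi hpj hpk hij hik hjk, powIdeal_self, powIdeal_self] at hmem
  obtain ⟨hs, hj, hk⟩ := hmem
  have hec : e c = ((e c).1, 0, 0) := Prod.ext rfl (Prod.ext hj hk)
  refine ⟨(e c).1, hs, fun h0 => ?_, hec⟩
  rw [h0] at hec
  rw [(map_eq_zero_iff e e.injective).1 hec, ZMod.val_zero, Nat.gcd_zero_left] at hgcd
  exact (Nat.div_lt_self (NeZero.pos M) hpi.one_lt).ne' hgcd

end CornerOfTiling

section Assembly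

open scoped fwdDiff

variable {pi pj pk n M : ℕ} [NeZero M] {A B : Finset (ZMod M)} {c : ZMod M}
  {e : ZMod M ≃+* ZMod (pi ^ (n + 1)) × ZMod (pj ^ 2) × ZMod (pk ^ 2)}
  {x : ZMod (pi ^ (n + 1))} {y : ZMod (pj ^ 2)} {z : ZMod (pk ^ 2)}

lemma cycDvd_pow_mul_pow_or (hpi : pi.Prime) (hM : M = pi ^ (n + 1) * pj ^ 2 * pk ^ 2)
    (htile : IsTiling M (A : Set (ZMod M)) (B : Set (ZMod M))) {β γ : ℕ} (hβ : β ≤ 2)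
    (hγ : γ ≤ 2) :
    cycDvd M (pi ^ (n + 1) * pj ^ β * pk ^ γ) A ∨
      cycDvd M (pi ^ (n + 1) * pj ^ β * pk ^ γ) B := by
  refine cycDvd_or_cycDvd htile ?_ fun h1 => ?_
  · rw [hM]
    exact mul_dvd_mul (mul_dvd_mul_left _ (pow_dvd_pow _ hβ)) (pow_dvd_pow _ hγ)
  · exact (Nat.one_lt_pow n.succ_ne_zero hpi.one_lt).ne'
      (Nat.eq_one_of_mul_eq_one_right (Nat.eq_one_of_mul_eq_one_right h1))

variable (hpi : pi.Prime) (hpj : pj.Prime) (hpk : pk.Prime) (hij : pi ≠ pj) (hik : pi ≠ pk)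
  (hjk : pj ≠ pk)
include hpi hpj hpk hij hik hjk

lemma fwdDiff_cosetCount_kFiber_eq_zero (hA : cycDvd M (pi ^ (n + 1) * pj ^ 2 * pk ^ 1) A)
    (hx : x ∈ powIdeal pi (n + 1) n) (hy : y ∈ powIdeal pj 2 1) :
    Δ_[(x, 0, 0)] (Δ_[(0, y, 0)] (Δ_[(0, 0, z)]
      fun v => (cosetCount (coordSet e c A) (kFiber (powIdeal pk 2 1)) v : ℤ))) = 0 := by
  have hsum := foldr_fwdDiff_cosetCount_prod_eq_zero hpi hpj hpk hij hik hjk hA e c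
    (l := [(x, 0, 0), (0, y, 0), (0, 0, z)])
    (fun _ => ⟨(x, 0, 0), by simp, hx, zero_mem (powIdeal pj 2 2), zero_mem (powIdeal pk 2 1)⟩)
    (fun _ => ⟨(0, y, 0), by simp, zero_mem (powIdeal pi (n + 1) (n + 1)), hy,
      zero_mem (powIdeal pk 2 1)⟩)
    (fun _ => ⟨(0, 0, z), by simp, zero_mem (powIdeal pi (n + 1) (n + 1)),
      zero_mem (powIdeal pj 2 2), by rw [powIdeal_zero]; trivial⟩)
  rwa [powIdeal_self, powIdeal_self] at hsum

lemma fwdDiff_cosetCount_jFiber_eq_zero (hB : cycDvd M (pi ^ (n + 1) * pj ^ 1 * pk ^ 2) B)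
    (hx : x ∈ powIdeal pi (n + 1) n) (hz : z ∈ powIdeal pk 2 1) :
    Δ_[(x, 0, 0)] (Δ_[(0, y, 0)] (Δ_[(0, 0, z)]
      fun v => (cosetCount (coordSet e c B) (jFiber (powIdeal pj 2 1)) v : ℤ))) = 0 := by
  have hsum := foldr_fwdDiff_cosetCount_prod_eq_zero hpi hpj hpk hij hik hjk hB e c
    (l := [(x, 0, 0), (0, y, 0), (0, 0, z)])
    (fun _ => ⟨(x, 0, 0), by simp, hx, zero_mem (powIdeal pj 2 1), zero_mem (powIdeal pk 2 2)⟩)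
    (fun _ => ⟨(0, y, 0), by simp, zero_mem (powIdeal pi (n + 1) (n + 1)),
      by rw [powIdeal_zero]; trivial, zero_mem (powIdeal pk 2 2)⟩)
    (fun _ => ⟨(0, 0, z), by simp, zero_mem (powIdeal pi (n + 1) (n + 1)),
      zero_mem (powIdeal pj 2 1), hz⟩)
  rwa [powIdeal_self, powIdeal_self] at hsum

lemma fwdDiff_cosetCount_columns_eq_zero {γ : ℕ}
    (hA : cycDvd M (pi ^ (n + 1) * pj ^ 0 * pk ^ (γ + 1)) A)
    (hx : x ∈ powIdeal pi (n + 1) n) (hz : z ∈ powIdeal pk 2 γ) :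
    Δ_[(x, 0, 0)] (Δ_[(0, 0, z)]
      fun v => (cosetCount (coordSet e c A) (columns (powIdeal pk 2 (γ + 1))) v : ℤ)) = 0 := by
  have hsum := foldr_fwdDiff_cosetCount_prod_eq_zero hpi hpj hpk hij hik hjk hA e c
    (l := [(x, 0, 0), (0, 0, z)])
    (fun _ => ⟨(x, 0, 0), by simp, hx, zero_mem (powIdeal pj 2 0),
      zero_mem (powIdeal pk 2 (γ + 1))⟩)
    (fun h => (h rfl).elim)
    (fun _ => ⟨(0, 0, z), by simp, zero_mem (powIdeal pi (n + 1) (n + 1)),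
      zero_mem (powIdeal pj 2 0), hz⟩)
  rwa [powIdeal_self, powIdeal_zero] at hsum

lemma fwdDiff_cosetCount_columns_top_eq_zero
    (hA : cycDvd M (pi ^ (n + 1) * pj ^ 0 * pk ^ 0) A) (hx : x ∈ powIdeal pi (n + 1) n) :
    Δ_[(x, 0, 0)] (fun v => (cosetCount (coordSet e c A) (columns ⊤) v : ℤ)) = 0 := by
  have hsum := foldr_fwdDiff_cosetCount_prod_eq_zero hpi hpj hpk hij hik hjk hA e c
    (l := [(x, 0, 0)])
    (fun _ => ⟨(x, 0, 0), by simp, hx, zero_mem (powIdeal pj 2 0), zero_mem (powIdeal pk 2 0)⟩)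
    (fun h => (h rfl).elim) (fun h => (h rfl).elim)
  rwa [powIdeal_self, powIdeal_zero, powIdeal_zero] at hsum

variable (hM : M = pi ^ (n + 1) * pj ^ 2 * pk ^ 2)
  (htile : IsTiling M (A : Set (ZMod M)) (B : Set (ZMod M)))
include hM htile

lemma exists_fwdDiff_cosetCount_columns_eq_zero
    (e : ZMod M ≃+* ZMod (pi ^ (n + 1)) × ZMod (pj ^ 2) × ZMod (pk ^ 2)) (a b : ZMod M) {γ : ℕ}
    (hγ : γ < 2) :
    ∃ S, (S = coordSet e a A ∨ S = coordSet e b B) ∧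
      ∀ x ∈ powIdeal pi (n + 1) n, ∀ z ∈ powIdeal pk 2 γ, Δ_[(x, 0, 0)] (Δ_[(0, 0, z)]
        fun v => (cosetCount S (columns (powIdeal pk 2 (γ + 1))) v : ℤ)) = 0 := by
  rcases cycDvd_pow_mul_pow_or hpi hM htile zero_le_two hγ with h | h
  exacts [⟨_, .inl rfl, fun _ hx _ hz =>
      fwdDiff_cosetCount_columns_eq_zero hpi hpj hpk hij hik hjk h hx hz⟩,
    ⟨_, .inr rfl, fun _ hx _ hz =>
      fwdDiff_cosetCount_columns_eq_zero hpi hpj hpk hij hik hjk h hx hz⟩]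

lemma exists_fwdDiff_cosetCount_columns_top_eq_zero
    (e : ZMod M ≃+* ZMod (pi ^ (n + 1)) × ZMod (pj ^ 2) × ZMod (pk ^ 2)) (a b : ZMod M) :
    ∃ S, (S = coordSet e a A ∨ S = coordSet e b B) ∧ ∀ x ∈ powIdeal pi (n + 1) n,
      Δ_[(x, 0, 0)] (fun v => (cosetCount S (columns ⊤) v : ℤ)) = 0 := by
  rcases cycDvd_pow_mul_pow_or hpi hM htile zero_le_two zero_le_two with h | h
  exacts [⟨_, .inl rfl, fun _ hx =>
      fwdDiff_cosetCount_columns_top_eq_zero hpi hpj hpk hij hik hjk h hx⟩,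
    ⟨_, .inr rfl, fun _ hx =>
      fwdDiff_cosetCount_columns_top_eq_zero hpi hpj hpk hij hik hjk h hx⟩]

lemma cornerTiling_of_isTiling (hkj : pk < pj) (hcardA : #A = pi * pj * pk)
    {a ai : ZMod M} (ha : a ∈ A) (hai : ai ∈ A)
    (hfa : Fibered M pj ((A : Set (ZMod M)) ∩ gridSet M a (M / (pj * pk))))
    (hfai : Fibered M pk ((A : Set (ZMod M)) ∩ gridSet M ai (M / (pj * pk))))
    (hno : ∀ a' ∈ A, Nat.gcd (a' - a).val M ≠ M / (pj * pk) ∧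
      Nat.gcd (a' - ai).val M ≠ M / (pj * pk))
    (hAk : cycDvd M (pi ^ (n + 1) * pj ^ 2 * pk ^ 1) A)
    (hBj : cycDvd M (pi ^ (n + 1) * pj ^ 1 * pk ^ 2) B) {s : ZMod (pi ^ (n + 1))}
    (hs : s ∈ powIdeal pi (n + 1) n) (hs0 : s ≠ 0) (hes : e (ai - a) = (s, 0, 0)) :
    CornerTiling (powIdeal pi (n + 1) n) (powIdeal pj 2 1) (powIdeal pk 2 1) pi pj pk
      (coordSet e a A) (coordSet e 0 B) s where
  isFiberIdeal_left := isFiberIdeal_powIdeal hpi n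
  isSquareFiberIdeal_mid := isSquareFiberIdeal_powIdeal hpj
  isSquareFiberIdeal_right := isSquareFiberIdeal_powIdeal hpk
  prime_left := hpi
  prime_mid := hpj
  prime_right := hpk
  left_ne_right := hik
  right_lt_mid := hkj
  card_eq := (card_coordSet e a A).trans hcardA
  exists_add_eq := exists_add_eq_coordSet htile e a 0
  eq_of_associated := eq_of_associated_sub_coordSet htile
  shift_mem := hs
  shift_ne_zero := hs0
  zero_mem_iff := mem_coordSet_iff_right_eq_zero hpi hpj hpk hij hik hjk hM ha hfa
    fun a' ha' => (hno a' ha').1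
  shift_mem_iff {y z} hy hz := by
    rw [show (s, y, z) = (0, y, z) + e (ai - a) by simp [hes], add_mem_coordSet_iff]
    exact mem_coordSet_iff_mid_eq_zero hpi hpj hpk hij hik hjk hM hai hfai
      (fun a' ha' => (hno a' ha').2) hy hz
  cuboid_A _ hx _ hy _ := fwdDiff_cosetCount_kFiber_eq_zero hpi hpj hpk hij hik hjk hAk hx hy
  cuboid_B _ hx _ _ hz := fwdDiff_cosetCount_jFiber_eq_zero hpi hpj hpk hij hik hjk hBj hx hz
  cuboid_pow_mul_sq := by
    obtain ⟨S, hS, hsum⟩ := exists_fwdDiff_cosetCount_columns_eq_zero hpi hpj hpk hij hik hjk hM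
      htile e a 0 one_lt_two
    rw [powIdeal_self] at hsum
    exact ⟨S, hS, hsum⟩
  cuboid_pow_mul := by
    obtain ⟨S, hS, hsum⟩ := exists_fwdDiff_cosetCount_columns_eq_zero hpi hpj hpk hij hik hjk hM
      htile e a 0 two_pos
    exact ⟨S, hS, fun x hx z => hsum x hx z (by rw [powIdeal_zero]; trivial)⟩
  cuboid_pow := exists_fwdDiff_cosetCount_columns_top_eq_zero hpi hpj hpk hij hik hjk hM htile e a 0

end Assembly

end CyclotomicTiling

open CyclotomicTiling in
theorem statement18_general
    (pi pj pk : ℕ) (hpi : pi.Prime) (hpj : pj.Prime) (hpk : pk.Prime)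
    (hij : pi ≠ pj) (hik : pi ≠ pk) (hjk : pj ≠ pk)
    (ni : ℕ) (hni : 1 ≤ ni) (hkj : pk < pj)
    (M : ℕ) (hM : M = pi ^ ni * pj ^ 2 * pk ^ 2)
    (A B : Finset (ZMod M))
    (htile : IsTiling M (A : Set (ZMod M)) (B : Set (ZMod M)))
    (hcardA : A.card = pi * pj * pk)
    (a ai : ZMod M) (ha : a ∈ A) (hai : ai ∈ A)
    (hgcd : Nat.gcd (a - ai).val M = M / pi)
    (hfja : Fibered M pj ((A : Set (ZMod M)) ∩ gridSet M a (M / (pj * pk))))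
    (hfkai : Fibered M pk ((A : Set (ZMod M)) ∩ gridSet M ai (M / (pj * pk))))
    (hBj : cycDvd M (M / pj) B)
    (hno : ∀ a' ∈ A, Nat.gcd (a' - a).val M ≠ M / (pj * pk) ∧
      Nat.gcd (a' - ai).val M ≠ M / (pj * pk)) :
    cycDvd M (M / pk) B := by
  obtain ⟨n, rfl⟩ := Nat.exists_eq_add_of_le' hni
  have : NeZero pi := ⟨hpi.ne_zero⟩
  have : NeZero pj := ⟨hpj.ne_zero⟩
  have : NeZero pk := ⟨hpk.ne_zero⟩
  have : NeZero M := ⟨by rw [hM]; exact NeZero.ne _⟩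
  have hdivj : M / pj = pi ^ (n + 1) * pj ^ 1 * pk ^ 2 :=
    Nat.div_eq_of_eq_mul_left hpj.pos (by rw [hM]; ring)
  have hdivk : M / pk = pi ^ (n + 1) * pj ^ 2 * pk ^ 1 :=
    Nat.div_eq_of_eq_mul_left hpk.pos (by rw [hM]; ring)
  rw [hdivj] at hBj
  rw [hdivk]
  refine (cycDvd_pow_mul_pow_or hpi hM htile le_rfl one_le_two).resolve_left fun hAk => ?_
  obtain ⟨e⟩ : Nonempty (ZMod M ≃+* ZMod (pi ^ (n + 1)) × ZMod (pj ^ 2) × ZMod (pk ^ 2)) :=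
    hM ▸ nonempty_zmod_equiv_prod hpi hpj hpk hij hik hjk _ _ _
  obtain ⟨s, hs, hs0, hes⟩ := exists_shift_of_gcd_eq hpi hpj hpk hij hik hjk hM e hgcd
  have hes' : e (ai - a) = (-s, 0, 0) := by rw [← neg_sub, map_neg, hes]; simp
  exact (cornerTiling_of_isTiling hpi hpj hpk hij hik hjk hM htile hkj hcardA ha hai hfja hfkai hno
    hAk hBj (neg_mem hs) (neg_ne_zero.2 hs0) hes').false

/-- **Case (C3): passing the cyclotomic divisor to the other direction.** -/
theorem statement18
    (pi pj pk : ℕ) (hpi : pi.Prime) (hpj : pj.Prime) (hpk : pk.Prime)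
    (hij : pi ≠ pj) (hik : pi ≠ pk) (hjk : pj ≠ pk)
    (ni : ℕ) (hni : 2 ≤ ni) (hkj : pk < pj)
    (M : ℕ) (hM : M = pi ^ ni * pj ^ 2 * pk ^ 2)
    (A B : Finset (ZMod M))
    (htile : IsTiling M (A : Set (ZMod M)) (B : Set (ZMod M)))
    (hcardA : A.card = pi * pj * pk)
    (hPhiM : cycDvd M M A)
    (x0 : ZMod M) (D : ℕ) (hD : D = pi ^ (ni - 1) * pj * pk)
    (a ai : ZMod M) (ha : a ∈ A) (hai : ai ∈ A)
    (haL : a ∈ gridSet M x0 D) (haiL : ai ∈ gridSet M x0 D)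
    (hgcd : Nat.gcd (a - ai).val M = M / pi)
    (hfja : Fibered M pj ((A : Set (ZMod M)) ∩ gridSet M a (M / (pj * pk))))
    (hnfka : ¬ Fibered M pk ((A : Set (ZMod M)) ∩ gridSet M a (M / (pj * pk))))
    (hfkai : Fibered M pk ((A : Set (ZMod M)) ∩ gridSet M ai (M / (pj * pk))))
    (hnfjai : ¬ Fibered M pj ((A : Set (ZMod M)) ∩ gridSet M ai (M / (pj * pk))))
    (hBj : cycDvd M (M / pj) B)
    (hno : ∀ a' ∈ A, Nat.gcd (a' - a).val M ≠ M / (pj * pk) ∧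
      Nat.gcd (a' - ai).val M ≠ M / (pj * pk)) :
    cycDvd M (M / pk) B :=
  statement18_general pi pj pk hpi hpj hpk hij hik hjk ni (one_le_two.trans hni) hkj M hM A B htile
    hcardA a ai ha hai hgcd hfja hfkai hBj hno
end
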